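/- arXiv:1311.3887 — 2 statements merged into one kernel-verified Lean document; each statement's English description precedes it below -/
import Mathlib

section
/- Entropic uncertainty relation for H̃^↑: Let ρ_ABC be a density matrix on ℂ^(A×B×C), let {M_x}_{x∈X} and {N_y}_{y∈Y} be POVMs on the A-system, and let c := max_{x,y} ‖ M_x^{1/2} N_y^{1/2} ‖ where ‖·‖ is the operator norm. Define the classical-quantum post-measurement states ρ_XB on ℂ^(X×B) by ρ_XB (x,b)(x',b') = (if x = x' then (tr_{AC}((M_x ⊗ 1_{BC}) ρ_ABC)) b b' else 0), and ρ_YC on ℂ^(Y×C) analogously with N_y and tr_{AB}. Then for all α, β ∈ (1/2,∞) with 1/α + 1/β = 2 and α ≠ 1: H̃_α^↑(X|B)_ρ + H̃_β^↑(Y|C)_ρ ≥ log(1/c), where H̃_γ^↑(X|B)_ρ is the supremum over density matrices σ_B of −D̃_γ(ρ_XB ‖ 1_X ⊗ σ_B) (for γ > 1 over σ_B whose kernel is contained in that of ρ_B = tr_X ρ_XB). -/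
open scoped Kronecker ComplexOrder
open Matrix

/-- Real power of a matrix via the functional calculus on the eigenvalues,
with the convention `0 ^ t = 0` (powers taken on the support). -/
noncomputable def matRpow {n : Type*} [Fintype n] [DecidableEq n]
    (A : Matrix n n ℂ) (t : ℝ) : Matrix n n ℂ :=
  if hA : A.IsHermitian then
    (hA.eigenvectorUnitary : Matrix n n ℂ) *
      Matrix.diagonal (fun i =>
        ((if hA.eigenvalues i = 0 then (0 : ℝ) else (hA.eigenvalues i) ^ t : ℝ) : ℂ)) *
      star (hA.eigenvectorUnitary : Matrix n n ℂ)
  else 0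

/-- Matrix logarithm on the support. -/
noncomputable def matLog {n : Type*} [Fintype n] [DecidableEq n]
    (A : Matrix n n ℂ) : Matrix n n ℂ :=
  if hA : A.IsHermitian then
    (hA.eigenvectorUnitary : Matrix n n ℂ) *
      Matrix.diagonal (fun i => ((Real.log (hA.eigenvalues i) : ℝ) : ℂ)) *
      star (hA.eigenvectorUnitary : Matrix n n ℂ)
  else 0

/-- Partial trace over the first tensor factor. -/
noncomputable def trFst {a b : Type*} [Fintype a] (M : Matrix (a × b) (a × b) ℂ) :
    Matrix b b ℂ :=
  Matrix.of fun j j' => ∑ i, M (i, j) (i, j')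

/-- Partial trace over the second tensor factor. -/
noncomputable def trSnd {a b : Type*} [Fintype b] (M : Matrix (a × b) (a × b) ℂ) :
    Matrix a a ℂ :=
  Matrix.of fun i i' => ∑ j, M (i, j) (i', j)

/-- Partial trace over the third factor of a tripartite system. -/
noncomputable def trThird {a b c : Type*} [Fintype c]
    (M : Matrix (a × b × c) (a × b × c) ℂ) : Matrix (a × b) (a × b) ℂ :=
  Matrix.of fun p p' => ∑ k, M (p.1, p.2, k) (p'.1, p'.2, k)

/-- Partial trace over the second factor of a tripartite system. -/
noncomputable def trSecond {a b c : Type*} [Fintype b]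
    (M : Matrix (a × b × c) (a × b × c) ℂ) : Matrix (a × c) (a × c) ℂ :=
  Matrix.of fun p p' => ∑ j, M (p.1, j, p.2) (p'.1, j, p'.2)

/-- Partial trace over the first two factors of a tripartite system. -/
noncomputable def trFstSnd {a b c : Type*} [Fintype a] [Fintype b]
    (M : Matrix (a × b × c) (a × b × c) ℂ) : Matrix c c ℂ :=
  Matrix.of fun k k' => ∑ i, ∑ j, M (i, j, k) (i, j, k')

/-- Partial trace over the first and third factors of a tripartite system. -/
noncomputable def trFstThird {a b c : Type*} [Fintype a] [Fintype c]
    (M : Matrix (a × b × c) (a × b × c) ℂ) : Matrix b b ℂ :=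
  Matrix.of fun j j' => ∑ i, ∑ k, M (i, j, k) (i, j', k)

/-- Quantum Rényi relative entropy `D_α(ρ‖σ)`. -/
noncomputable def renyiDiv {n : Type*} [Fintype n] [DecidableEq n]
    (α : ℝ) (ρ σ : Matrix n n ℂ) : ℝ :=
  (α - 1)⁻¹ * Real.log ((matRpow ρ α * matRpow σ (1 - α)).trace.re)

/-- Sandwiched quantum Rényi divergence `D̃_α(ρ‖σ)`. -/
noncomputable def sandwichedRenyiDiv {n : Type*} [Fintype n] [DecidableEq n]
    (α : ℝ) (ρ σ : Matrix n n ℂ) : ℝ :=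
  (α - 1)⁻¹ * Real.log
    ((matRpow (matRpow σ ((1 - α) / (2 * α)) * ρ * matRpow σ ((1 - α) / (2 * α))) α).trace.re)

/-- Quantum relative entropy `D(ρ‖σ)`. -/
noncomputable def relEntropy {n : Type*} [Fintype n] [DecidableEq n]
    (ρ σ : Matrix n n ℂ) : ℝ :=
  (ρ * (matLog ρ - matLog σ)).trace.re

/-- `H̃_γ^↑(A|B)_ρ`: supremum over density matrices `σ_B` of `−D̃_γ(ρ_AB ‖ 1_A ⊗ σ_B)`
(for `γ > 1` over those `σ_B` whose kernel is contained in that of `ρ_B`). -/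
noncomputable def condSandwichedRenyiUp {a b : Type*} [Fintype a] [DecidableEq a] [Fintype b] [DecidableEq b]
    (gamma : ℝ) (ρ : Matrix (a × b) (a × b) ℂ) : ℝ :=
  sSup {x : ℝ | ∃ σ : Matrix b b ℂ, σ.PosSemidef ∧ σ.trace = 1 ∧
    (1 < gamma → LinearMap.ker σ.mulVecLin ≤ LinearMap.ker (trFst ρ).mulVecLin) ∧
    x = -sandwichedRenyiDiv gamma ρ ((1 : Matrix a a ℂ) ⊗ₖ σ)}


open scoped Kronecker ComplexOrder
open Matrix

set_option linter.unusedSectionVars false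
set_option linter.unusedSimpArgs false

section FunctionalCalculus

variable {n m k : Type*} [Fintype n] [DecidableEq n] [Fintype m] [DecidableEq m]

/-- functional calculus for Hermitian matrices with complex valued functions -/
noncomputable def mfc (g : ℝ → ℂ) (A : Matrix n n ℂ) : Matrix n n ℂ :=
  if hA : A.IsHermitian then
    (hA.eigenvectorUnitary : Matrix n n ℂ) *
      Matrix.diagonal (fun i => g (hA.eigenvalues i)) *
      star (hA.eigenvectorUnitary : Matrix n n ℂ)
  else 0

lemma matRpow_eq_mfc (A : Matrix n n ℂ) (t : ℝ) :
    matRpow A t = mfc (fun x => ((if x = 0 then (0 : ℝ) else x ^ t : ℝ) : ℂ)) A := rfl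

lemma eigU_mul_star {A : Matrix n n ℂ} (hA : A.IsHermitian) :
    (hA.eigenvectorUnitary : Matrix n n ℂ) * (hA.eigenvectorUnitary : Matrix n n ℂ)ᴴ = 1 :=
  Unitary.mul_star_self_of_mem hA.eigenvectorUnitary.2

lemma eigU_star_mul {A : Matrix n n ℂ} (hA : A.IsHermitian) :
    (hA.eigenvectorUnitary : Matrix n n ℂ)ᴴ * (hA.eigenvectorUnitary : Matrix n n ℂ) = 1 :=
  Unitary.star_mul_self_of_mem hA.eigenvectorUnitary.2

lemma eig_decomp {A : Matrix n n ℂ} (hA : A.IsHermitian) :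
    A = (hA.eigenvectorUnitary : Matrix n n ℂ) *
      Matrix.diagonal (fun i => ((hA.eigenvalues i : ℝ) : ℂ)) *
      (hA.eigenvectorUnitary : Matrix n n ℂ)ᴴ := by
  conv_lhs => rw [hA.spectral_theorem]
  rfl

lemma mul_eigU {A : Matrix n n ℂ} (hA : A.IsHermitian) :
    A * (hA.eigenvectorUnitary : Matrix n n ℂ) = (hA.eigenvectorUnitary : Matrix n n ℂ) *
      Matrix.diagonal (fun i => ((hA.eigenvalues i : ℝ) : ℂ)) := by
  conv_lhs => lhs; rw [eig_decomp hA]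
  rw [Matrix.mul_assoc, eigU_star_mul, Matrix.mul_one]

lemma mfc_eq {A : Matrix n n ℂ} (hA : A.IsHermitian) (g : ℝ → ℂ) :
    mfc g A = (hA.eigenvectorUnitary : Matrix n n ℂ) *
      Matrix.diagonal (fun i => g (hA.eigenvalues i)) *
      (hA.eigenvectorUnitary : Matrix n n ℂ)ᴴ := by
  simp [mfc, hA, star_eq_conjTranspose]

lemma mfc_mul_of {A : Matrix n n ℂ} (hA : A.IsHermitian) (g : ℝ → ℂ) (V : Matrix n m ℂ)
    (d : m → ℝ) (h : A * V = V * diagonal (fun i => (d i : ℂ))) :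
    mfc g A * V = V * diagonal (fun i => g (d i)) := by
  set U := (hA.eigenvectorUnitary : Matrix n n ℂ) with hU
  set L := Uᴴ * V with hL
  have h1 : diagonal (fun i => ((hA.eigenvalues i : ℝ) : ℂ)) * L
      = L * diagonal (fun i => (d i : ℂ)) := by
    have e : diagonal (fun i => ((hA.eigenvalues i : ℝ) : ℂ)) * L = Uᴴ * (A * V) := by
      conv_rhs => rw [eig_decomp hA]
      rw [hL, ← hU]
      simp only [← Matrix.mul_assoc]
      rw [hU, eigU_star_mul, Matrix.one_mul]
    rw [e, h, hL, Matrix.mul_assoc]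
  have h2 : diagonal (fun i => g (hA.eigenvalues i)) * L = L * diagonal (fun i => g (d i)) := by
    ext i j
    have := congrFun (congrFun h1 i) j
    rw [diagonal_mul, mul_diagonal] at this ⊢
    by_cases hz : L i j = 0
    · simp [hz]
    · rw [mul_comm] at this
      have := mul_left_cancel₀ hz this
      have := Complex.ofReal_injective this
      rw [this, mul_comm]
  have hV : V = U * L := by
    rw [hL, ← Matrix.mul_assoc, hU, eigU_mul_star, Matrix.one_mul]
  rw [mfc_eq hA, Matrix.mul_assoc, ← hU, ← hL, Matrix.mul_assoc, h2, ← Matrix.mul_assoc, ← hV]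

lemma mfc_eq_of_unitary {A : Matrix n n ℂ} (hA : A.IsHermitian) (g : ℝ → ℂ) (V : Matrix n n ℂ)
    (d : n → ℝ) (hV : V * Vᴴ = 1) (h : A * V = V * diagonal (fun i => (d i : ℂ))) :
    mfc g A = V * diagonal (fun i => g (d i)) * Vᴴ := by
  rw [← mfc_mul_of hA g V d h, Matrix.mul_assoc, hV, Matrix.mul_one]

lemma mfc_mul_eigU {A : Matrix n n ℂ} (hA : A.IsHermitian) (g : ℝ → ℂ) :
    mfc g A * (hA.eigenvectorUnitary : Matrix n n ℂ) = (hA.eigenvectorUnitary : Matrix n n ℂ) *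
      Matrix.diagonal (fun i => g (hA.eigenvalues i)) := mfc_mul_of hA g _ _ (mul_eigU hA)

lemma mfc_mul {A : Matrix n n ℂ} (hA : A.IsHermitian) (g h : ℝ → ℂ) :
    mfc g A * mfc h A = mfc (fun x => g x * h x) A := by
  conv_lhs => rw [mfc_eq hA h]
  rw [← Matrix.mul_assoc, ← Matrix.mul_assoc, mfc_mul_eigU, Matrix.mul_assoc _ (diagonal _) (diagonal _),
    diagonal_mul_diagonal, mfc_eq hA]

lemma mfc_congr {A : Matrix n n ℂ} (hA : A.IsHermitian) {g h : ℝ → ℂ}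
    (hgh : ∀ i, g (hA.eigenvalues i) = h (hA.eigenvalues i)) : mfc g A = mfc h A := by
  rw [mfc_eq hA, mfc_eq hA]; simp only [hgh]

lemma mfc_id {A : Matrix n n ℂ} (hA : A.IsHermitian) : mfc (fun x => (x : ℂ)) A = A := by
  rw [mfc_eq hA]; exact (eig_decomp hA).symm

lemma mfc_one {A : Matrix n n ℂ} (hA : A.IsHermitian) : mfc (fun _ => 1) A = 1 := by
  rw [mfc_eq hA]
  have : (diagonal fun _ : n => (1 : ℂ)) = 1 := diagonal_one
  rw [this, Matrix.mul_one, eigU_mul_star]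

lemma mfc_add {A : Matrix n n ℂ} (hA : A.IsHermitian) (g h : ℝ → ℂ) :
    mfc g A + mfc h A = mfc (fun x => g x + h x) A := by
  rw [mfc_eq hA, mfc_eq hA, mfc_eq hA, ← Matrix.add_mul, ← Matrix.mul_add, diagonal_add]

lemma mfc_smul {A : Matrix n n ℂ} (hA : A.IsHermitian) (c : ℂ) (g : ℝ → ℂ) :
    mfc (fun x => c * g x) A = c • mfc g A := by
  rw [mfc_eq hA, mfc_eq hA]
  have : (diagonal fun i => c * g (hA.eigenvalues i)) = c • diagonal fun i => g (hA.eigenvalues i) := by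
    ext i j; by_cases h : i = j <;> simp [diagonal_apply, h]
  rw [this, Matrix.mul_smul, Matrix.smul_mul]

lemma mfc_conjTranspose {A : Matrix n n ℂ} (hA : A.IsHermitian) (g : ℝ → ℂ) :
    (mfc g A)ᴴ = mfc (fun x => star (g x)) A := by
  rw [mfc_eq hA, mfc_eq hA]
  simp only [conjTranspose_mul, conjTranspose_conjTranspose, diagonal_conjTranspose,
    Matrix.mul_assoc]
  rfl

lemma mfc_isHermitian {A : Matrix n n ℂ} (hA : A.IsHermitian) (g : ℝ → ℝ) :
    (mfc (fun x => (g x : ℂ)) A).IsHermitian := by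
  unfold IsHermitian
  rw [mfc_conjTranspose hA]
  simp

lemma mfc_transpose {A : Matrix n n ℂ} (hA : A.IsHermitian) (g : ℝ → ℂ) :
    mfc g Aᵀ = (mfc g A)ᵀ := by
  set U := (hA.eigenvectorUnitary : Matrix n n ℂ) with hU
  have e : ∀ g : ℝ → ℂ, (mfc g A)ᵀ = Uᴴᵀ * diagonal (fun i => g (hA.eigenvalues i)) * Uᴴᵀᴴ := by
    intro g
    rw [mfc_eq hA, transpose_mul, transpose_mul, diagonal_transpose, Matrix.mul_assoc]
    congr 2
    ext i j; simp [hU]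
  have h1 : Uᴴᵀᴴ * Uᴴᵀ = 1 := by
    have := congrArg transpose (eigU_star_mul hA)
    rw [transpose_mul, transpose_one] at this
    rw [← this]
    congr 1
    ext i j; simp [hU]
  have h2 : Uᴴᵀ * Uᴴᵀᴴ = 1 := mul_eq_one_comm.mp h1
  rw [e, mfc_eq_of_unitary hA.transpose g (Uᴴᵀ) hA.eigenvalues h2]
  have := e (fun x => (x : ℂ))
  rw [mfc_id hA] at this
  rw [this, Matrix.mul_assoc, h1, Matrix.mul_one]

lemma mfc_comp {A : Matrix n n ℂ} (hA : A.IsHermitian) (g : ℝ → ℂ) (h : ℝ → ℝ) :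
    mfc g (mfc (fun x => (h x : ℂ)) A) = mfc (fun x => g (h x)) A := by
  rw [mfc_eq_of_unitary (mfc_isHermitian hA h) g _ (fun i => h (hA.eigenvalues i))
    (eigU_mul_star hA) (mfc_mul_eigU hA _), mfc_eq hA]

lemma mfc_trace {A : Matrix n n ℂ} (hA : A.IsHermitian) (g : ℝ → ℂ) :
    (mfc g A).trace = ∑ i, g (hA.eigenvalues i) := by
  rw [mfc_eq hA, trace_mul_comm, ← Matrix.mul_assoc, eigU_star_mul, Matrix.one_mul, trace_diagonal]

lemma mfc_intertwine {A : Matrix n n ℂ} {B : Matrix m m ℂ} (hA : A.IsHermitian)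
    (hB : B.IsHermitian) (K : Matrix n m ℂ) (h : A * K = K * B) (g : ℝ → ℂ) :
    mfc g A * K = K * mfc g B := by
  have h1 := mfc_mul_of hA g (K * (hB.eigenvectorUnitary : Matrix m m ℂ)) hB.eigenvalues (by
    rw [← Matrix.mul_assoc, h, Matrix.mul_assoc, mul_eigU, Matrix.mul_assoc])
  have h2 := congrArg (· * (hB.eigenvectorUnitary : Matrix m m ℂ)ᴴ) h1
  simp only [Matrix.mul_assoc] at h2
  rw [eigU_mul_star, Matrix.mul_one] at h2
  rw [h2, mfc_eq hB, Matrix.mul_assoc]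

lemma mfc_posSemidef {A : Matrix n n ℂ} (hA : A.PosSemidef) (g : ℝ → ℝ)
    (hg : ∀ x, 0 ≤ x → 0 ≤ g x) : (mfc (fun x => (g x : ℂ)) A).PosSemidef := by
  rw [mfc_eq hA.1]
  refine PosSemidef.mul_mul_conjTranspose_same (PosSemidef.diagonal ?_) _
  intro i
  simpa using hg _ (hA.eigenvalues_nonneg i)

lemma mfc_posDef' {A : Matrix n n ℂ} (hA : A.IsHermitian) (g : ℝ → ℝ)
    (hg : ∀ i, 0 < g (hA.eigenvalues i)) : (mfc (fun x => (g x : ℂ)) A).PosDef := by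
  rw [mfc_eq hA]
  refine PosDef.mul_mul_conjTranspose_same (PosDef.diagonal ?_) ?_
  · intro i; simpa using hg i
  · intro x y hxy
    have := congrArg (· ᵥ* (hA.eigenvectorUnitary : Matrix n n ℂ)ᴴ) hxy
    simpa [vecMul_vecMul, eigU_mul_star hA] using this

lemma mfc_trace_swap (K : Matrix n m ℂ) (g : ℝ → ℝ) (hg : g 0 = 0) :
    (mfc (fun x => (g x : ℂ)) (K * Kᴴ)).trace = (mfc (fun x => (g x : ℂ)) (Kᴴ * K)).trace := by
  have h1 : (K * Kᴴ).IsHermitian := (posSemidef_self_mul_conjTranspose K).1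
  have h2 : (Kᴴ * K).IsHermitian := (posSemidef_conjTranspose_mul_self K).1
  have e : ∀ x : ℝ, (g x : ℂ) = ((g x / x : ℝ) : ℂ) * (x : ℂ) := by
    intro x
    by_cases hx : x = 0
    · simp [hx, hg]
    · rw [← Complex.ofReal_mul, div_mul_cancel₀ _ hx]
  have e1 : mfc (fun x => (g x : ℂ)) (K * Kᴴ) = mfc (fun x => ((g x / x : ℝ) : ℂ)) (K * Kᴴ) * (K * Kᴴ) := by
    conv_rhs => rhs; rw [← mfc_id h1]
    rw [mfc_mul h1]; simp only [← e]
  have e2 : mfc (fun x => (g x : ℂ)) (Kᴴ * K) = mfc (fun x => ((g x / x : ℝ) : ℂ)) (Kᴴ * K) * (Kᴴ * K) := by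
    conv_rhs => rhs; rw [← mfc_id h2]
    rw [mfc_mul h2]; simp only [← e]
  rw [e1, e2, ← Matrix.mul_assoc, mfc_intertwine h1 h2 K (by rw [Matrix.mul_assoc]),
    Matrix.mul_assoc, trace_mul_comm, Matrix.mul_assoc]

/-- block diagonal matrix -/
def blk {x : Type*} [DecidableEq x] (D : x → Matrix n n ℂ) : Matrix (x × n) (x × n) ℂ :=
  Matrix.of fun p p' => if p.1 = p'.1 then D p.1 p.2 p'.2 else 0

variable {x : Type*} [Fintype x] [DecidableEq x]

lemma blk_mul (D E : x → Matrix n n ℂ) : blk D * blk E = blk (fun i => D i * E i) := by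
  ext ⟨i, a⟩ ⟨j, b⟩
  simp only [blk, mul_apply, of_apply, Fintype.sum_prod_type]
  by_cases h : i = j
  · subst h
    rw [Finset.sum_eq_single i]
    · simp
    · intro k _ hk; simp [Ne.symm hk]
    · simp
  · simp only [h, if_false]
    refine Finset.sum_eq_zero fun k _ => Finset.sum_eq_zero fun l _ => ?_
    by_cases hk : i = k
    · subst hk; simp [h]
    · simp [hk]

lemma blk_conjTranspose (D : x → Matrix n n ℂ) : (blk D)ᴴ = blk (fun i => (D i)ᴴ) := by
  ext ⟨i, a⟩ ⟨j, b⟩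
  simp only [blk, conjTranspose_apply, of_apply]
  by_cases h : i = j
  · subst h; simp
  · simp [h, Ne.symm h]

lemma blk_one : blk (fun _ : x => (1 : Matrix n n ℂ)) = 1 := by
  ext ⟨i, a⟩ ⟨j, b⟩
  simp only [blk, of_apply, one_apply, Prod.mk.injEq]
  by_cases h : i = j <;> simp [h]

lemma blk_diagonal (d : x → n → ℂ) :
    blk (fun i => diagonal (d i)) = diagonal (fun p : x × n => d p.1 p.2) := by
  ext ⟨i, a⟩ ⟨j, b⟩
  simp only [blk, of_apply, diagonal_apply, Prod.mk.injEq]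
  by_cases h : i = j <;> simp [h]

lemma blk_trace (D : x → Matrix n n ℂ) : (blk D).trace = ∑ i, (D i).trace := by
  simp [blk, trace, Fintype.sum_prod_type]

lemma kron_eq_blk (s : Matrix n n ℂ) : (1 : Matrix x x ℂ) ⊗ₖ s = blk (fun _ => s) := by
  ext ⟨i, a⟩ ⟨j, b⟩
  simp only [blk, of_apply, kroneckerMap_apply, one_apply]
  by_cases h : i = j <;> simp [h]

lemma blk_isHermitian {D : x → Matrix n n ℂ} (h : ∀ i, (D i).IsHermitian) : (blk D).IsHermitian := by
  unfold IsHermitian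
  rw [blk_conjTranspose]; congr 1; funext i; exact h i

lemma mfc_blk {D : x → Matrix n n ℂ} (h : ∀ i, (D i).IsHermitian) (g : ℝ → ℂ) :
    mfc g (blk D) = blk (fun i => mfc g (D i)) := by
  rw [mfc_eq_of_unitary (blk_isHermitian h) g (blk fun i => ((h i).eigenvectorUnitary : Matrix n n ℂ))
    (fun p => (h p.1).eigenvalues p.2)]
  · rw [← blk_diagonal (fun i j => g ((h i).eigenvalues j)), blk_mul, blk_conjTranspose, blk_mul]
    congr 1; funext i; rw [mfc_eq (h i)]
  · rw [blk_conjTranspose, blk_mul, ← blk_one]; congr 1; funext i; exact eigU_mul_star _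
  · rw [← blk_diagonal (fun i j => (((h i).eigenvalues j : ℝ) : ℂ)), blk_mul, blk_mul]
    congr 1; funext i; exact mul_eigU _

end FunctionalCalculus

open scoped Kronecker ComplexOrder
open Matrix

set_option linter.unusedSectionVars false
set_option linter.unusedSimpArgs false

section Acts

variable {A B C X Y : Type*} [Fintype A] [DecidableEq A] [Fintype B] [DecidableEq B]
  [Fintype C] [DecidableEq C] [Fintype X] [Fintype Y]

/-- action of an `A`-matrix on a tripartite vector -/
def actA (g : Matrix A A ℂ) (φ : A → B → C → ℂ) : A → B → C → ℂ :=
  fun a b c => ∑ a1, g a a1 * φ a1 b c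

/-- action of a `B`-matrix -/
def actB (g : Matrix B B ℂ) (φ : A → B → C → ℂ) : A → B → C → ℂ :=
  fun a b c => ∑ b1, g b b1 * φ a b1 c

/-- action of a `C`-matrix -/
def actC (g : Matrix C C ℂ) (φ : A → B → C → ℂ) : A → B → C → ℂ :=
  fun a b c => ∑ c1, g c c1 * φ a b c1

/-- action of an `AB`-matrix -/
def actAB (g : Matrix (A × B) (A × B) ℂ) (φ : A → B → C → ℂ) : A → B → C → ℂ :=
  fun a b c => ∑ q, g (a, b) q * φ q.1 q.2 c
/-- action of an `AC`-matrix -/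
def actAC (g : Matrix (A × C) (A × C) ℂ) (φ : A → B → C → ℂ) : A → B → C → ℂ :=
  fun a b c => ∑ q, g (a, c) q * φ q.1 b q.2
/-- inner product -/
def ip (φ χ : A → B → C → ℂ) : ℂ := ∑ a, ∑ b, ∑ c, star (φ a b c) * χ a b c
/-- squared norm -/
noncomputable def nsq (φ : A → B → C → ℂ) : ℝ := ∑ a, ∑ b, ∑ c, ‖φ a b c‖ ^ 2

lemma actA_mul (g h : Matrix A A ℂ) (φ : A → B → C → ℂ) : actA (g * h) φ = actA g (actA h φ) := by
  funext a b c
  simp only [actA, mul_apply, Finset.sum_mul, Finset.mul_sum, mul_assoc]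
  exact Finset.sum_comm
lemma actB_mul (g h : Matrix B B ℂ) (φ : A → B → C → ℂ) : actB (g * h) φ = actB g (actB h φ) := by
  funext a b c
  simp only [actB, mul_apply, Finset.sum_mul, Finset.mul_sum, mul_assoc]
  exact Finset.sum_comm
lemma actC_mul (g h : Matrix C C ℂ) (φ : A → B → C → ℂ) : actC (g * h) φ = actC g (actC h φ) := by
  funext a b c
  simp only [actC, mul_apply, Finset.sum_mul, Finset.mul_sum, mul_assoc]
  exact Finset.sum_comm
lemma actAB_mul (g h : Matrix (A × B) (A × B) ℂ) (φ : A → B → C → ℂ) :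
    actAB (g * h) φ = actAB g (actAB h φ) := by
  funext a b c
  simp only [actAB, mul_apply, Finset.sum_mul, Finset.mul_sum, mul_assoc]
  exact Finset.sum_comm
lemma actAC_mul (g h : Matrix (A × C) (A × C) ℂ) (φ : A → B → C → ℂ) :
    actAC (g * h) φ = actAC g (actAC h φ) := by
  funext a b c
  simp only [actAC, mul_apply, Finset.sum_mul, Finset.mul_sum, mul_assoc]
  exact Finset.sum_comm

lemma actA_one (φ : A → B → C → ℂ) : actA 1 φ = φ := by
  funext a b c; simp [actA, one_apply]
lemma actB_one (φ : A → B → C → ℂ) : actB 1 φ = φ := by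
  funext a b c; simp [actB, one_apply]
lemma actC_one (φ : A → B → C → ℂ) : actC 1 φ = φ := by
  funext a b c; simp [actC, one_apply]
lemma actAB_one (φ : A → B → C → ℂ) : actAB 1 φ = φ := by
  funext a b c; simp [actAB, one_apply]
lemma actAC_one (φ : A → B → C → ℂ) : actAC 1 φ = φ := by
  funext a b c; simp [actAC, one_apply]

lemma actAB_kron (s : Matrix B B ℂ) (φ : A → B → C → ℂ) :
    actAB ((1 : Matrix A A ℂ) ⊗ₖ s) φ = actB s φ := by
  funext a b c
  simp only [actAB, actB, kroneckerMap_apply, Fintype.sum_prod_type, one_apply]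
  rw [Finset.sum_eq_single a] <;> simp +contextual [eq_comm]
lemma actAC_kron (s : Matrix C C ℂ) (φ : A → B → C → ℂ) :
    actAC ((1 : Matrix A A ℂ) ⊗ₖ s) φ = actC s φ := by
  funext a b c
  simp only [actAC, actC, kroneckerMap_apply, Fintype.sum_prod_type, one_apply]
  rw [Finset.sum_eq_single a] <;> simp +contextual [eq_comm]

lemma actA_actB (g : Matrix A A ℂ) (h : Matrix B B ℂ) (φ : A → B → C → ℂ) :
    actA g (actB h φ) = actB h (actA g φ) := by
  funext a b c
  simp only [actA, actB, Finset.mul_sum]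
  rw [Finset.sum_comm]
  refine Finset.sum_congr rfl fun _ _ => Finset.sum_congr rfl fun _ _ => by ring
lemma actA_actC (g : Matrix A A ℂ) (h : Matrix C C ℂ) (φ : A → B → C → ℂ) :
    actA g (actC h φ) = actC h (actA g φ) := by
  funext a b c
  simp only [actA, actC, Finset.mul_sum]
  rw [Finset.sum_comm]
  refine Finset.sum_congr rfl fun _ _ => Finset.sum_congr rfl fun _ _ => by ring
lemma actB_actC (g : Matrix B B ℂ) (h : Matrix C C ℂ) (φ : A → B → C → ℂ) :
    actB g (actC h φ) = actC h (actB g φ) := by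
  funext a b c
  simp only [actB, actC, Finset.mul_sum]
  rw [Finset.sum_comm]
  refine Finset.sum_congr rfl fun _ _ => Finset.sum_congr rfl fun _ _ => by ring
lemma actAB_actC (g : Matrix (A × B) (A × B) ℂ) (h : Matrix C C ℂ) (φ : A → B → C → ℂ) :
    actAB g (actC h φ) = actC h (actAB g φ) := by
  funext a b c
  simp only [actAB, actC, Finset.mul_sum]
  rw [Finset.sum_comm]
  refine Finset.sum_congr rfl fun _ _ => Finset.sum_congr rfl fun _ _ => by ring
lemma actAC_actB (g : Matrix (A × C) (A × C) ℂ) (h : Matrix B B ℂ) (φ : A → B → C → ℂ) :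
    actAC g (actB h φ) = actB h (actAC g φ) := by
  funext a b c
  simp only [actAC, actB, Finset.mul_sum]
  rw [Finset.sum_comm]
  refine Finset.sum_congr rfl fun _ _ => Finset.sum_congr rfl fun _ _ => by ring

lemma ip_actA (g : Matrix A A ℂ) (φ χ : A → B → C → ℂ) :
    ip φ (actA g χ) = ip (actA gᴴ φ) χ := by
  simp only [ip, actA, Finset.mul_sum, Finset.sum_mul, star_sum, star_mul', conjTranspose_apply,
    star_star]
  calc _ = ∑ a, ∑ b, ∑ i, ∑ c, star (φ a b c) * (g a i * χ i b c) :=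
        Finset.sum_congr rfl fun _ _ => Finset.sum_congr rfl fun _ _ => Finset.sum_comm
    _ = ∑ a, ∑ i, ∑ b, ∑ c, star (φ a b c) * (g a i * χ i b c) :=
        Finset.sum_congr rfl fun _ _ => Finset.sum_comm
    _ = ∑ i, ∑ a, ∑ b, ∑ c, star (φ a b c) * (g a i * χ i b c) := Finset.sum_comm
    _ = ∑ i, ∑ b, ∑ a, ∑ c, star (φ a b c) * (g a i * χ i b c) :=
        Finset.sum_congr rfl fun _ _ => Finset.sum_comm
    _ = ∑ i, ∑ b, ∑ c, ∑ a, star (φ a b c) * (g a i * χ i b c) :=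
        Finset.sum_congr rfl fun _ _ => Finset.sum_congr rfl fun _ _ => Finset.sum_comm
    _ = _ := by
        refine Finset.sum_congr rfl fun _ _ => Finset.sum_congr rfl fun _ _ =>
          Finset.sum_congr rfl fun _ _ => Finset.sum_congr rfl fun _ _ => by ring

lemma ip_actB (g : Matrix B B ℂ) (φ χ : A → B → C → ℂ) :
    ip φ (actB g χ) = ip (actB gᴴ φ) χ := by
  simp only [ip, actB, Finset.mul_sum, Finset.sum_mul, star_sum, star_mul', conjTranspose_apply,
    star_star]
  refine Finset.sum_congr rfl fun a _ => ?_
  calc _ = ∑ b, ∑ i, ∑ c, star (φ a b c) * (g b i * χ a i c) :=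
        Finset.sum_congr rfl fun _ _ => Finset.sum_comm
    _ = ∑ i, ∑ b, ∑ c, star (φ a b c) * (g b i * χ a i c) := Finset.sum_comm
    _ = ∑ i, ∑ c, ∑ b, star (φ a b c) * (g b i * χ a i c) :=
        Finset.sum_congr rfl fun _ _ => Finset.sum_comm
    _ = _ := by
        refine Finset.sum_congr rfl fun _ _ => Finset.sum_congr rfl fun _ _ =>
          Finset.sum_congr rfl fun _ _ => by ring

lemma ip_actC (g : Matrix C C ℂ) (φ χ : A → B → C → ℂ) :
    ip φ (actC g χ) = ip (actC gᴴ φ) χ := by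
  simp only [ip, actC, Finset.mul_sum, Finset.sum_mul, star_sum, star_mul', conjTranspose_apply,
    star_star]
  refine Finset.sum_congr rfl fun a _ => Finset.sum_congr rfl fun b _ => ?_
  rw [Finset.sum_comm]
  refine Finset.sum_congr rfl fun _ _ => Finset.sum_congr rfl fun _ _ => by ring

lemma ip_eq_AB (φ χ : A → B → C → ℂ) :
    ip φ χ = ∑ c, ∑ q : A × B, star (φ q.1 q.2 c) * χ q.1 q.2 c := by
  rw [Finset.sum_comm, Fintype.sum_prod_type]; rfl

lemma ip_eq_AC (φ χ : A → B → C → ℂ) :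
    ip φ χ = ∑ b, ∑ q : A × C, star (φ q.1 b q.2) * χ q.1 b q.2 := by
  simp only [Fintype.sum_prod_type]; rw [Finset.sum_comm]; rfl

lemma ip_actAB (g : Matrix (A × B) (A × B) ℂ) (φ χ : A → B → C → ℂ) :
    ip φ (actAB g χ) = ip (actAB gᴴ φ) χ := by
  rw [ip_eq_AB, ip_eq_AB]
  refine Finset.sum_congr rfl fun c _ => ?_
  simp only [actAB, Finset.mul_sum, Finset.sum_mul, star_sum, star_mul', conjTranspose_apply,
    star_star]
  rw [Finset.sum_comm]
  refine Finset.sum_congr rfl fun _ _ => Finset.sum_congr rfl fun _ _ => by ring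

lemma ip_actAC (g : Matrix (A × C) (A × C) ℂ) (φ χ : A → B → C → ℂ) :
    ip φ (actAC g χ) = ip (actAC gᴴ φ) χ := by
  rw [ip_eq_AC, ip_eq_AC]
  refine Finset.sum_congr rfl fun c _ => ?_
  simp only [actAC, Finset.mul_sum, Finset.sum_mul, star_sum, star_mul', conjTranspose_apply,
    star_star]
  rw [Finset.sum_comm]
  refine Finset.sum_congr rfl fun _ _ => Finset.sum_congr rfl fun _ _ => by ring

lemma star_mul_self_eq (z : ℂ) : star z * z = ((‖z‖ ^ 2 : ℝ) : ℂ) := by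
  rw [Complex.star_def, mul_comm, Complex.mul_conj, Complex.normSq_eq_norm_sq]

lemma ip_self (φ : A → B → C → ℂ) : ip φ φ = (nsq φ : ℂ) := by
  simp only [ip, nsq, star_mul_self_eq, Complex.ofReal_sum]

lemma nsq_nonneg (φ : A → B → C → ℂ) : 0 ≤ nsq φ := by unfold nsq; positivity

lemma nsq_of_ip {φ χ : A → B → C → ℂ} (h : ip φ φ = ip χ χ) : nsq φ = nsq χ := by
  rw [ip_self, ip_self] at h; exact_mod_cast h

lemma norm_sum_mul_le {ι : Type*} (s : Finset ι) (f g : ι → ℂ) :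
    ‖∑ i ∈ s, f i * g i‖ ≤ √(∑ i ∈ s, ‖f i‖ ^ 2) * √(∑ i ∈ s, ‖g i‖ ^ 2) := by
  refine (norm_sum_le _ _).trans ?_
  simp only [norm_mul]
  exact Real.sum_mul_le_sqrt_mul_sqrt _ _ _

lemma norm_ip_le (φ χ : A → B → C → ℂ) : ‖ip φ χ‖ ≤ √(nsq φ) * √(nsq χ) := by
  have := norm_sum_mul_le (Finset.univ : Finset (A × B × C)) (fun i => star (φ i.1 i.2.1 i.2.2))
    (fun i => χ i.1 i.2.1 i.2.2)
  simpa only [Fintype.sum_prod_type, norm_star, ip, nsq] using this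

lemma norm_sum_ip_le {ι : Type*} [Fintype ι] (φ χ : ι → A → B → C → ℂ) :
    ‖∑ i, ip (φ i) (χ i)‖ ≤ √(∑ i, nsq (φ i)) * √(∑ i, nsq (χ i)) := by
  have := norm_sum_mul_le (Finset.univ : Finset (ι × A × B × C))
    (fun i => star (φ i.1 i.2.1 i.2.2.1 i.2.2.2))
    (fun i => χ i.1 i.2.1 i.2.2.1 i.2.2.2)
  simpa only [Fintype.sum_prod_type, norm_star, ip, nsq] using this

lemma ip_sum_right {ι : Type*} [Fintype ι] (φ : A → B → C → ℂ) (χ : ι → A → B → C → ℂ) :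
    ip φ (∑ i, χ i) = ∑ i, ip φ (χ i) := by
  simp only [ip, Finset.sum_apply, Finset.mul_sum]
  calc _ = ∑ a, ∑ b, ∑ i, ∑ c, star (φ a b c) * χ i a b c :=
        Finset.sum_congr rfl fun _ _ => Finset.sum_congr rfl fun _ _ => Finset.sum_comm
    _ = ∑ a, ∑ i, ∑ b, ∑ c, star (φ a b c) * χ i a b c :=
        Finset.sum_congr rfl fun _ _ => Finset.sum_comm
    _ = _ := Finset.sum_comm

lemma ip_conj (φ χ : A → B → C → ℂ) : star (ip φ χ) = ip χ φ := by
  simp [ip, mul_comm]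

lemma ip_sum_left {ι : Type*} [Fintype ι] (φ : A → B → C → ℂ) (χ : ι → A → B → C → ℂ) :
    ip (∑ i, χ i) φ = ∑ i, ip (χ i) φ := by
  rw [← ip_conj, ip_sum_right, star_sum]
  simp only [ip_conj]

lemma actA_sum (g : X → Matrix A A ℂ) (φ : A → B → C → ℂ) :
    actA (∑ x, g x) φ = ∑ x, actA (g x) φ := by
  funext a b c
  simp only [actA, Finset.sum_apply, Matrix.sum_apply, Finset.sum_mul]
  exact Finset.sum_comm

/-- a POVM row is a contraction -/
lemma nsq_row_le (m : X → Matrix A A ℂ) (hm : ∀ x, (m x).IsHermitian)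
    (hm1 : ∑ x, m x * m x = 1) (φ : X → A → B → C → ℂ) :
    nsq (∑ x, actA (m x) (φ x)) ≤ ∑ x, nsq (φ x) := by
  set v := ∑ x, actA (m x) (φ x) with hv
  have h1 : ∀ w : A → B → C → ℂ, ∑ x, nsq (actA (m x) w) = nsq w := by
    intro w
    have : ∑ x, ip (actA (m x) w) (actA (m x) w) = ip w w := by
      have e : ∀ x, ip (actA (m x) w) (actA (m x) w) = ip w (actA (m x * m x) w) := by
        intro x; rw [actA_mul, ip_actA (m x) w, (hm x).eq]
      simp only [e]
      rw [← ip_sum_right, ← actA_sum, hm1, actA_one]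
    simp only [ip_self] at this
    exact_mod_cast this
  have h2 : ip v v = ∑ x, ip (actA (m x) v) (φ x) := by
    conv_lhs => rw [hv, ip_sum_right]
    refine Finset.sum_congr rfl fun x _ => ?_
    rw [ip_actA, (hm x).eq]
  have h3 := norm_sum_ip_le (fun x => actA (m x) v) φ
  rw [← h2, h1, ip_self, Complex.norm_real, Real.norm_of_nonneg (nsq_nonneg v)] at h3
  have h4 : 0 ≤ ∑ x, nsq (φ x) := Finset.sum_nonneg fun _ _ => nsq_nonneg _
  have h5 := Real.sq_sqrt (nsq_nonneg v)
  have h6 := Real.sq_sqrt h4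
  have h7 := Real.sqrt_nonneg (nsq v)
  have h8 := Real.sqrt_nonneg (∑ x, nsq (φ x))
  nlinarith [sq_nonneg (√(nsq v) - √(∑ x, nsq (φ x)))]

end Acts

open scoped Kronecker ComplexOrder
open Matrix

set_option linter.unusedSectionVars false
set_option linter.unusedSimpArgs false

section Endpoint

variable {A B C X Y : Type*} [Fintype A] [DecidableEq A] [Fintype B] [DecidableEq B]
  [Fintype C] [DecidableEq C] [Fintype X] [Fintype Y]

lemma endpoint_expand (u : Matrix (A × B) (A × B) ℂ) (v : Matrix (A × C) (A × C) ℂ)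
    (G : Matrix A A ℂ) (φ χ : A → B → C → ℂ) :
    ip (actAB u φ) (actA G (actAC v χ)) =
      ∑ q : A × B, ∑ r : A × C, ∑ a, ∑ a', (∑ b, star (u (a, b) q) * χ r.1 b r.2) * G a a' *
        star (∑ c, star (v (a', c) r) * φ q.1 q.2 c) := by
  simp only [ip, actAB, actA, actAC, star_sum, star_mul', star_star, Finset.mul_sum,
    Finset.sum_mul]
  -- goal: order of summation
  set F : A → B → C → (A × B) → A → (A × C) → ℂ := fun a b c q a' r =>
    star (u (a, b) q) * star (φ q.1 q.2 c) * (G a a' * (v (a', c) r * χ r.1 b r.2)) with hF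
  have lhs : (∑ a, ∑ b, ∑ c, ∑ a', ∑ r : A × C, ∑ q : A × B, F a b c q a' r)
      = ∑ q, ∑ r, ∑ a, ∑ a', ∑ c, ∑ b, F a b c q a' r := by
    have e1 : ∀ a, (∑ b, ∑ c, ∑ a', ∑ r : A × C, ∑ q : A × B, F a b c q a' r)
        = ∑ q, ∑ r, ∑ a', ∑ c, ∑ b, F a b c q a' r := by
      intro a
      calc _ = ∑ c, ∑ b, ∑ a', ∑ r : A × C, ∑ q : A × B, F a b c q a' r := Finset.sum_comm
        _ = ∑ c, ∑ a', ∑ b, ∑ r : A × C, ∑ q : A × B, F a b c q a' r :=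
            Finset.sum_congr rfl fun _ _ => Finset.sum_comm
        _ = ∑ a', ∑ c, ∑ b, ∑ r : A × C, ∑ q : A × B, F a b c q a' r := Finset.sum_comm
        _ = ∑ a', ∑ c, ∑ r : A × C, ∑ b, ∑ q : A × B, F a b c q a' r :=
            Finset.sum_congr rfl fun _ _ => Finset.sum_congr rfl fun _ _ => Finset.sum_comm
        _ = ∑ a', ∑ c, ∑ r : A × C, ∑ q : A × B, ∑ b, F a b c q a' r :=
            Finset.sum_congr rfl fun _ _ => Finset.sum_congr rfl fun _ _ =>
              Finset.sum_congr rfl fun _ _ => Finset.sum_comm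
        _ = ∑ a', ∑ r : A × C, ∑ c, ∑ q : A × B, ∑ b, F a b c q a' r :=
            Finset.sum_congr rfl fun _ _ => Finset.sum_comm
        _ = ∑ r : A × C, ∑ a', ∑ c, ∑ q : A × B, ∑ b, F a b c q a' r := Finset.sum_comm
        _ = ∑ r : A × C, ∑ a', ∑ q : A × B, ∑ c, ∑ b, F a b c q a' r :=
            Finset.sum_congr rfl fun _ _ => Finset.sum_congr rfl fun _ _ => Finset.sum_comm
        _ = ∑ r : A × C, ∑ q : A × B, ∑ a', ∑ c, ∑ b, F a b c q a' r :=
            Finset.sum_congr rfl fun _ _ => Finset.sum_comm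
        _ = _ := Finset.sum_comm
    simp only [e1]
    rw [Finset.sum_comm]
    exact Finset.sum_congr rfl fun _ _ => Finset.sum_comm
  refine lhs.trans ?_
  refine Finset.sum_congr rfl fun q _ => Finset.sum_congr rfl fun r _ =>
    Finset.sum_congr rfl fun a _ => Finset.sum_congr rfl fun a' _ =>
    Finset.sum_congr rfl fun c _ => Finset.sum_congr rfl fun b _ => ?_
  simp only [hF]; ring

lemma isometry_aux {ι κ : Type*} [Fintype ι] [Fintype κ] [DecidableEq κ] (w : ι → κ → ℂ)
    (hw : ∀ c c', ∑ i, w i c * star (w i c') = if c = c' then 1 else 0) (φ : κ → ℂ) :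
    ∑ i, ‖∑ c, star (w i c) * φ c‖ ^ 2 = ∑ c, ‖φ c‖ ^ 2 := by
  have : (((∑ i, ‖∑ c, star (w i c) * φ c‖ ^ 2 : ℝ)) : ℂ) = ((∑ c, ‖φ c‖ ^ 2 : ℝ) : ℂ) := by
    rw [Complex.ofReal_sum, Complex.ofReal_sum]
    simp only [← star_mul_self_eq]
    simp only [star_sum, star_mul', star_star, Finset.sum_mul, Finset.mul_sum]
    rw [Finset.sum_comm]
    calc _ = ∑ c', ∑ c, ∑ i, (w i c * star (w i c')) * (star (φ c) * φ c') := by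
          refine Finset.sum_congr rfl fun c' _ => ?_
          rw [Finset.sum_comm]
          refine Finset.sum_congr rfl fun c _ => Finset.sum_congr rfl fun i _ => by ring
      _ = ∑ c', ∑ c, (if c = c' then 1 else 0) * (star (φ c) * φ c') := by
          refine Finset.sum_congr rfl fun c' _ => Finset.sum_congr rfl fun c _ => ?_
          rw [← Finset.sum_mul, hw]
      _ = _ := by simp
  exact_mod_cast this

lemma endpoint_one (u : Y → Matrix (A × B) (A × B) ℂ) (v : X → Matrix (A × C) (A × C) ℂ)
    (G : Y → X → Matrix A A ℂ) (c : ℝ) (hc : 0 ≤ c)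
    (hG : ∀ y x (ξ η : A → ℂ), ‖∑ a, ∑ a', ξ a * G y x a a' * η a'‖ ≤
      c * (√(∑ a, ‖ξ a‖ ^ 2) * √(∑ a, ‖η a‖ ^ 2)))
    (hu : ∀ b b', ∑ y, ∑ a, ∑ q, u y (a, b) q * star (u y (a, b') q) = if b = b' then 1 else 0)
    (hv : ∀ b b', ∑ x, ∑ a, ∑ q, v x (a, b) q * star (v x (a, b') q) = if b = b' then 1 else 0)
    (φ : Y → A → B → C → ℂ) (χ : X → A → B → C → ℂ) :
    ‖∑ y, ∑ x, ip (actAB (u y) (φ y)) (actA (G y x) (actAC (v x) (χ x)))‖ ≤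
      c * (√(∑ y, nsq (φ y)) * √(∑ x, nsq (χ x))) := by
  set η : Y → X → (A × B) → (A × C) → A → ℂ := fun y x q r a =>
    ∑ b, star (u y (a, b) q) * χ x r.1 b r.2 with hη
  set ξ : Y → X → (A × B) → (A × C) → A → ℂ := fun y x q r a' =>
    ∑ c, star (v x (a', c) r) * φ y q.1 q.2 c with hξ
  have e1 : ∑ y, ∑ x, ip (actAB (u y) (φ y)) (actA (G y x) (actAC (v x) (χ x))) =
      ∑ y, ∑ x, ∑ q, ∑ r, ∑ a, ∑ a', η y x q r a * G y x a a' * star (ξ y x q r a') := by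
    refine Finset.sum_congr rfl fun y _ => Finset.sum_congr rfl fun x _ => ?_
    rw [endpoint_expand]
  have e2 : ‖∑ y, ∑ x, ∑ q, ∑ r, ∑ a, ∑ a', η y x q r a * G y x a a' * star (ξ y x q r a')‖ ≤
      ∑ y, ∑ x, ∑ q, ∑ r, c * (√(∑ a, ‖η y x q r a‖ ^ 2) * √(∑ a, ‖ξ y x q r a‖ ^ 2)) := by
    refine norm_sum_le_of_le _ fun y _ => norm_sum_le_of_le _ fun x _ =>
      norm_sum_le_of_le _ fun q _ => norm_sum_le_of_le _ fun r _ => ?_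
    have := hG y x (η y x q r) (fun a' => star (ξ y x q r a'))
    simpa only [norm_star] using this
  have e3 : ∑ y, ∑ x, ∑ q, ∑ r, (√(∑ a, ‖η y x q r a‖ ^ 2) * √(∑ a, ‖ξ y x q r a‖ ^ 2)) ≤
      √(∑ y, ∑ x, ∑ q, ∑ r, ∑ a, ‖η y x q r a‖ ^ 2) *
      √(∑ y, ∑ x, ∑ q, ∑ r, ∑ a, ‖ξ y x q r a‖ ^ 2) := by
    have := Real.sum_mul_le_sqrt_mul_sqrt (Finset.univ : Finset (Y × X × (A × B) × (A × C)))
      (fun i => √(∑ a, ‖η i.1 i.2.1 i.2.2.1 i.2.2.2 a‖ ^ 2))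
      (fun i => √(∑ a, ‖ξ i.1 i.2.1 i.2.2.1 i.2.2.2 a‖ ^ 2))
    have h0 : ∀ (f : A → ℂ), √(∑ a, ‖f a‖ ^ 2) ^ 2 = ∑ a, ‖f a‖ ^ 2 := fun f =>
      Real.sq_sqrt (by positivity)
    simp only [h0] at this
    rw [Fintype.sum_prod_type, Fintype.sum_prod_type, Fintype.sum_prod_type] at this
    simpa only [Fintype.sum_prod_type (α₁ := X), Fintype.sum_prod_type (α₁ := A × B)] using this
  have e4 : ∑ y, ∑ x, ∑ q, ∑ r, ∑ a, ‖η y x q r a‖ ^ 2 = ∑ x, nsq (χ x) := by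
    rw [Finset.sum_comm]
    refine Finset.sum_congr rfl fun x _ => ?_
    have h := fun (r : A × C) => isometry_aux
      (fun (i : Y × A × (A × B)) b => u i.1 (i.2.1, b) i.2.2)
      (by intro b b'; simp only [Fintype.sum_prod_type (α₁ := Y), Fintype.sum_prod_type (α₁ := A) (α₂ := A × B)]
          exact hu b b') (fun b => χ x r.1 b r.2)
    simp only [Fintype.sum_prod_type (α₁ := Y), Fintype.sum_prod_type (α₁ := A) (α₂ := A × B)] at h
    calc _ = ∑ r : A × C, ∑ y, ∑ a, ∑ q, ‖η y x q r a‖ ^ 2 := by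
          rw [Finset.sum_comm]
          calc _ = ∑ q, ∑ r, ∑ y, ∑ a, ‖η y x q r a‖ ^ 2 := by
                rw [Finset.sum_comm]
                rw [Finset.sum_comm]
                refine Finset.sum_congr rfl fun q _ => Finset.sum_comm
            _ = ∑ r, ∑ q, ∑ y, ∑ a, ‖η y x q r a‖ ^ 2 := Finset.sum_comm
            _ = ∑ r, ∑ y, ∑ q, ∑ a, ‖η y x q r a‖ ^ 2 :=
                Finset.sum_congr rfl fun _ _ => Finset.sum_comm
            _ = _ := Finset.sum_congr rfl fun _ _ => Finset.sum_congr rfl fun _ _ => Finset.sum_comm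
      _ = ∑ r : A × C, ∑ b, ‖χ x r.1 b r.2‖ ^ 2 := Finset.sum_congr rfl fun r _ => h r
      _ = _ := by
          simp only [Fintype.sum_prod_type, nsq]
          exact Finset.sum_congr rfl fun _ _ => Finset.sum_comm
  have e5 : ∑ y, ∑ x, ∑ q, ∑ r, ∑ a, ‖ξ y x q r a‖ ^ 2 = ∑ y, nsq (φ y) := by
    refine Finset.sum_congr rfl fun y _ => ?_
    have h := fun (q : A × B) => isometry_aux
      (fun (i : X × A × (A × C)) b => v i.1 (i.2.1, b) i.2.2)
      (by intro b b'; simp only [Fintype.sum_prod_type (α₁ := X), Fintype.sum_prod_type (α₁ := A) (α₂ := A × C)]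
          exact hv b b') (fun b => φ y q.1 q.2 b)
    simp only [Fintype.sum_prod_type (α₁ := X), Fintype.sum_prod_type (α₁ := A) (α₂ := A × C)] at h
    calc _ = ∑ q : A × B, ∑ x, ∑ a, ∑ r, ‖ξ y x q r a‖ ^ 2 := by
          rw [Finset.sum_comm]
          refine Finset.sum_congr rfl fun _ _ => Finset.sum_congr rfl fun _ _ => Finset.sum_comm
      _ = ∑ q : A × B, ∑ b, ‖φ y q.1 q.2 b‖ ^ 2 := Finset.sum_congr rfl fun r _ => h r
      _ = _ := by
          simp only [Fintype.sum_prod_type, nsq]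
  rw [e1]
  refine e2.trans ?_
  simp only [← Finset.mul_sum]
  refine mul_le_mul_of_nonneg_left ?_ hc
  rw [e4, e5] at e3
  exact e3.trans (le_of_eq (mul_comm _ _))

lemma endpoint_zero (m : X → Matrix A A ℂ) (hm : ∀ x, (m x).IsHermitian)
    (hm1 : ∑ x, m x * m x = 1) (n : Y → Matrix A A ℂ) (hn : ∀ x, (n x).IsHermitian)
    (hn1 : ∑ x, n x * n x = 1)
    (φ : Y → A → B → C → ℂ) (χ : X → A → B → C → ℂ) :
    ‖∑ y, ∑ x, ip (φ y) (actA (n y * m x) (χ x))‖ ≤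
      √(∑ y, nsq (φ y)) * √(∑ x, nsq (χ x)) := by
  have e : ∑ y, ∑ x, ip (φ y) (actA (n y * m x) (χ x)) =
      ip (∑ y, actA (n y) (φ y)) (∑ x, actA (m x) (χ x)) := by
    rw [ip_sum_left]
    refine Finset.sum_congr rfl fun y _ => ?_
    rw [ip_sum_right]
    refine Finset.sum_congr rfl fun x _ => ?_
    rw [actA_mul, ip_actA, (hn y).eq]
  rw [e]
  refine (norm_ip_le _ _).trans ?_
  gcongr
  · exact nsq_row_le n hn hn1 φ
  · exact nsq_row_le m hm hm1 χ

end Endpoint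

open scoped Kronecker ComplexOrder
open Matrix

set_option linter.unusedSectionVars false
set_option linter.unusedSimpArgs false

section ComplexPowers

variable {n : Type*} [Fintype n] [DecidableEq n]

/-- complex powers of a positive definite matrix -/
noncomputable def cp (K : Matrix n n ℂ) (z : ℂ) : Matrix n n ℂ :=
  mfc (fun x => Complex.exp (z * (Real.log x : ℝ))) K

lemma cp_mul {K : Matrix n n ℂ} (hK : K.IsHermitian) (z w : ℂ) :
    cp K z * cp K w = cp K (z + w) := by
  unfold cp
  rw [mfc_mul hK]
  simp only [← Complex.exp_add, add_mul]

lemma cp_zero {K : Matrix n n ℂ} (hK : K.IsHermitian) : cp K 0 = 1 := by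
  unfold cp
  simp [mfc_one hK]

lemma cp_star {K : Matrix n n ℂ} (hK : K.IsHermitian) (z : ℂ) : (cp K z)ᴴ = cp K (star z) := by
  unfold cp
  rw [mfc_conjTranspose hK]
  congr 1; funext x
  rw [Complex.star_def, ← Complex.exp_conj, map_mul, Complex.conj_ofReal]

lemma cp_real {K : Matrix n n ℂ} (hK : K.PosDef) (t : ℝ) :
    cp K (t : ℂ) = mfc (fun x => ((x ^ t : ℝ) : ℂ)) K := by
  refine mfc_congr hK.1 fun i => ?_
  rw [Real.rpow_def_of_pos (hK.eigenvalues_pos i)]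
  push_cast
  rw [mul_comm]

lemma cp_one {K : Matrix n n ℂ} (hK : K.PosDef) : cp K 1 = K := by
  have := cp_real hK 1
  simp only [Real.rpow_one, Complex.ofReal_one] at this
  rw [this, mfc_id hK.1]

lemma cp_imag {K : Matrix n n ℂ} (hK : K.IsHermitian) (z : ℂ) (hz : z.re = 0) :
    cp K z * (cp K z)ᴴ = 1 := by
  rw [cp_star hK, cp_mul hK]
  have : z + star z = 0 := by
    apply Complex.ext <;> simp [hz]
  rw [this, cp_zero hK]

/-- entire functions bounded on the strip -/
def Nice (F : ℂ → ℂ) : Prop :=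
  Differentiable ℂ F ∧ ∃ D : ℝ, ∀ z : ℂ, 0 ≤ z.re → z.re ≤ 1 → ‖F z‖ ≤ D

lemma Nice.const (a : ℂ) : Nice (fun _ => a) := ⟨by fun_prop, ‖a‖, fun _ _ _ => le_rfl⟩

lemma Nice.mul {F G : ℂ → ℂ} (hF : Nice F) (hG : Nice G) : Nice (fun z => F z * G z) := by
  obtain ⟨h1, D1, hD1⟩ := hF
  obtain ⟨h2, D2, hD2⟩ := hG
  refine ⟨h1.mul h2, |D1| * |D2|, fun z hz hz' => ?_⟩
  rw [norm_mul]
  have a := (hD1 z hz hz').trans (le_abs_self _)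
  have b := (hD2 z hz hz').trans (le_abs_self _)
  gcongr

lemma Nice.sum {ι : Type*} (s : Finset ι) {F : ι → ℂ → ℂ} (hF : ∀ i ∈ s, Nice (F i)) :
    Nice (fun z => ∑ i ∈ s, F i z) := by
  classical
  induction s using Finset.induction_on with
  | empty => simpa using Nice.const 0
  | insert a s ha ih =>
    simp only [Finset.sum_insert ha]
    obtain ⟨h1, D1, hD1⟩ := hF a (Finset.mem_insert_self _ _)
    obtain ⟨h2, D2, hD2⟩ := ih (fun i hi => hF i (Finset.mem_insert_of_mem hi))
    exact ⟨h1.add h2, D1 + D2, fun z hz hz' =>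
      (norm_add_le _ _).trans (add_le_add (hD1 z hz hz') (hD2 z hz hz'))⟩

lemma Nice.exp (w l : ℝ) : Nice (fun z => Complex.exp (w * z * l)) := by
  refine ⟨by fun_prop, Real.exp |w * l|, fun z hz hz' => ?_⟩
  rw [Complex.norm_exp]
  apply Real.exp_le_exp.mpr
  have : ((w : ℂ) * z * l).re = z.re * (w * l) := by simp; ring
  rw [this]
  calc z.re * (w * l) ≤ |z.re * (w * l)| := le_abs_self _
    _ = z.re * |w * l| := by rw [abs_mul, abs_of_nonneg hz]
    _ ≤ 1 * |w * l| := by gcongr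
    _ = _ := one_mul _

lemma Nice.cp {K : Matrix n n ℂ} (hK : K.IsHermitian) (w : ℝ) (i j : n) :
    Nice (fun z => cp K (w * z) i j) := by
  unfold _root_.cp
  have e : ∀ g : ℝ → ℂ, mfc g K i j = ∑ k, (hK.eigenvectorUnitary : Matrix n n ℂ) i k *
      g (hK.eigenvalues k) * (star (hK.eigenvectorUnitary : Matrix n n ℂ)) k j := by
    intro g
    rw [mfc_eq hK, mul_apply]
    simp only [mul_diagonal]
    rfl
  simp only [e]
  refine Nice.sum _ fun k _ => ?_
  exact ((Nice.const _).mul (Nice.exp w _)).mul (Nice.const _)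

end ComplexPowers

section Interp

variable {A B C X Y : Type*} [Fintype A] [DecidableEq A] [Fintype B] [DecidableEq B]
  [Fintype C] [DecidableEq C] [Fintype X] [Fintype Y]

lemma kron_mul_apply (s : Matrix B B ℂ) (K : Matrix (A × B) (A × B) ℂ) (a : A) (b : B) (q : A × B) :
    (((1 : Matrix A A ℂ) ⊗ₖ s) * K) (a, b) q = ∑ b1, s b b1 * K (a, b1) q := by
  simp only [mul_apply, kroneckerMap_apply, Fintype.sum_prod_type, one_apply]
  rw [Finset.sum_eq_single a] <;> simp +contextual [eq_comm]

lemma mul_kron_apply (s : Matrix B B ℂ) (K : Matrix (A × B) (A × B) ℂ) (a : A) (b : B) (q : A × B) :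
    (K * ((1 : Matrix A A ℂ) ⊗ₖ s)) q (a, b) = ∑ b1, K q (a, b1) * s b1 b := by
  simp only [mul_apply, kroneckerMap_apply, Fintype.sum_prod_type, one_apply]
  rw [Finset.sum_eq_single a] <;> simp +contextual [eq_comm]

lemma cond_isometry (κ : Y → Matrix (A × B) (A × B) ℂ) (hκ : ∀ y, (κ y).PosDef)
    (σ : Matrix B B ℂ) (hσ : σ.PosDef) (hs : ∀ b b', σ b b' = ∑ y, ∑ a, κ y (a, b) (a, b'))
    (b b' : B) :
    ∑ y, ∑ a, ∑ q, (((1 : Matrix A A ℂ) ⊗ₖ cp σ (-(1/2))) * cp (κ y) (1/2)) (a, b) q *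
      star ((((1 : Matrix A A ℂ) ⊗ₖ cp σ (-(1/2))) * cp (κ y) (1/2)) (a, b') q)
      = if b = b' then 1 else 0 := by
  have hh : (star (1/2 : ℂ)) = 1/2 := by
    apply Complex.ext <;> simp
  have hh' : (star (-(1/2) : ℂ)) = -(1/2) := by rw [star_neg, hh]
  set S := cp σ (-(1/2)) with hS
  have hSh : Sᴴ = S := by rw [hS, cp_star hσ.1, hh']
  have e : ∀ y a, ∑ q, (((1 : Matrix A A ℂ) ⊗ₖ S) * cp (κ y) (1/2)) (a, b) q *
      star ((((1 : Matrix A A ℂ) ⊗ₖ S) * cp (κ y) (1/2)) (a, b') q)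
      = ∑ b2, ∑ b1, S b b1 * κ y (a, b1) (a, b2) * S b2 b' := by
    intro y a
    have e1 : ∑ q, (((1 : Matrix A A ℂ) ⊗ₖ S) * cp (κ y) (1/2)) (a, b) q *
      star ((((1 : Matrix A A ℂ) ⊗ₖ S) * cp (κ y) (1/2)) (a, b') q) =
      ((((1 : Matrix A A ℂ) ⊗ₖ S) * cp (κ y) (1/2)) *
        (((1 : Matrix A A ℂ) ⊗ₖ S) * cp (κ y) (1/2))ᴴ) (a, b) (a, b') := by
      rw [mul_apply]; rfl
    rw [e1, conjTranspose_mul, conjTranspose_kronecker, hSh, conjTranspose_one, cp_star (hκ y).1, hh,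
      ← Matrix.mul_assoc, Matrix.mul_assoc _ (cp (κ y) _) (cp (κ y) _), cp_mul (hκ y).1]
    have : (1/2 + 1/2 : ℂ) = 1 := by norm_num
    rw [this, cp_one (hκ y), mul_kron_apply]
    simp only [kron_mul_apply, Finset.sum_mul]
  simp only [e]
  have e2 : ∑ y, ∑ a, ∑ b2, ∑ b1, S b b1 * κ y (a, b1) (a, b2) * S b2 b' = (S * σ * S) b b' := by
    simp only [mul_apply, hs, Finset.sum_mul, Finset.mul_sum]
    calc _ = ∑ y, ∑ b2, ∑ a, ∑ b1, S b b1 * κ y (a, b1) (a, b2) * S b2 b' :=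
          Finset.sum_congr rfl fun _ _ => Finset.sum_comm
      _ = ∑ b2, ∑ y, ∑ a, ∑ b1, S b b1 * κ y (a, b1) (a, b2) * S b2 b' := Finset.sum_comm
      _ = ∑ b2, ∑ y, ∑ b1, ∑ a, S b b1 * κ y (a, b1) (a, b2) * S b2 b' :=
          Finset.sum_congr rfl fun _ _ => Finset.sum_congr rfl fun _ _ => Finset.sum_comm
      _ = _ := Finset.sum_congr rfl fun _ _ => Finset.sum_comm
  rw [e2]
  have e3 : S * σ * S = 1 := by
    conv_lhs => rw [← cp_one hσ]
    rw [cp_one hσ, hS]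
    nth_rw 2 [← cp_one hσ]
    rw [cp_mul hσ.1, cp_mul hσ.1]
    have : (-(1/2) + 1 + -(1/2) : ℂ) = 0 := by norm_num
    rw [this, cp_zero hσ.1]
  rw [e3, one_apply]

lemma nsq_actA_of (u : Matrix A A ℂ) (hu : uᴴ * u = 1) (φ : A → B → C → ℂ) :
    nsq (actA u φ) = nsq φ := by
  apply nsq_of_ip; rw [ip_actA, ← actA_mul, hu, actA_one]
lemma nsq_actB_of (u : Matrix B B ℂ) (hu : uᴴ * u = 1) (φ : A → B → C → ℂ) :
    nsq (actB u φ) = nsq φ := by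
  apply nsq_of_ip; rw [ip_actB, ← actB_mul, hu, actB_one]
lemma nsq_actC_of (u : Matrix C C ℂ) (hu : uᴴ * u = 1) (φ : A → B → C → ℂ) :
    nsq (actC u φ) = nsq φ := by
  apply nsq_of_ip; rw [ip_actC, ← actC_mul, hu, actC_one]
lemma nsq_actAB_of (u : Matrix (A × B) (A × B) ℂ) (hu : uᴴ * u = 1) (φ : A → B → C → ℂ) :
    nsq (actAB u φ) = nsq φ := by
  apply nsq_of_ip; rw [ip_actAB, ← actAB_mul, hu, actAB_one]
lemma nsq_actAC_of (u : Matrix (A × C) (A × C) ℂ) (hu : uᴴ * u = 1) (φ : A → B → C → ℂ) :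
    nsq (actAC u φ) = nsq φ := by
  apply nsq_of_ip; rw [ip_actAC, ← actAC_mul, hu, actAC_one]

lemma cp_imag' {n : Type*} [Fintype n] [DecidableEq n] {K : Matrix n n ℂ} (hK : K.IsHermitian)
    (z : ℂ) (hz : z.re = 0) : (cp K z)ᴴ * cp K z = 1 := mul_eq_one_comm.mp (cp_imag hK z hz)

lemma cp_imag'' {n : Type*} [Fintype n] [DecidableEq n] {K : Matrix n n ℂ} (hK : K.IsHermitian)
    (z : ℂ) (hz : z.re = 0) : (cp K z)ᴴᴴ * (cp K z)ᴴ = 1 := by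
  rw [conjTranspose_conjTranspose]; exact cp_imag hK z hz

lemma interp_bound (κ : Y → Matrix (A × B) (A × B) ℂ) (hκ : ∀ y, (κ y).PosDef)
    (Ω : X → Matrix (A × C) (A × C) ℂ) (hΩ : ∀ x, (Ω x).PosDef)
    (σ : Matrix B B ℂ) (hσ : σ.PosDef) (hs : ∀ b b', σ b b' = ∑ y, ∑ a, κ y (a, b) (a, b'))
    (τ : Matrix C C ℂ) (hτ : τ.PosDef) (ht : ∀ b b', τ b b' = ∑ x, ∑ a, Ω x (a, b) (a, b'))
    (m : X → Matrix A A ℂ) (hm : ∀ x, (m x).IsHermitian)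
    (hm1 : ∑ x, m x * m x = 1) (n : Y → Matrix A A ℂ) (hn : ∀ x, (n x).IsHermitian)
    (hn1 : ∑ x, n x * n x = 1) (c : ℝ) (hc : 0 ≤ c)
    (hG : ∀ y x (ξ η : A → ℂ), ‖∑ a, ∑ a', ξ a * (n y * m x) a a' * η a'‖ ≤
      c * (√(∑ a, ‖ξ a‖ ^ 2) * √(∑ a, ‖η a‖ ^ 2)))
    (p : ℝ) (hp0 : 0 < p) (hp1 : p < 1)
    (φ : Y → A → B → C → ℂ) (χ : X → A → B → C → ℂ) :
    ‖∑ y, ∑ x, ip (φ y) (actAB (cp (κ y) ((1/2 : ℝ) * p)) (actC (cp τ ((-(1/2) : ℝ) * p))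
      (actA (n y * m x) (actB (cp σ ((-(1/2) : ℝ) * p)) (actAC (cp (Ω x) ((1/2 : ℝ) * p)) (χ x))))))‖
      ≤ c ^ p * (√(∑ y, nsq (φ y)) * √(∑ x, nsq (χ x))) := by
  set N := √(∑ y, nsq (φ y)) * √(∑ x, nsq (χ x)) with hN
  have hN0 : 0 ≤ N := by positivity
  set h : ℂ → ℂ := fun z => ∑ y, ∑ x, ip (φ y) (actAB (cp (κ y) ((1/2 : ℝ) * z))
    (actC (cp τ ((-(1/2) : ℝ) * z)) (actA (n y * m x) (actB (cp σ ((-(1/2) : ℝ) * z))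
      (actAC (cp (Ω x) ((1/2 : ℝ) * z)) (χ x)))))) with hh
  have nice : Nice h := by
    refine Nice.sum _ fun y _ => Nice.sum _ fun x _ => ?_
    unfold ip
    refine Nice.sum _ fun a _ => Nice.sum _ fun b _ => Nice.sum _ fun c _ => ?_
    refine (Nice.const _).mul ?_
    unfold actAB
    refine Nice.sum _ fun q _ => (Nice.cp (hκ y).1 _ _ _).mul ?_
    unfold actC
    refine Nice.sum _ fun c' _ => (Nice.cp hτ.1 _ _ _).mul ?_
    unfold actA
    refine Nice.sum _ fun a' _ => (Nice.const _).mul ?_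
    unfold actB
    refine Nice.sum _ fun c' _ => (Nice.cp hσ.1 _ _ _).mul ?_
    unfold actAC
    exact Nice.sum _ fun q _ => (Nice.cp (hΩ x).1 _ _ _).mul (Nice.const _)
  have key := Complex.HadamardThreeLines.norm_le_interp_of_mem_verticalClosedStrip₀₁' h
    (z := (p : ℂ)) (a := N) (b := c * N) (by
      simp [Complex.HadamardThreeLines.verticalClosedStrip, hp0.le, hp1.le])
    nice.1.diffContOnCl (by
      obtain ⟨D, hD⟩ := nice.2
      refine ⟨D, ?_⟩
      rintro _ ⟨z, hz, rfl⟩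
      exact hD z hz.1 hz.2) ?_ ?_
  · simp only [Complex.ofReal_re] at key
    refine key.trans (le_of_eq ?_)
    rw [Real.mul_rpow hc hN0]
    rcases hN0.eq_or_lt with h0 | h0
    · rw [← h0, Real.zero_rpow (by linarith)]; simp
    · rw [mul_left_comm, ← Real.rpow_add h0]; simp
  · intro z hz
    have hz : z.re = 0 := hz
    have r1 : (((1/2 : ℝ) : ℂ) * z).re = 0 := by simp [hz]
    have r2 : (((-(1/2) : ℝ) : ℂ) * z).re = 0 := by simp [hz]
    have := endpoint_zero m hm hm1 n hn hn1
      (fun y => actC (cp τ ((-(1/2) : ℝ) * z))ᴴ (actAB (cp (κ y) ((1/2 : ℝ) * z))ᴴ (φ y)))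
      (fun x => actB (cp σ ((-(1/2) : ℝ) * z)) (actAC (cp (Ω x) ((1/2 : ℝ) * z)) (χ x)))
    simp only [nsq_actC_of _ (cp_imag'' hτ.1 _ r2), nsq_actAB_of _ (cp_imag'' (hκ _).1 _ r1),
      nsq_actB_of _ (cp_imag' hσ.1 _ r2), nsq_actAC_of _ (cp_imag' (hΩ _).1 _ r1)] at this
    simp only [hh, ip_actAB, ip_actC]
    exact this
  · intro z hz
    have hz : z.re = 1 := hz
    set w : ℂ := z - 1 with hw
    have r1 : (((1/2 : ℝ) : ℂ) * w).re = 0 := by simp [hz, hw]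
    have r2 : (((-(1/2) : ℝ) : ℂ) * w).re = 0 := by simp [hz, hw]
    have d1 : ((1/2 : ℝ) : ℂ) * z = ((1/2 : ℝ) : ℂ) * w + (1/2) := by rw [hw]; push_cast; ring
    have d2 : ((-(1/2) : ℝ) : ℂ) * z = ((-(1/2) : ℝ) : ℂ) * w + (-(1/2)) := by
      rw [hw]; push_cast; ring
    have d3 : ((1/2 : ℝ) : ℂ) * z = (1/2) + ((1/2 : ℝ) : ℂ) * w := by rw [hw]; push_cast; ring
    have d4 : ((-(1/2) : ℝ) : ℂ) * z = (-(1/2)) + ((-(1/2) : ℝ) : ℂ) * w := by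
      rw [hw]; push_cast; ring
    have hst : (star (1/2 : ℂ)) = 1/2 := by
      apply Complex.ext <;> simp
    have hst' : (star (-(1/2) : ℂ)) = -(1/2) := by rw [star_neg, hst]
    have := endpoint_one (fun y => ((1 : Matrix A A ℂ) ⊗ₖ cp σ (-(1/2))) * cp (κ y) (1/2))
      (fun x => ((1 : Matrix A A ℂ) ⊗ₖ cp τ (-(1/2))) * cp (Ω x) (1/2))
      (fun y x => n y * m x) c hc hG (cond_isometry κ hκ σ hσ hs) (cond_isometry Ω hΩ τ hτ ht)
      (fun y => actC (cp τ ((-(1/2) : ℝ) * w))ᴴ (actAB (cp (κ y) ((1/2 : ℝ) * w))ᴴ (φ y)))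
      (fun x => actB (cp σ ((-(1/2) : ℝ) * w)) (actAC (cp (Ω x) ((1/2 : ℝ) * w)) (χ x)))
    simp only [nsq_actC_of _ (cp_imag'' hτ.1 _ r2), nsq_actAB_of _ (cp_imag'' (hκ _).1 _ r1),
      nsq_actB_of _ (cp_imag' hσ.1 _ r2), nsq_actAC_of _ (cp_imag' (hΩ _).1 _ r1)] at this
    refine le_trans (le_of_eq ?_) this
    rw [hh]
    congr 1
    refine Finset.sum_congr rfl fun y _ => Finset.sum_congr rfl fun x _ => ?_
    have t1 : actAB (cp (κ y) ((1/2 : ℝ) * z)) = fun v : A → B → C → ℂ =>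
        actAB (cp (κ y) ((1/2 : ℝ) * w)) (actAB (cp (κ y) (1/2)) v) := by
      refine funext fun v => ?_; rw [d1, ← cp_mul (hκ y).1, actAB_mul]
    have t2 : actC (cp τ ((-(1/2) : ℝ) * z)) = fun v : A → B → C → ℂ =>
        actC (cp τ ((-(1/2) : ℝ) * w)) (actC (cp τ (-(1/2))) v) := by
      refine funext fun v => ?_; rw [d2, ← cp_mul hτ.1, actC_mul]
    have t3 : actB (cp σ ((-(1/2) : ℝ) * z)) = fun v : A → B → C → ℂ =>
        actB (cp σ (-(1/2))) (actB (cp σ ((-(1/2) : ℝ) * w)) v) := by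
      refine funext fun v => ?_; rw [d4, ← cp_mul hσ.1, actB_mul]
    have t4 : actAC (cp (Ω x) ((1/2 : ℝ) * z)) = fun v : A → B → C → ℂ =>
        actAC (cp (Ω x) (1/2)) (actAC (cp (Ω x) ((1/2 : ℝ) * w)) v) := by
      refine funext fun v => ?_; rw [d3, ← cp_mul (hΩ x).1, actAC_mul]
    rw [t1, t2, t3, t4]
    dsimp only
    rw [ip_actAB, actAB_actC, ip_actC, ip_actAB, cp_star (hκ y).1 (1/2), hst]
    rw [actAB_mul, actAB_kron, actAC_mul, actAC_kron]
    rw [← hst', ← cp_star hσ.1 (-(1/2)), ← ip_actB, hst']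
    congr 1
    rw [← actA_actC, ← actB_actC, actA_actB, ← actAC_actB]
    rw [cp_star hσ.1, hst']

lemma interp_main (κ : Y → Matrix (A × B) (A × B) ℂ) (hκ : ∀ y, (κ y).PosDef)
    (Ω : X → Matrix (A × C) (A × C) ℂ) (hΩ : ∀ x, (Ω x).PosDef)
    (σ : Matrix B B ℂ) (hσ : σ.PosDef) (hs : ∀ b b', σ b b' = ∑ y, ∑ a, κ y (a, b) (a, b'))
    (τ : Matrix C C ℂ) (hτ : τ.PosDef) (ht : ∀ b b', τ b b' = ∑ x, ∑ a, Ω x (a, b) (a, b'))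
    (m : X → Matrix A A ℂ) (hm : ∀ x, (m x).IsHermitian)
    (hm1 : ∑ x, m x * m x = 1) (n : Y → Matrix A A ℂ) (hn : ∀ x, (n x).IsHermitian)
    (hn1 : ∑ x, n x * n x = 1) (c : ℝ) (hc : 0 ≤ c)
    (hG : ∀ y x (ξ η : A → ℂ), ‖∑ a, ∑ a', ξ a * (n y * m x) a a' * η a'‖ ≤
      c * (√(∑ a, ‖ξ a‖ ^ 2) * √(∑ a, ‖η a‖ ^ 2)))
    (p : ℝ) (hp0 : 0 < p) (hp1 : p < 1) (ψ : A → B → C → ℂ) :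
    (∑ x, ip (actA (m x) ψ) (actB (cp σ (-p)) (actAC (cp (Ω x) p) (actA (m x) ψ)))).re ≤
      (c ^ p) ^ 2 *
      (∑ y, ip (actA (n y) ψ) (actC (cp τ p) (actAB (cp (κ y) (-p)) (actA (n y) ψ)))).re := by
  have hreal : ∀ t : ℝ, star (t : ℂ) = t := fun t => Complex.conj_ofReal t
  have hst : star (((1/2 : ℝ) : ℂ) * (p : ℂ)) = ((1/2 : ℝ) : ℂ) * p := by
    rw [← Complex.ofReal_mul, hreal]
  have hst' : star (((-(1/2) : ℝ) : ℂ) * (p : ℂ)) = ((-(1/2) : ℝ) : ℂ) * p := by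
    rw [← Complex.ofReal_mul, hreal]
  have a1 : ((1/2 : ℝ) : ℂ) * p + ((1/2 : ℝ) : ℂ) * p = p := by push_cast; ring
  have a2 : ((-(1/2) : ℝ) : ℂ) * p + ((-(1/2) : ℝ) : ℂ) * p = -p := by push_cast; ring
  have a3 : ((1/2 : ℝ) : ℂ) * p + ((-(1/2) : ℝ) : ℂ) * p = 0 := by push_cast; ring
  have a4 : ((-(1/2) : ℝ) : ℂ) * p + ((1/2 : ℝ) : ℂ) * p = 0 := by push_cast; ring
  set χ : X → A → B → C → ℂ := fun x =>
    actAC (cp (Ω x) ((1/2 : ℝ) * p)) (actB (cp σ ((-(1/2) : ℝ) * p)) (actA (m x) ψ)) with hχ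
  set φ : Y → A → B → C → ℂ := fun y =>
    actAB (cp (κ y) ((-(1/2) : ℝ) * p)) (actC (cp τ ((1/2 : ℝ) * p)) (actA (n y) ψ)) with hφ
  have key := interp_bound κ hκ Ω hΩ σ hσ hs τ hτ ht m hm hm1 n hn hn1 c hc hG p hp0 hp1 φ χ
  set f := ∑ x, ip (actA (m x) ψ) (actB (cp σ (-p)) (actAC (cp (Ω x) p) (actA (m x) ψ))) with hf
  set g := ∑ y, ip (actA (n y) ψ) (actC (cp τ p) (actAB (cp (κ y) (-p)) (actA (n y) ψ))) with hg
  have sB : ∀ φ χ : A → B → C → ℂ, ip (actB (cp σ ((-(1/2) : ℝ) * p)) φ) χ =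
      ip φ (actB (cp σ ((-(1/2) : ℝ) * p)) χ) := fun φ χ => by rw [ip_actB, cp_star hσ.1, hst']
  have sC : ∀ φ χ : A → B → C → ℂ, ip (actC (cp τ ((1/2 : ℝ) * p)) φ) χ =
      ip φ (actC (cp τ ((1/2 : ℝ) * p)) χ) := fun φ χ => by rw [ip_actC, cp_star hτ.1, hst]
  have sAC : ∀ x, ∀ φ χ : A → B → C → ℂ, ip (actAC (cp (Ω x) ((1/2 : ℝ) * p)) φ) χ =
      ip φ (actAC (cp (Ω x) ((1/2 : ℝ) * p)) χ) := fun x φ χ => by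
    rw [ip_actAC, cp_star (hΩ x).1, hst]
  have sAB : ∀ y, ∀ φ χ : A → B → C → ℂ, ip (actAB (cp (κ y) ((-(1/2) : ℝ) * p)) φ) χ =
      ip φ (actAB (cp (κ y) ((-(1/2) : ℝ) * p)) χ) := fun x φ χ => by
    rw [ip_actAB, cp_star (hκ x).1, hst']
  have f1 : f = ((∑ x, nsq (χ x) : ℝ) : ℂ) := by
    rw [Complex.ofReal_sum, hf]
    refine Finset.sum_congr rfl fun x _ => ?_
    rw [← ip_self, hχ]
    dsimp only
    rw [sAC, ← actAC_mul, cp_mul (hΩ x).1, a1, sB, actAC_actB, ← actB_mul, cp_mul hσ.1, a2]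
  have g1 : g = ((∑ y, nsq (φ y) : ℝ) : ℂ) := by
    rw [Complex.ofReal_sum, hg]
    refine Finset.sum_congr rfl fun y _ => ?_
    rw [← ip_self, hφ]
    dsimp only
    rw [sAB, ← actAB_mul, cp_mul (hκ y).1, a2, sC, actAB_actC, ← actC_mul, cp_mul hτ.1, a1]
  have h1 : (∑ y, ∑ x, ip (φ y) (actAB (cp (κ y) ((1/2 : ℝ) * p)) (actC (cp τ ((-(1/2) : ℝ) * p))
      (actA (n y * m x) (actB (cp σ ((-(1/2) : ℝ) * p))
        (actAC (cp (Ω x) ((1/2 : ℝ) * p)) (χ x))))))) = f := by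
    rw [Finset.sum_comm, hf]
    refine Finset.sum_congr rfl fun x _ => ?_
    have e : ∀ y, ip (φ y) (actAB (cp (κ y) ((1/2 : ℝ) * p)) (actC (cp τ ((-(1/2) : ℝ) * p))
      (actA (n y * m x) (actB (cp σ ((-(1/2) : ℝ) * p))
        (actAC (cp (Ω x) ((1/2 : ℝ) * p)) (χ x)))))) =
        ip (actA (n y * n y) ψ) (actA (m x)
          (actB (cp σ (-p)) (actAC (cp (Ω x) p) (actA (m x) ψ)))) := by
      intro y
      rw [hφ, hχ]
      dsimp only
      rw [sAB, ← actAB_mul, cp_mul (hκ y).1, a4, cp_zero (hκ y).1, actAB_one, sC, ← actC_mul,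
        cp_mul hτ.1, a3, cp_zero hτ.1, actC_one, ← actAC_mul, cp_mul (hΩ x).1, a1, actAC_actB,
        ← actB_mul, cp_mul hσ.1, a2, actA_mul, ip_actA, (hn y).eq, ← actA_mul]
    simp only [e]
    rw [← ip_sum_left, ← actA_sum, hn1, actA_one, ip_actA, (hm x).eq]
  rw [h1] at key
  have F0 : 0 ≤ ∑ x, nsq (χ x) := Finset.sum_nonneg fun _ _ => nsq_nonneg _
  have G0 : 0 ≤ ∑ y, nsq (φ y) := Finset.sum_nonneg fun _ _ => nsq_nonneg _
  rw [f1, Complex.norm_real, Real.norm_of_nonneg F0] at key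
  rw [f1, g1, Complex.ofReal_re, Complex.ofReal_re]
  set F := ∑ x, nsq (χ x)
  set G := ∑ y, nsq (φ y)
  have hcp : 0 ≤ c ^ p := Real.rpow_nonneg hc p
  have k1 : √F * √F ≤ (c ^ p * √G) * √F := by
    rw [Real.mul_self_sqrt F0]; linarith [key]
  rcases (Real.sqrt_nonneg F).eq_or_lt with h0 | h0
  · have : F = 0 := by rw [← Real.mul_self_sqrt F0, ← h0]; simp
    rw [this]; positivity
  · have k2 := le_of_mul_le_mul_right k1 h0
    calc F = √F ^ 2 := (Real.sq_sqrt F0).symm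
      _ ≤ (c ^ p * √G) ^ 2 := by gcongr
      _ = _ := by rw [mul_pow, Real.sq_sqrt G0]

end Interp

open scoped Kronecker ComplexOrder
open Matrix

set_option linter.unusedSectionVars false
set_option linter.unusedSimpArgs false

section Minimax

lemma minimax_finite {E F : Type*} [AddCommGroup E] [Module ℝ E] [TopologicalSpace E]
    [AddCommGroup F] [Module ℝ F] (f : F →ₗ[ℝ] E →ₗ[ℝ] ℝ) (hf : ∀ s, Continuous (f s))
    (T : Set E) (hT : IsCompact T) (hTc : Convex ℝ T) (hTn : T.Nonempty)
    (S : Set F) (hSc : Convex ℝ S) (v : ℝ) (h : ∀ s ∈ S, ∃ t ∈ T, v ≤ f s t)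
    (u : Finset S) : ∃ t ∈ T, ∀ i ∈ u, v ≤ f (i : F) t := by
  classical
  let L : E →ₗ[ℝ] (u → ℝ) := LinearMap.pi fun i => f ((i : S) : F)
  have hL : Continuous L := continuous_pi fun i => hf _
  set K := L '' T with hK
  set O : Set (u → ℝ) := {y | ∀ i, v ≤ y i} with hO
  by_cases hd : Disjoint K O
  · exfalso
    have hOc : Convex ℝ O := by
      intro x hx y hy a b ha hb hab i
      have h1 := hx i
      have h2 := hy i
      simp only [Pi.add_apply, Pi.smul_apply, smul_eq_mul]
      have : v = a * v + b * v := by rw [← add_mul, hab, one_mul]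
      rw [this]
      gcongr
    have hOcl : IsClosed O := by
      have : O = ⋂ i, {y : u → ℝ | v ≤ y i} := by ext y; simp [hO]
      rw [this]
      exact isClosed_iInter fun i => isClosed_le continuous_const (continuous_apply i)
    obtain ⟨l, u1, v1, h1, h2, h3⟩ := geometric_hahn_banach_compact_closed (hTc.linear_image L)
      (hT.image hL) hOc hOcl hd
    set w : u → ℝ := fun i => l (Pi.single i 1) with hw
    have lform : ∀ y, l y = ∑ i, y i * w i := by
      intro y
      conv_lhs => rw [pi_eq_sum_univ' y, map_sum]
      refine Finset.sum_congr rfl fun i _ => ?_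
      rw [map_smul, smul_eq_mul, hw]
    have wnn : ∀ i, 0 ≤ w i := by
      intro i
      by_contra hneg
      push Not at hneg
      obtain ⟨r, hr⟩ : ∃ r : ℝ, 0 ≤ r ∧ l (fun _ => v) + r * w i ≤ v1 := by
        refine ⟨max 0 ((v1 - l (fun _ => v)) / w i), le_max_left _ _, ?_⟩
        have := mul_le_mul_of_nonpos_right (le_max_right 0 ((v1 - l (fun _ => v)) / w i)) hneg.le
        rw [div_mul_cancel₀ _ hneg.ne] at this
        linarith
      have hm : (fun _ => v) + r • (Pi.single i 1 : u → ℝ) ∈ O := by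
        intro j
        simp only [Pi.add_apply, Pi.smul_apply, smul_eq_mul]
        have : (0 : ℝ) ≤ (Pi.single i 1 : u → ℝ) j := by
          by_cases hij : j = i
          · subst hij; simp
          · simp [hij]
        have := mul_nonneg hr.1 this
        linarith
      have := h3 _ hm
      rw [map_add, map_smul, smul_eq_mul] at this
      have e : l (Pi.single i 1) = w i := rfl
      rw [e] at this
      linarith [hr.2]
    have hv := h3 (fun _ => v) (fun _ => le_rfl)
    obtain ⟨t0, ht0⟩ := hTn
    have hpos : 0 < ∑ i, w i := by
      refine (Finset.sum_nonneg fun i _ => wnn i).lt_of_ne fun h0 => ?_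
      have hz : ∀ i, w i = 0 := by
        intro i
        exact (Finset.sum_eq_zero_iff_of_nonneg (fun i _ => wnn i)).mp h0.symm i (Finset.mem_univ _)
      have a1 := h1 _ (Set.mem_image_of_mem L ht0)
      rw [lform] at hv a1
      simp only [hz, mul_zero, Finset.sum_const_zero] at hv a1
      linarith
    set Λ := ∑ i, w i with hΛ
    set s : F := ∑ i : u, (w i / Λ) • ((i : S) : F) with hs
    have hsS : s ∈ S := by
      refine hSc.sum_mem (fun i _ => div_nonneg (wnn i) hpos.le) ?_ (fun i _ => (i : S).2)
      rw [← Finset.sum_div, div_self hpos.ne']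
    obtain ⟨t, ht, hvt⟩ := h s hsS
    have hft : f s t = (∑ i, w i * f ((i : S) : F) t) / Λ := by
      rw [hs, map_sum, LinearMap.sum_apply, Finset.sum_div]
      refine Finset.sum_congr rfl fun i _ => ?_
      rw [map_smul, LinearMap.smul_apply, smul_eq_mul]; ring
    rw [hft, le_div_iff₀ hpos] at hvt
    have a1 := h1 _ (Set.mem_image_of_mem L ht)
    rw [lform] at a1 hv
    have e1 : ∑ i, L t i * w i = ∑ i, w i * f ((i : S) : F) t :=
      Finset.sum_congr rfl fun i _ => mul_comm _ _
    rw [e1] at a1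
    rw [← Finset.mul_sum] at hv
    linarith
  · rw [Set.not_disjoint_iff] at hd
    obtain ⟨_, ⟨t, ht, rfl⟩, hy⟩ := hd
    exact ⟨t, ht, fun i hi => hy ⟨i, hi⟩⟩

lemma minimax {E F : Type*} [AddCommGroup E] [Module ℝ E] [TopologicalSpace E]
    [AddCommGroup F] [Module ℝ F] (f : F →ₗ[ℝ] E →ₗ[ℝ] ℝ) (hf : ∀ s, Continuous (f s))
    (T : Set E) (hT : IsCompact T) (hTc : Convex ℝ T) (hTn : T.Nonempty)
    (S : Set F) (hSc : Convex ℝ S) (v : ℝ) (h : ∀ s ∈ S, ∃ t ∈ T, v ≤ f s t) :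
    ∃ t ∈ T, ∀ s ∈ S, v ≤ f s t := by
  have := hT.inter_iInter_nonempty (fun s : S => {t | v ≤ f (s : F) t})
    (fun s => isClosed_le continuous_const (hf _)) (fun u => by
      obtain ⟨t, ht, hu⟩ := minimax_finite f hf T hT hTc hTn S hSc v h u
      exact ⟨t, ht, by simpa using fun a ha hu' => hu ⟨a, ha⟩ hu'⟩)
  obtain ⟨t, ht, hi⟩ := this
  refine ⟨t, ht, fun s hs => ?_⟩
  exact (Set.mem_iInter.mp hi) ⟨s, hs⟩

end Minimax

section TraceYoung
variable {n : Type*} [Fintype n] [DecidableEq n]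

lemma trace_doubly {W T : Matrix n n ℂ} (hW : W.IsHermitian) (hT : T.IsHermitian) :
    ∃ P : n → n → ℝ, (∀ i j, 0 ≤ P i j) ∧ (∀ i, ∑ j, P i j = 1) ∧ (∀ j, ∑ i, P i j = 1) ∧
      (W * T).trace.re = ∑ i, ∑ j, P i j * (hW.eigenvalues i * hT.eigenvalues j) := by
  set U := (hW.eigenvectorUnitary : Matrix n n ℂ) with hU
  set V := (hT.eigenvectorUnitary : Matrix n n ℂ) with hV
  set R := Uᴴ * V with hR
  have hUU : U * Uᴴ = 1 := eigU_mul_star hW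
  have hVV : V * Vᴴ = 1 := eigU_mul_star hT
  have hVV' : Vᴴ * V = 1 := eigU_star_mul hT
  have hUU' : Uᴴ * U = 1 := eigU_star_mul hW
  have r1 : R * Rᴴ = 1 := by
    rw [hR, conjTranspose_mul, conjTranspose_conjTranspose, Matrix.mul_assoc,
      ← Matrix.mul_assoc V, hVV, Matrix.one_mul, hUU']
  have r2 : Rᴴ * R = 1 := by
    rw [hR, conjTranspose_mul, conjTranspose_conjTranspose, Matrix.mul_assoc,
      ← Matrix.mul_assoc U, hUU, Matrix.one_mul, hVV']
  refine ⟨fun i j => ‖R i j‖ ^ 2, fun i j => by positivity, fun i => ?_, fun j => ?_, ?_⟩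
  · have := congrFun (congrFun r1 i) i
    rw [mul_apply, one_apply_eq] at this
    have e : ∀ j, R i j * Rᴴ j i = ((‖R i j‖ ^ 2 : ℝ) : ℂ) := fun j => by
      rw [conjTranspose_apply, mul_comm, star_mul_self_eq]
    simp only [e] at this
    exact_mod_cast this
  · have := congrFun (congrFun r2 j) j
    rw [mul_apply, one_apply_eq] at this
    have e : ∀ i, Rᴴ j i * R i j = ((‖R i j‖ ^ 2 : ℝ) : ℂ) := fun i => by
      rw [conjTranspose_apply, star_mul_self_eq]
    simp only [e] at this
    exact_mod_cast this
  · have e : (W * T).trace = (diagonal (fun i => ((hW.eigenvalues i : ℝ) : ℂ)) * R *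
        diagonal (fun i => ((hT.eigenvalues i : ℝ) : ℂ)) * Rᴴ).trace := by
      conv_lhs => rw [eig_decomp hW, eig_decomp hT]
      rw [← hU, ← hV, hR, conjTranspose_mul, conjTranspose_conjTranspose]
      rw [Matrix.mul_assoc U, Matrix.mul_assoc U, trace_mul_comm U]
      simp only [Matrix.mul_assoc]
    have e2 : (diagonal (fun i => ((hW.eigenvalues i : ℝ) : ℂ)) * R *
        diagonal (fun i => ((hT.eigenvalues i : ℝ) : ℂ)) * Rᴴ).trace =
        ((∑ i, ∑ j, ‖R i j‖ ^ 2 * (hW.eigenvalues i * hT.eigenvalues j) : ℝ) : ℂ) := by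
      simp only [trace, diag_apply, Matrix.mul_apply (M := _ * diagonal _), mul_diagonal,
        diagonal_mul, conjTranspose_apply]
      push_cast
      refine Finset.sum_congr rfl fun i _ => Finset.sum_congr rfl fun j _ => ?_
      have := star_mul_self_eq (R i j)
      push_cast at this
      rw [← this]; ring
    rw [e, e2, Complex.ofReal_re]

lemma trace_young {W T : Matrix n n ℂ} (hW : W.IsHermitian) (hT : T.IsHermitian) (a b : ℝ → ℝ)
    (h : ∀ i j, hW.eigenvalues i * hT.eigenvalues j ≤ a (hW.eigenvalues i) + b (hT.eigenvalues j)) :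
    (W * T).trace.re ≤ ∑ i, a (hW.eigenvalues i) + ∑ j, b (hT.eigenvalues j) := by
  obtain ⟨P, h0, h1, h2, h3⟩ := trace_doubly hW hT
  rw [h3]
  calc _ ≤ ∑ i, ∑ j, P i j * (a (hW.eigenvalues i) + b (hT.eigenvalues j)) := by
        gcongr with i _ j _
        · exact h0 i j
        · exact h i j
    _ = ∑ i, ∑ j, P i j * a (hW.eigenvalues i) + ∑ i, ∑ j, P i j * b (hT.eigenvalues j) := by
        simp only [mul_add, Finset.sum_add_distrib]
    _ = _ := by
        congr 1
        · simp only [← Finset.sum_mul, h1, one_mul]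
        · rw [Finset.sum_comm]; simp only [← Finset.sum_mul, h2, one_mul]

lemma trace_young' {W T : Matrix n n ℂ} (hW : W.IsHermitian) (hT : T.IsHermitian) (a b : ℝ → ℝ)
    (h : ∀ i j, a (hW.eigenvalues i) + b (hT.eigenvalues j) ≤ hW.eigenvalues i * hT.eigenvalues j) :
    ∑ i, a (hW.eigenvalues i) + ∑ j, b (hT.eigenvalues j) ≤ (W * T).trace.re := by
  obtain ⟨P, h0, h1, h2, h3⟩ := trace_doubly hW hT
  rw [h3]
  calc _ = ∑ i, ∑ j, P i j * a (hW.eigenvalues i) + ∑ i, ∑ j, P i j * b (hT.eigenvalues j) := by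
        congr 1
        · simp only [← Finset.sum_mul, h1, one_mul]
        · rw [Finset.sum_comm]; simp only [← Finset.sum_mul, h2, one_mul]
    _ = ∑ i, ∑ j, P i j * (a (hW.eigenvalues i) + b (hT.eigenvalues j)) := by
        simp only [mul_add, Finset.sum_add_distrib]
    _ ≤ _ := by
        gcongr with i _ j _
        · exact h0 i j
        · exact h i j

end TraceYoung

open scoped Kronecker ComplexOrder
open Matrix

set_option linter.unusedSectionVars false
set_option linter.unusedSimpArgs false

section Sets
variable {n X : Type*} [Fintype n] [DecidableEq n] [Fintype X]

/-- trace of a real power -/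
noncomputable def tp (r : ℝ) (K : Matrix n n ℂ) : ℝ :=
  (mfc (fun x => ((x ^ r : ℝ) : ℂ)) K).trace.re

lemma tp_eq {K : Matrix n n ℂ} (hK : K.IsHermitian) (r : ℝ) :
    tp r K = ∑ i, (hK.eigenvalues i) ^ r := by
  rw [tp, mfc_trace hK, ← Complex.ofReal_sum, Complex.ofReal_re]

lemma tp_nonneg {K : Matrix n n ℂ} (hK : K.PosSemidef) (r : ℝ) : 0 ≤ tp r K := by
  rw [tp_eq hK.1]
  exact Finset.sum_nonneg fun i _ => Real.rpow_nonneg (hK.eigenvalues_nonneg i) _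

lemma trace_mfc_re {K : Matrix n n ℂ} (hK : K.IsHermitian) (g : ℝ → ℝ) :
    (mfc (fun x => (g x : ℂ)) K).trace.re = ∑ i, g (hK.eigenvalues i) := by
  rw [mfc_trace hK, ← Complex.ofReal_sum, Complex.ofReal_re]

lemma tp_mfc {K : Matrix n n ℂ} (hK : K.IsHermitian) (g : ℝ → ℝ) (r : ℝ) :
    tp r (mfc (fun x => (g x : ℂ)) K) = ∑ i, (g (hK.eigenvalues i)) ^ r := by
  rw [tp, mfc_comp hK, trace_mfc_re hK (fun x => (g x) ^ r)]

lemma trace_mul_mfc {K : Matrix n n ℂ} (hK : K.IsHermitian) (g : ℝ → ℝ) :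
    (K * mfc (fun x => (g x : ℂ)) K).trace.re = ∑ i, hK.eigenvalues i * g (hK.eigenvalues i) := by
  have : K * mfc (fun x => (g x : ℂ)) K = mfc (fun x => ((x * g x : ℝ) : ℂ)) K := by
    conv_lhs => lhs; rw [← mfc_id hK]
    rw [mfc_mul hK]; push_cast; rfl
  rw [this, trace_mfc_re hK (fun x => x * g x)]

lemma trace_mfc_mul {K : Matrix n n ℂ} (hK : K.IsHermitian) (g : ℝ → ℝ) :
    (mfc (fun x => (g x : ℂ)) K * K).trace.re = ∑ i, hK.eigenvalues i * g (hK.eigenvalues i) := by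
  rw [trace_mul_comm, trace_mul_mfc hK]

/-- unit ball of the `1/p` norm, dual description -/
def Tset (n X : Type*) [Fintype n] [DecidableEq n] [Fintype X] (p : ℝ) :
    Set (X → Matrix n n ℂ) :=
  {t | (∀ x, (t x).PosSemidef) ∧ ∀ w : X → Matrix n n ℂ, (∀ x, (w x).PosSemidef) →
    ∑ x, (w x * t x).trace.re ≤ (1 - p) * ∑ x, tp (1 / (1 - p)) (w x) + p}

lemma Tset_mem_of {p : ℝ} (hp0 : 0 < p) (hp1 : p < 1) {t : X → Matrix n n ℂ}
    (ht : ∀ x, (t x).PosSemidef) (h : ∑ x, tp (1 / p) (t x) ≤ 1) : t ∈ Tset n X p := by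
  refine ⟨ht, fun w hw => ?_⟩
  have hc : (1 / (1 - p)).HolderConjugate (1 / p) := by
    rw [Real.holderConjugate_iff]
    constructor
    · rw [lt_div_iff₀] <;> linarith
    · simp
  have : ∀ x, (w x * t x).trace.re ≤ (1 - p) * tp (1 / (1 - p)) (w x) + p * tp (1 / p) (t x) := by
    intro x
    have := trace_young (hw x).1 (ht x).1 (fun l => (1 - p) * l ^ (1 / (1 - p)))
      (fun l => p * l ^ (1 / p)) (fun i j => by
        have := Real.young_inequality_of_nonneg ((hw x).eigenvalues_nonneg i)
          ((ht x).eigenvalues_nonneg j) hc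
        refine this.trans (le_of_eq ?_)
        field_simp)
    rwa [← Finset.mul_sum, ← Finset.mul_sum, ← tp_eq, ← tp_eq] at this
  calc _ ≤ ∑ x, ((1 - p) * tp (1 / (1 - p)) (w x) + p * tp (1 / p) (t x)) :=
        Finset.sum_le_sum fun x _ => this x
    _ = (1 - p) * ∑ x, tp (1 / (1 - p)) (w x) + p * ∑ x, tp (1 / p) (t x) := by
        rw [Finset.sum_add_distrib, Finset.mul_sum, Finset.mul_sum]
    _ ≤ (1 - p) * ∑ x, tp (1 / (1 - p)) (w x) + p * 1 := by gcongr
    _ = _ := by rw [mul_one]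

lemma Tset_tp {p : ℝ} (hp0 : 0 < p) (hp1 : p < 1) {t : X → Matrix n n ℂ}
    (ht : t ∈ Tset n X p) : ∑ x, tp (1 / p) (t x) ≤ 1 := by
  have := ht.2 (fun x => mfc (fun l => ((l ^ (1 / p - 1) : ℝ) : ℂ)) (t x))
    (fun x => mfc_posSemidef (ht.1 x) _ (fun l hl => Real.rpow_nonneg hl _))
  have hq : 1 < 1 / p := by rw [lt_div_iff₀ hp0]; linarith
  have e1 : ∀ x, (mfc (fun l => ((l ^ (1 / p - 1) : ℝ) : ℂ)) (t x) * t x).trace.re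
      = tp (1 / p) (t x) := by
    intro x
    rw [trace_mfc_mul (ht.1 x).1 (fun l => l ^ (1 / p - 1)), tp_eq (ht.1 x).1]
    refine Finset.sum_congr rfl fun i _ => ?_
    have h0 := (ht.1 x).eigenvalues_nonneg i
    have := Real.rpow_add_of_nonneg h0 zero_le_one (by linarith : (0 : ℝ) ≤ 1 / p - 1)
    rw [Real.rpow_one] at this
    rw [← this]; congr 1; ring
  have e2 : ∀ x, tp (1 / (1 - p)) (mfc (fun l => ((l ^ (1 / p - 1) : ℝ) : ℂ)) (t x))
      = tp (1 / p) (t x) := by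
    intro x
    rw [tp_mfc (ht.1 x).1 (fun l => l ^ (1 / p - 1)), tp_eq (ht.1 x).1]
    refine Finset.sum_congr rfl fun i _ => ?_
    rw [← Real.rpow_mul ((ht.1 x).eigenvalues_nonneg i)]
    congr 1
    have : 1 - p ≠ 0 := by linarith
    field_simp
  simp only [e1, e2] at this
  nlinarith

lemma Tset_convex (p : ℝ) : Convex ℝ (Tset n X p) := by
  intro s hs t ht a b ha hb hab
  refine ⟨fun x => ?_, fun w hw => ?_⟩
  · have h1 : ((a • s + b • t) x) = (a : ℝ) • s x + (b : ℝ) • t x := rfl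
    rw [h1]
    exact ((hs.1 x).smul ha).add ((ht.1 x).smul hb)
  · have h1 := hs.2 w hw
    have h2 := ht.2 w hw
    have e : ∑ x, (w x * (a • s + b • t) x).trace.re =
        a * ∑ x, (w x * s x).trace.re + b * ∑ x, (w x * t x).trace.re := by
      rw [Finset.mul_sum, Finset.mul_sum, ← Finset.sum_add_distrib]
      refine Finset.sum_congr rfl fun x _ => ?_
      simp [Matrix.mul_add]
    rw [e]
    set R := (1 - p) * ∑ x, tp (1 / (1 - p)) (w x) + p
    calc _ ≤ a * R + b * R := by gcongr
      _ = R := by rw [← add_mul, hab, one_mul]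

lemma posSemidef_closed : IsClosed {t : Matrix n n ℂ | t.PosSemidef} := by
  have : {t : Matrix n n ℂ | t.PosSemidef} =
      {t | tᴴ = t} ∩ ⋂ v : n → ℂ, {t | 0 ≤ star v ⬝ᵥ (t *ᵥ v)} := by
    ext t
    simp [posSemidef_iff_dotProduct_mulVec, IsHermitian]
  rw [this]
  refine IsClosed.inter (isClosed_eq (by fun_prop) (by fun_prop)) (isClosed_iInter fun v => ?_)
  refine isClosed_le continuous_const ?_
  fun_prop

lemma entry_bound {t : Matrix n n ℂ} (ht : t.IsHermitian) (h0 : ∀ i, 0 ≤ ht.eigenvalues i)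
    (h1 : ∀ i, ht.eigenvalues i ≤ 1) (i j : n) : ‖t i j‖ ≤ Fintype.card n := by
  have e : t i j = ∑ k, (ht.eigenvectorUnitary : Matrix n n ℂ) i k *
      (ht.eigenvalues k : ℂ) * ((ht.eigenvectorUnitary : Matrix n n ℂ)ᴴ) k j := by
    conv_lhs => rw [eig_decomp ht, mul_apply]
    simp only [mul_diagonal]
  rw [e]
  refine (norm_sum_le _ _).trans ?_
  have : ∀ k, ‖(ht.eigenvectorUnitary : Matrix n n ℂ) i k *
      (ht.eigenvalues k : ℂ) * ((ht.eigenvectorUnitary : Matrix n n ℂ)ᴴ) k j‖ ≤ 1 := by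
    intro k
    rw [norm_mul, norm_mul, conjTranspose_apply, norm_star, Complex.norm_real,
      Real.norm_of_nonneg (h0 k)]
    have a := entry_norm_bound_of_unitary ht.eigenvectorUnitary.2 i k
    have b := entry_norm_bound_of_unitary ht.eigenvectorUnitary.2 j k
    have c : ‖(ht.eigenvectorUnitary : Matrix n n ℂ) i k‖ * ht.eigenvalues k ≤ 1 * 1 := by
      gcongr
      · exact h0 k
      · exact h1 k
    calc _ ≤ (1 * 1) * (1 : ℝ) := by gcongr
      _ = 1 := by norm_num
  refine (Finset.sum_le_sum fun k _ => this k).trans ?_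
  simp

lemma Tset_compact {p : ℝ} (hp0 : 0 < p) (hp1 : p < 1) : IsCompact (Tset n X p) := by
  have hbox : IsCompact {t : X → n → n → ℂ | ∀ x, t x ∈ {u : n → n → ℂ | ∀ i, u i ∈
      {r : n → ℂ | ∀ j, r j ∈ Metric.closedBall (0 : ℂ) (Fintype.card n)}}} :=
    isCompact_pi_infinite fun x => isCompact_pi_infinite fun i => isCompact_pi_infinite fun j =>
      isCompact_closedBall _ _
  refine IsCompact.of_isClosed_subset (s := (show Set (X → Matrix n n ℂ) from _)) hbox ?_ ?_
  · have : Tset n X p = (⋂ x, {t : X → Matrix n n ℂ | (t x).PosSemidef}) ∩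
        ⋂ w : X → Matrix n n ℂ, ⋂ (_ : ∀ x, (w x).PosSemidef),
          {t : X → Matrix n n ℂ | ∑ x, (w x * t x).trace.re ≤
            (1 - p) * ∑ x, tp (1 / (1 - p)) (w x) + p} := by
      ext t; simp [Tset]
    rw [this]
    refine IsClosed.inter (isClosed_iInter fun x => ?_) (isClosed_iInter fun w =>
      isClosed_iInter fun _ => isClosed_le ?_ continuous_const)
    · exact posSemidef_closed.preimage (f := fun t : X → Matrix n n ℂ => t x) (continuous_apply x)
    · refine continuous_finsetSum _ fun x _ => Complex.continuous_re.comp ?_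
      fun_prop
  · intro t ht x i j
    rw [mem_closedBall_zero_iff]
    have h := Tset_tp hp0 hp1 ht
    refine entry_bound (ht.1 x).1 (ht.1 x).eigenvalues_nonneg (fun k => ?_) i j
    by_contra hk
    push Not at hk
    have a : 1 < (ht.1 x).1.eigenvalues k ^ (1 / p) := Real.one_lt_rpow hk (by positivity)
    have b : (ht.1 x).1.eigenvalues k ^ (1 / p) ≤ tp (1 / p) (t x) := by
      rw [tp_eq (ht.1 x).1]
      exact Finset.single_le_sum (f := fun i => (ht.1 x).1.eigenvalues i ^ (1 / p))
        (fun i _ => Real.rpow_nonneg ((ht.1 x).eigenvalues_nonneg i) _) (Finset.mem_univ k)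
    have c : tp (1 / p) (t x) ≤ ∑ x, tp (1 / p) (t x) :=
      Finset.single_le_sum (f := fun x => tp (1 / p) (t x))
        (fun x _ => tp_nonneg (ht.1 x) _) (Finset.mem_univ x)
    linarith

/-- the dual of the states -/
def Sset (n : Type*) [Fintype n] [DecidableEq n] (p : ℝ) : Set (Matrix n n ℂ) :=
  {s | s.PosDef ∧ ∀ w : Matrix n n ℂ, w.PosSemidef →
    (1 + p) * tp (1 / (1 + p)) w - p ≤ (w * s).trace.re}

lemma Sset_mem_of {p : ℝ} (hp0 : 0 < p) {s : Matrix n n ℂ} (hs : s.PosDef)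
    (h : tp (-(1 / p)) s ≤ 1) : s ∈ Sset n p := by
  refine ⟨hs, fun w hw => ?_⟩
  have := trace_young' hw.1 hs.1 (fun l => (1 + p) * l ^ (1 / (1 + p)))
      (fun l => (-p) * l ^ (-(1 / p))) (fun i j => by
        set l := hw.1.eigenvalues i
        set u := hs.1.eigenvalues j
        have hl : 0 ≤ l := hw.eigenvalues_nonneg i
        have hu : 0 < u := hs.eigenvalues_pos j
        have := Real.geom_mean_le_arith_mean2_weighted (w₁ := 1 / (1 + p)) (w₂ := p / (1 + p))
          (p₁ := l * u) (p₂ := u ^ (-(1 / p))) (by positivity) (by positivity) (by positivity)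
          (by positivity) (by field_simp)
        rw [Real.mul_rpow hl hu.le, ← Real.rpow_mul hu.le, mul_assoc, ← Real.rpow_add hu] at this
        have e : 1 / (1 + p) + -(1 / p) * (p / (1 + p)) = 0 := by field_simp; ring
        rw [e, Real.rpow_zero, mul_one] at this
        have h2 := mul_le_mul_of_nonneg_left this (by positivity : 0 ≤ 1 + p)
        have e2 : (1 + p) * (1 / (1 + p) * (l * u) + p / (1 + p) * u ^ (-(1 / p))) =
          l * u + p * u ^ (-(1 / p)) := by field_simp
        rw [e2] at h2
        linarith)
  rw [← Finset.mul_sum, ← Finset.mul_sum, ← tp_eq, ← tp_eq] at this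
  nlinarith

lemma Sset_tp {p : ℝ} (hp0 : 0 < p) {s : Matrix n n ℂ} (hs : s ∈ Sset n p) :
    tp (-(1 / p)) s ≤ 1 := by
  have := hs.2 (mfc (fun l => ((l ^ (-(1 / p) - 1) : ℝ) : ℂ)) s)
    (mfc_posSemidef hs.1.posSemidef _ (fun l hl => Real.rpow_nonneg hl _))
  have e1 : (mfc (fun l => ((l ^ (-(1 / p) - 1) : ℝ) : ℂ)) s * s).trace.re
      = tp (-(1 / p)) s := by
    rw [trace_mfc_mul hs.1.1 (fun l => l ^ (-(1 / p) - 1)), tp_eq hs.1.1]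
    refine Finset.sum_congr rfl fun i _ => ?_
    have h0 := hs.1.eigenvalues_pos i
    rw [Real.rpow_sub_one h0.ne']
    field_simp
  have e2 : tp (1 / (1 + p)) (mfc (fun l => ((l ^ (-(1 / p) - 1) : ℝ) : ℂ)) s)
      = tp (-(1 / p)) s := by
    rw [tp_mfc hs.1.1 (fun l => l ^ (-(1 / p) - 1)), tp_eq hs.1.1]
    refine Finset.sum_congr rfl fun i _ => ?_
    rw [← Real.rpow_mul (hs.1.eigenvalues_pos i).le]
    congr 1
    field_simp
    ring
  rw [e1, e2] at this
  nlinarith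

lemma Sset_convex (p : ℝ) : Convex ℝ (Sset n p) := by
  intro s hs t ht a b ha hb hab
  refine ⟨?_, fun w hw => ?_⟩
  · rcases ha.eq_or_lt with h | h
    · have : b = 1 := by linarith
      rw [← h, this]; simpa using ht.1
    · exact (hs.1.smul h).add_posSemidef (ht.1.posSemidef.smul hb)
  · have h1 := hs.2 w hw
    have h2 := ht.2 w hw
    have e : (w * (a • s + b • t)).trace.re = a * (w * s).trace.re + b * (w * t).trace.re := by
      simp [Matrix.mul_add]
    rw [e]
    set R := (1 + p) * tp (1 / (1 + p)) w - p
    calc R = a * R + b * R := by rw [← add_mul, hab, one_mul]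
      _ ≤ _ := by gcongr

end Sets

open scoped Kronecker ComplexOrder
open Matrix

set_option linter.unusedSectionVars false
set_option linter.unusedSimpArgs false

section Sides
variable {n X : Type*} [Fintype n] [DecidableEq n] [Fintype X]

lemma alpha_side {p : ℝ} (hp0 : 0 < p) (hp1 : p < 1) (W : X → Matrix n n ℂ)
    (hW : ∀ x, (W x).PosSemidef) :
    ∃ t ∈ Tset n X p, (∑ x, tp (1 / (1 - p)) (W x)) ^ (1 - p) ≤ ∑ x, (W x * t x).trace.re := by
  set Q := ∑ x, tp (1 / (1 - p)) (W x) with hQ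
  have hQ0 : 0 ≤ Q := Finset.sum_nonneg fun x _ => tp_nonneg (hW x) _
  have h1p : 0 < 1 - p := by linarith
  rcases hQ0.eq_or_lt with h | h
  · refine ⟨0, Tset_mem_of hp0 hp1 (fun x => PosSemidef.zero) ?_, ?_⟩
    · have : ∀ x : X, tp (1 / p) ((0 : X → Matrix n n ℂ) x) = 0 := by
        intro x
        have h0 : ((0 : X → Matrix n n ℂ) x).IsHermitian := isHermitian_zero
        rw [tp_eq h0]
        refine Finset.sum_eq_zero fun i _ => ?_
        have : h0.eigenvalues = 0 := h0.eigenvalues_eq_zero_iff.mpr rfl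
        rw [this, Pi.zero_apply, Real.zero_rpow (by positivity)]
      rw [Finset.sum_eq_zero fun x _ => this x]; exact zero_le_one
    · rw [← h, Real.zero_rpow h1p.ne']; simp
  · refine ⟨fun x => mfc (fun l => ((l ^ (p / (1 - p)) / Q ^ p : ℝ) : ℂ)) (W x),
      Tset_mem_of hp0 hp1 (fun x => mfc_posSemidef (hW x) _ fun l hl => by positivity) ?_, ?_⟩
    · have : ∀ x, tp (1 / p) (mfc (fun l => ((l ^ (p / (1 - p)) / Q ^ p : ℝ) : ℂ)) (W x)) =
          tp (1 / (1 - p)) (W x) / Q := by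
        intro x
        rw [tp_mfc (hW x).1 (fun l => l ^ (p / (1 - p)) / Q ^ p), tp_eq (hW x).1, Finset.sum_div]
        refine Finset.sum_congr rfl fun i _ => ?_
        have h0 := (hW x).eigenvalues_nonneg i
        rw [Real.div_rpow (by positivity) (by positivity), ← Real.rpow_mul h0, ← Real.rpow_mul hQ0]
        have e1 : p / (1 - p) * (1 / p) = 1 / (1 - p) := by field_simp
        have e2 : p * (1 / p) = 1 := by field_simp
        rw [e1, e2, Real.rpow_one]
      simp only [this]
      rw [← Finset.sum_div, ← hQ, div_self h.ne']
    · have : ∀ x, (W x * mfc (fun l => ((l ^ (p / (1 - p)) / Q ^ p : ℝ) : ℂ)) (W x)).trace.re =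
          tp (1 / (1 - p)) (W x) / Q ^ p := by
        intro x
        rw [trace_mul_mfc (hW x).1 (fun l => l ^ (p / (1 - p)) / Q ^ p), tp_eq (hW x).1,
          Finset.sum_div]
        refine Finset.sum_congr rfl fun i _ => ?_
        have h0 := (hW x).eigenvalues_nonneg i
        have := Real.rpow_add_of_nonneg h0 zero_le_one (by positivity : (0 : ℝ) ≤ p / (1 - p))
        rw [Real.rpow_one] at this
        rw [← mul_div_assoc, ← this]
        congr 2
        field_simp; ring
      simp only [this]
      rw [← Finset.sum_div, ← hQ, Real.rpow_sub h, Real.rpow_one]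

lemma beta_side [Nonempty n] [Nonempty X] {p : ℝ} (hp0 : 0 < p) (W : X → Matrix n n ℂ)
    (hW : ∀ x, (W x).PosSemidef) {δ : ℝ} (hδ : 0 < δ) :
    ∃ κ : X → Matrix n n ℂ, (∀ x, (κ x).PosDef) ∧ ∑ x, (κ x).trace = 1 ∧
      ∑ x, (W x * cp (κ x) (-p)).trace.re ≤
        (∑ x, ∑ i, ((hW x).1.eigenvalues i + δ) ^ (1 / (1 + p))) ^ (1 + p) := by
  set K := ∑ x, ∑ i, ((hW x).1.eigenvalues i + δ) ^ (1 / (1 + p)) with hK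
  have hpos : ∀ x i, 0 < (hW x).1.eigenvalues i + δ := fun x i => by
    have := (hW x).eigenvalues_nonneg i; linarith
  have hK0 : 0 < K := Finset.sum_pos (fun x _ => Finset.sum_pos (fun i _ =>
    Real.rpow_pos_of_pos (hpos x i) _) Finset.univ_nonempty) Finset.univ_nonempty
  have pd : ∀ x, (mfc (fun l => (((l + δ) ^ (1 / (1 + p)) / K : ℝ) : ℂ)) (W x)).PosDef :=
    fun x => mfc_posDef' (hW x).1 _ fun i => div_pos (Real.rpow_pos_of_pos (hpos x i) _) hK0
  refine ⟨fun x => mfc (fun l => (((l + δ) ^ (1 / (1 + p)) / K : ℝ) : ℂ)) (W x), pd, ?_, ?_⟩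
  · simp only [mfc_trace (hW _).1, ← Complex.ofReal_sum, ← Finset.sum_div]
    rw [← hK, div_self hK0.ne', Complex.ofReal_one]
  · have : ∀ x, (W x * cp (mfc (fun l => (((l + δ) ^ (1 / (1 + p)) / K : ℝ) : ℂ)) (W x))
        (-p)).trace.re ≤ ∑ i, ((hW x).1.eigenvalues i + δ) ^ (1 / (1 + p)) * K ^ p := by
      intro x
      have e := cp_real (pd x) (-p)
      rw [Complex.ofReal_neg] at e
      rw [e, mfc_comp (hW x).1, trace_mul_mfc (hW x).1
        (fun l => ((l + δ) ^ (1 / (1 + p)) / K) ^ (-p))]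
      refine Finset.sum_le_sum fun i _ => ?_
      have h0 := hpos x i
      set l := (hW x).1.eigenvalues i
      rw [Real.rpow_neg (by positivity), Real.div_rpow (by positivity) hK0.le, inv_div,
        ← Real.rpow_mul h0.le]
      rw [mul_div_assoc', div_le_iff₀ (by positivity)]
      have : (l + δ) ^ (1 / (1 + p)) * K ^ p * (l + δ) ^ (1 / (1 + p) * p) = (l + δ) * K ^ p := by
        have : (l + δ) ^ (1 / (1 + p)) * (l + δ) ^ (1 / (1 + p) * p) = l + δ := by
          rw [← Real.rpow_add h0]
          have : 1 / (1 + p) + 1 / (1 + p) * p = 1 := by field_simp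
          rw [this, Real.rpow_one]
        calc _ = ((l + δ) ^ (1 / (1 + p)) * (l + δ) ^ (1 / (1 + p) * p)) * K ^ p := by ring
          _ = _ := by rw [this]
      rw [this]
      gcongr
      linarith
    calc _ ≤ ∑ x, ∑ i, ((hW x).1.eigenvalues i + δ) ^ (1 / (1 + p)) * K ^ p :=
          Finset.sum_le_sum fun x _ => this x
      _ = K * K ^ p := by simp only [← Finset.sum_mul]; rw [← hK]
      _ = _ := by rw [Real.rpow_add hK0, Real.rpow_one]

/-- the `Ω` side -/
lemma omega_side [Nonempty n] [Nonempty X] {p : ℝ} (hp0 : 0 < p) (t : X → Matrix n n ℂ)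
    (ht : ∀ x, (t x).PosSemidef) {δ : ℝ} (hδ : 0 < δ) :
    ∃ κ : X → Matrix n n ℂ, (∀ x, (κ x).PosDef) ∧ ∑ x, (κ x).trace = 1 ∧
      ∀ x, ((((∑ x, ∑ i, ((ht x).1.eigenvalues i + δ) ^ (1 / p)) ^ p : ℝ) : ℂ)) • cp (κ x) p =
         t x + (δ : ℂ) • 1 := by
  set K := ∑ x, ∑ i, ((ht x).1.eigenvalues i + δ) ^ (1 / p) with hK
  have hpos : ∀ x i, 0 < (ht x).1.eigenvalues i + δ := fun x i => by
    have := (ht x).eigenvalues_nonneg i; linarith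
  have hK0 : 0 < K := Finset.sum_pos (fun x _ => Finset.sum_pos (fun i _ =>
    Real.rpow_pos_of_pos (hpos x i) _) Finset.univ_nonempty) Finset.univ_nonempty
  have pd : ∀ x, (mfc (fun l => (((l + δ) ^ (1 / p) / K : ℝ) : ℂ)) (t x)).PosDef :=
    fun x => mfc_posDef' (ht x).1 _ fun i => div_pos (Real.rpow_pos_of_pos (hpos x i) _) hK0
  refine ⟨fun x => mfc (fun l => (((l + δ) ^ (1 / p) / K : ℝ) : ℂ)) (t x), pd, ?_, ?_⟩
  · simp only [mfc_trace (ht _).1, ← Complex.ofReal_sum, ← Finset.sum_div]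
    rw [← hK, div_self hK0.ne', Complex.ofReal_one]
  · intro x
    rw [cp_real (pd x) p, mfc_comp (ht x).1, ← mfc_smul (ht x).1]
    have e : t x + (δ : ℂ) • (1 : Matrix n n ℂ) = mfc (fun l => (l : ℂ) + (δ : ℂ) * 1) (t x) := by
      rw [← mfc_add (ht x).1, mfc_id (ht x).1, mfc_smul (ht x).1, mfc_one (ht x).1]
    rw [e]
    refine mfc_congr (ht x).1 fun i => ?_
    have h0 := hpos x i
    rw [Real.div_rpow (by positivity) hK0.le, ← Real.rpow_mul h0.le, one_div_mul_cancel hp0.ne',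
      Real.rpow_one]
    have : (K ^ p : ℝ) ≠ 0 := (Real.rpow_pos_of_pos hK0 p).ne'
    have h2 : ((K ^ p : ℝ) : ℂ) ≠ 0 := by exact_mod_cast this
    rw [Complex.ofReal_div, mul_div_cancel₀ _ h2]
    push_cast; ring

end Sides

section Core
variable {A B C X Y : Type*} [Fintype A] [DecidableEq A] [Fintype B] [DecidableEq B]
  [Fintype C] [DecidableEq C] [Fintype X] [Fintype Y]

/-- flattening `AC|B` -/
def flatB (v : A → B → C → ℂ) : Matrix (A × C) B ℂ := Matrix.of fun q b => v q.1 b q.2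
/-- flattening `AB|C` -/
def flatC (v : A → B → C → ℂ) : Matrix (A × B) C ℂ := Matrix.of fun q c => v q.1 q.2 c

lemma ip_flatB (v : A → B → C → ℂ) (s : Matrix B B ℂ) (t : Matrix (A × C) (A × C) ℂ) :
    ip v (actB s (actAC t v)) = (flatB v * sᵀ * (flatB v)ᴴ * t).trace := by
  rw [← actAC_actB, ip_eq_AC, Finset.sum_comm]
  rw [trace_mul_comm]
  simp only [trace, diag_apply, mul_apply, actAC, actB, flatB, of_apply, transpose_apply,
    conjTranspose_apply, Finset.mul_sum, Finset.sum_mul]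
  refine Finset.sum_congr rfl fun q _ => ?_
  rw [Finset.sum_comm]
  refine Finset.sum_congr rfl fun q' _ => ?_
  refine Finset.sum_congr rfl fun b _ => ?_
  refine Finset.sum_congr rfl fun b' _ => ?_
  ring

lemma ip_flatC (v : A → B → C → ℂ) (s : Matrix C C ℂ) (t : Matrix (A × B) (A × B) ℂ) :
    ip v (actC s (actAB t v)) = (flatC v * sᵀ * (flatC v)ᴴ * t).trace := by
  rw [← actAB_actC, ip_eq_AB, Finset.sum_comm]
  rw [trace_mul_comm]
  simp only [trace, diag_apply, mul_apply, actAB, actC, flatC, of_apply, transpose_apply,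
    conjTranspose_apply, Finset.mul_sum, Finset.sum_mul]
  refine Finset.sum_congr rfl fun q _ => ?_
  rw [Finset.sum_comm]
  refine Finset.sum_congr rfl fun q' _ => ?_
  refine Finset.sum_congr rfl fun b _ => ?_
  refine Finset.sum_congr rfl fun b' _ => ?_
  ring

lemma cp_posDef {n : Type*} [Fintype n] [DecidableEq n] {K : Matrix n n ℂ} (hK : K.PosDef) (t : ℝ) :
    (cp K t).PosDef := by
  rw [cp_real hK]
  exact mfc_posDef' hK.1 _ fun i => Real.rpow_pos_of_pos (hK.eigenvalues_pos i) _

lemma flat_psd {n m : Type*} [Fintype n] [Fintype m] (V : Matrix n m ℂ) {s : Matrix m m ℂ}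
    (hs : s.PosSemidef) : (V * sᵀ * Vᴴ).PosSemidef :=
  hs.transpose.mul_mul_conjTranspose_same V

/-- partial trace of positive definite family -/
lemma ptrace_posDef [Nonempty A] [Nonempty Y] (κ : Y → Matrix (A × B) (A × B) ℂ)
    (hκ : ∀ y, (κ y).PosDef) :
    (Matrix.of fun b b' => ∑ y, ∑ a, κ y (a, b) (a, b')).PosDef := by
  have e : (Matrix.of fun b b' => ∑ y, ∑ a, κ y (a, b) (a, b')) =
      ∑ y, ∑ a, (κ y).submatrix (fun b => (a, b)) (fun b => (a, b)) := by
    ext b b'; simp [Matrix.sum_apply]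
  rw [e]
  refine posDef_sum Finset.univ_nonempty fun y _ => posDef_sum Finset.univ_nonempty fun a _ => ?_
  exact (hκ y).submatrix (fun b b' h => by simpa using h)

lemma ptrace_trace (κ : Y → Matrix (A × B) (A × B) ℂ) :
    (Matrix.of fun b b' => ∑ y, ∑ a, κ y (a, b) (a, b')).trace = ∑ y, (κ y).trace := by
  simp only [trace, diag_apply, of_apply, Fintype.sum_prod_type]
  rw [Finset.sum_comm]
  exact Finset.sum_congr rfl fun y _ => Finset.sum_comm

lemma core_form [Nonempty A] [Nonempty C] [Nonempty B] [Nonempty X] [Nonempty Y]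
    (m : X → Matrix A A ℂ) (hm : ∀ x, (m x).IsHermitian)
    (hm1 : ∑ x, m x * m x = 1) (n : Y → Matrix A A ℂ) (hn : ∀ x, (n x).IsHermitian)
    (hn1 : ∑ x, n x * n x = 1) (c : ℝ) (hc : 0 ≤ c)
    (hG : ∀ y x (ξ η : A → ℂ), ‖∑ a, ∑ a', ξ a * (n y * m x) a a' * η a'‖ ≤
      c * (√(∑ a, ‖ξ a‖ ^ 2) * √(∑ a, ‖η a‖ ^ 2)))
    (p : ℝ) (hp0 : 0 < p) (hp1 : p < 1) (ψ : A → B → C → ℂ) (va vb : ℝ) (hva : 0 ≤ va)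
    (Ha : ∀ σ : Matrix B B ℂ, σ.PosDef → σ.trace = 1 → va ≤ (∑ x, tp (1 / (1 - p))
      (flatB (actA (m x) ψ) * (cp σ (-p))ᵀ * (flatB (actA (m x) ψ))ᴴ)) ^ (1 - p))
    (Hb : ∀ τ : Matrix C C ℂ, τ.PosDef → τ.trace = 1 → (∑ y, tp (1 / (1 + p))
      (flatC (actA (n y) ψ) * (cp τ p)ᵀ * (flatC (actA (n y) ψ))ᴴ)) ^ (1 + p) ≤ vb) :
    va ≤ (c ^ p) ^ 2 * vb := by
  set V : X → Matrix (A × C) B ℂ := fun x => flatB (actA (m x) ψ) with hV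
  set U : Y → Matrix (A × B) C ℂ := fun y => flatC (actA (n y) ψ) with hU
  let f : Matrix B B ℂ →ₗ[ℝ] (X → Matrix (A × C) (A × C) ℂ) →ₗ[ℝ] ℝ :=
    LinearMap.mk₂ ℝ (fun s t => ∑ x, (V x * sᵀ * (V x)ᴴ * t x).trace.re)
      (fun s s' t => by
        rw [← Finset.sum_add_distrib]
        refine Finset.sum_congr rfl fun x _ => ?_
        rw [transpose_add, Matrix.mul_add, Matrix.add_mul, Matrix.add_mul, trace_add,
          Complex.add_re])
      (fun r s t => by
        rw [smul_eq_mul, Finset.mul_sum]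
        refine Finset.sum_congr rfl fun x _ => ?_
        rw [transpose_smul, Matrix.mul_smul, Matrix.smul_mul, Matrix.smul_mul, trace_smul,
          Complex.smul_re, smul_eq_mul])
      (fun s t t' => by
        rw [← Finset.sum_add_distrib]
        refine Finset.sum_congr rfl fun x _ => ?_
        rw [Pi.add_apply, Matrix.mul_add, trace_add, Complex.add_re])
      (fun r s t => by
        rw [smul_eq_mul, Finset.mul_sum]
        refine Finset.sum_congr rfl fun x _ => ?_
        rw [Pi.smul_apply, Matrix.mul_smul, trace_smul, Complex.smul_re, smul_eq_mul])
  have fdef : ∀ s t, f s t = ∑ x, (V x * sᵀ * (V x)ᴴ * t x).trace.re := fun s t => rfl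
  have fcont : ∀ s, Continuous (f s) := by
    intro s
    have : (f s : (X → Matrix (A × C) (A × C) ℂ) → ℝ) =
      fun t => ∑ x, (V x * sᵀ * (V x)ᴴ * t x).trace.re := rfl
    rw [this]
    refine continuous_finsetSum _ fun x _ => Complex.continuous_re.comp ?_
    fun_prop
  have hTne : (Tset (A × C) X p).Nonempty := by
    obtain ⟨t, ht, -⟩ := alpha_side hp0 hp1 (fun _ : X => (0 : Matrix (A × C) (A × C) ℂ))
      (fun _ => PosSemidef.zero)
    exact ⟨t, ht⟩
  obtain ⟨t, htT, ht⟩ := minimax f fcont (Tset (A × C) X p) (Tset_compact hp0 hp1)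
    (Tset_convex p) hTne (Sset B p) (Sset_convex p) va (by
      intro s hs
      have hZ := Sset_tp hp0 hs
      set Z := tp (-(1 / p)) s with hZd
      have hZpos : 0 < Z := by
        rw [hZd, tp_eq hs.1.1]
        exact Finset.sum_pos (fun i _ => Real.rpow_pos_of_pos (hs.1.eigenvalues_pos i) _)
          Finset.univ_nonempty
      set σ : Matrix B B ℂ := mfc (fun l => ((l ^ (-(1 / p)) / Z : ℝ) : ℂ)) s with hσd
      have hσ : σ.PosDef := mfc_posDef' hs.1.1 _ fun i =>
        div_pos (Real.rpow_pos_of_pos (hs.1.eigenvalues_pos i) _) hZpos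
      have hσ1 : σ.trace = 1 := by
        rw [hσd, mfc_trace hs.1.1, ← Complex.ofReal_sum, ← Finset.sum_div, ← tp_eq hs.1.1, ← hZd,
          div_self hZpos.ne', Complex.ofReal_one]
      have hcp : cp σ (-p) = (Z ^ p : ℝ) • s := by
        have e := cp_real hσ (-p)
        rw [Complex.ofReal_neg] at e
        rw [e, hσd, mfc_comp hs.1.1]
        have e2 : (Z ^ p : ℝ) • s = mfc (fun l => ((Z ^ p : ℝ) : ℂ) * (l : ℂ)) s := by
          rw [mfc_smul hs.1.1, mfc_id hs.1.1]
          ext i j; simp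
        rw [e2]
        refine mfc_congr hs.1.1 fun i => ?_
        have h0 := hs.1.eigenvalues_pos i
        rw [Real.rpow_neg (by positivity), Real.div_rpow (by positivity) hZpos.le, inv_div,
          ← Real.rpow_mul h0.le]
        have : -(1 / p) * p = -1 := by field_simp
        rw [this, Real.rpow_neg_one, div_inv_eq_mul, Complex.ofReal_mul]
      obtain ⟨t, ht, hle⟩ := alpha_side hp0 hp1 (fun x => V x * (cp σ (-p))ᵀ * (V x)ᴴ)
        (fun x => flat_psd _ (by
          have := (cp_posDef hσ (-p)).posSemidef
          rwa [Complex.ofReal_neg] at this))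
      refine ⟨t, ht, ?_⟩
      have h1 : va ≤ f (cp σ (-p)) t := (Ha σ hσ hσ1).trans hle
      rw [hcp, map_smul, LinearMap.smul_apply, smul_eq_mul] at h1
      have hz1 : Z ^ p ≤ 1 := Real.rpow_le_one hZpos.le hZ hp0.le
      have hz0 : 0 < Z ^ p := Real.rpow_pos_of_pos hZpos p
      have h2 : 0 ≤ f s t := by
        by_contra hneg
        push Not at hneg
        have := mul_neg_of_pos_of_neg hz0 hneg
        linarith
      nlinarith)
  have htp := Tset_tp hp0 hp1 htT
  have hvb : 0 ≤ vb := by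
    have hcard : (0 : ℝ) < Fintype.card C := by exact_mod_cast Fintype.card_pos
    have hpd : (((Fintype.card C : ℝ)⁻¹) • (1 : Matrix C C ℂ)).PosDef :=
      PosDef.one.smul (by positivity)
    refine le_trans ?_ (Hb (((Fintype.card C : ℝ)⁻¹) • (1 : Matrix C C ℂ)) hpd (by
      rw [trace_smul, trace_one, Complex.real_smul]; push_cast
      exact inv_mul_cancel₀ (by exact_mod_cast hcard.ne')))
    exact Real.rpow_nonneg (Finset.sum_nonneg fun y _ =>
      tp_nonneg (flat_psd _ (cp_posDef hpd p).posSemidef) _) _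
  have hcp0 : 0 ≤ (c ^ p) ^ 2 := by positivity
  -- fixed δ
  have step : ∀ δ : ℝ, 0 < δ → va ≤ (∑ x, ∑ i, ((htT.1 x).1.eigenvalues i + δ) ^ (1 / p)) ^ p *
      ((c ^ p) ^ 2 * vb) := by
    intro δ hδ
    obtain ⟨Ω, hΩ, hΩ1, hΩt⟩ := omega_side hp0 t htT.1 hδ
    set T0 := ∑ x, ∑ i, ((htT.1 x).1.eigenvalues i + δ) ^ (1 / p) with hT0
    have hT0nn : 0 ≤ T0 := Finset.sum_nonneg fun x _ => Finset.sum_nonneg fun i _ => by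
      have := (htT.1 x).eigenvalues_nonneg i
      positivity
    set τ : Matrix C C ℂ := Matrix.of fun b b' => ∑ x, ∑ a, Ω x (a, b) (a, b') with hτd
    have hτ : τ.PosDef := ptrace_posDef Ω hΩ
    have hτ1 : τ.trace = 1 := by rw [hτd, ptrace_trace, hΩ1]
    have hW : ∀ y, (U y * (cp τ p)ᵀ * (U y)ᴴ).PosSemidef := fun y =>
      flat_psd _ (cp_posDef hτ p).posSemidef
    have step2 : ∀ δ' : ℝ, 0 < δ' → va ≤ T0 ^ p * ((c ^ p) ^ 2 *
        (∑ y, ∑ i, ((hW y).1.eigenvalues i + δ') ^ (1 / (1 + p))) ^ (1 + p)) := by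
      intro δ' hδ'
      obtain ⟨κ, hκ, hκ1, hκle⟩ := beta_side hp0 _ hW hδ'
      set σ : Matrix B B ℂ := Matrix.of fun b b' => ∑ y, ∑ a, κ y (a, b) (a, b') with hσd
      have hσ : σ.PosDef := ptrace_posDef κ hκ
      have hσ1 : σ.trace = 1 := by rw [hσd, ptrace_trace, hκ1]
      have hspd : (cp σ (-p)).PosDef := by
        have := cp_posDef hσ (-p)
        rwa [Complex.ofReal_neg] at this
      have hsS : cp σ (-p) ∈ Sset B p := by
        refine Sset_mem_of hp0 hspd ?_
        have e := cp_real hσ (-p)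
        rw [Complex.ofReal_neg] at e
        rw [e, tp_mfc hσ.1 (fun x => x ^ (-p))]
        have : ∀ i, (hσ.1.eigenvalues i ^ (-p)) ^ (-(1 / p)) = hσ.1.eigenvalues i := by
          intro i
          rw [← Real.rpow_mul (hσ.eigenvalues_pos i).le]
          have : -p * -(1 / p) = 1 := by field_simp
          rw [this, Real.rpow_one]
        refine (Finset.sum_congr rfl fun i _ => this i).trans_le ?_
        have e3 := trace_mfc_re hσ.1 (fun x => x)
        rw [mfc_id hσ.1, hσ1, Complex.one_re] at e3
        exact e3.symm.le
      have h1 := ht _ hsS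
      have hinterp := interp_main κ hκ Ω hΩ σ hσ (fun _ _ => rfl) τ hτ (fun _ _ => rfl) m hm hm1 n hn
        hn1 c hc hG p hp0 hp1 ψ
      simp only [ip_flatB, ip_flatC, Complex.re_sum] at hinterp
      have h2 : f (cp σ (-p)) t ≤ T0 ^ p * ∑ x, (V x * (cp σ (-p))ᵀ * (V x)ᴴ * cp (Ω x) p).trace.re := by
        rw [fdef, Finset.mul_sum]
        refine Finset.sum_le_sum fun x _ => ?_
        have e : T0 ^ p * (V x * (cp σ (-p))ᵀ * (V x)ᴴ * cp (Ω x) p).trace.re =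
            (V x * (cp σ (-p))ᵀ * (V x)ᴴ * (((T0 ^ p : ℝ) : ℂ) • cp (Ω x) p)).trace.re := by
          rw [Matrix.mul_smul, trace_smul, smul_eq_mul, Complex.re_ofReal_mul]
        rw [e, hΩt, Matrix.mul_add, trace_add, Complex.add_re, Matrix.mul_smul, trace_smul,
          Matrix.mul_one, smul_eq_mul, Complex.re_ofReal_mul]
        have := (Complex.le_def.mp (flat_psd (V x) hspd.posSemidef).trace_nonneg).1
        have := mul_nonneg hδ.le this
        linarith
      have hT0p : 0 ≤ T0 ^ p := Real.rpow_nonneg hT0nn p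
      calc va ≤ _ := h1
        _ ≤ _ := h2
        _ ≤ _ := by
          gcongr
          refine hinterp.trans ?_
          gcongr
    have lim : Filter.Tendsto (fun δ' : ℝ => T0 ^ p * ((c ^ p) ^ 2 *
        (∑ y, ∑ i, ((hW y).1.eigenvalues i + δ') ^ (1 / (1 + p))) ^ (1 + p)))
        (nhdsWithin 0 (Set.Ioi 0)) (nhds (T0 ^ p * ((c ^ p) ^ 2 *
        (∑ y, ∑ i, ((hW y).1.eigenvalues i + 0) ^ (1 / (1 + p))) ^ (1 + p)))) := by
      refine (Continuous.tendsto ?_ 0).mono_left nhdsWithin_le_nhds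
      refine continuous_const.mul (continuous_const.mul (Continuous.rpow_const ?_ fun _ =>
        Or.inr (by positivity)))
      exact continuous_finsetSum _ fun y _ => continuous_finsetSum _ fun i _ =>
        (continuous_const.add continuous_id).rpow_const fun _ => Or.inr (by positivity)
    have h3 := ge_of_tendsto lim (Filter.eventually_of_mem self_mem_nhdsWithin fun δ' hδ' =>
      step2 δ' hδ')
    refine h3.trans ?_
    have := Hb τ hτ hτ1
    simp only [add_zero, ← tp_eq]
    gcongr
  have lim : Filter.Tendsto (fun δ : ℝ =>
      (∑ x, ∑ i, ((htT.1 x).1.eigenvalues i + δ) ^ (1 / p)) ^ p * ((c ^ p) ^ 2 * vb))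
      (nhdsWithin 0 (Set.Ioi 0)) (nhds
      ((∑ x, ∑ i, ((htT.1 x).1.eigenvalues i + 0) ^ (1 / p)) ^ p * ((c ^ p) ^ 2 * vb))) := by
    refine (Continuous.tendsto ?_ 0).mono_left nhdsWithin_le_nhds
    refine Continuous.mul (Continuous.rpow_const ?_ fun _ => Or.inr hp0.le) continuous_const
    exact continuous_finsetSum _ fun y _ => continuous_finsetSum _ fun i _ =>
      (continuous_const.add continuous_id).rpow_const fun _ => Or.inr (by positivity)
  have h3 := ge_of_tendsto lim (Filter.eventually_of_mem self_mem_nhdsWithin fun δ hδ => step δ hδ)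
  simp only [add_zero, ← tp_eq] at h3
  refine h3.trans ?_
  have h4 : (∑ x, tp (1 / p) (t x)) ^ p ≤ 1 :=
    Real.rpow_le_one (Finset.sum_nonneg fun x _ => tp_nonneg (htT.1 x) _) htp hp0.le
  have h5 : 0 ≤ (c ^ p) ^ 2 * vb := by positivity
  nlinarith

end Core


open scoped Kronecker ComplexOrder
open Matrix

set_option linter.unusedSectionVars false
set_option linter.unusedSimpArgs false

section Quantities

variable {n X : Type*} [Fintype n] [DecidableEq n] [Fintype X] [DecidableEq X]

/-- the quantity inside the logarithm -/
noncomputable def QQ (γ : ℝ) (D : X → Matrix n n ℂ) (σ : Matrix n n ℂ) : ℝ :=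
  ∑ x, tp γ (matRpow σ ((1 - γ) / (2 * γ)) * D x * matRpow σ ((1 - γ) / (2 * γ)))

lemma matRpow_herm {σ : Matrix n n ℂ} (hσ : σ.IsHermitian) (t : ℝ) : (matRpow σ t).IsHermitian := by
  rw [matRpow_eq_mfc]
  exact mfc_isHermitian hσ _

lemma sandwich_psd {σ D : Matrix n n ℂ} (hσ : σ.IsHermitian) (hD : D.PosSemidef) (t : ℝ) :
    (matRpow σ t * D * matRpow σ t).PosSemidef := by
  have := hD.mul_mul_conjTranspose_same (matRpow σ t)
  rwa [(matRpow_herm hσ t).eq] at this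

lemma trace_matRpow {K : Matrix n n ℂ} (hK : K.IsHermitian) {γ : ℝ} (hγ : γ ≠ 0) :
    (matRpow K γ) = mfc (fun x => ((x ^ γ : ℝ) : ℂ)) K := by
  rw [matRpow_eq_mfc]
  refine mfc_congr hK fun i => ?_
  split_ifs with h
  · rw [h, Real.zero_rpow hγ]
  · rfl

lemma matRpow_blk {D : X → Matrix n n ℂ} (h : ∀ i, (D i).IsHermitian) (t : ℝ) :
    matRpow (blk D) t = blk (fun i => matRpow (D i) t) := by
  rw [matRpow_eq_mfc, mfc_blk h]; rfl

lemma sandwiched_eq {γ : ℝ} (hγ : γ ≠ 0) {D : X → Matrix n n ℂ} (hD : ∀ x, (D x).PosSemidef)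
    {σ : Matrix n n ℂ} (hσ : σ.IsHermitian) :
    sandwichedRenyiDiv γ (blk D) ((1 : Matrix X X ℂ) ⊗ₖ σ) = (γ - 1)⁻¹ * Real.log (QQ γ D σ) := by
  unfold sandwichedRenyiDiv QQ
  rw [kron_eq_blk, matRpow_blk (fun _ => hσ), blk_mul, blk_mul,
    matRpow_blk fun x => (sandwich_psd hσ (hD x) _).1, blk_trace, Complex.re_sum]
  congr 2
  refine Finset.sum_congr rfl fun x _ => ?_
  rw [trace_matRpow (sandwich_psd hσ (hD x) _).1 hγ]
  rfl

lemma trace_mfc_mono {D σ : Matrix n n ℂ} (hD : D.PosSemidef) (hσ : σ.IsHermitian) (g h : ℝ → ℝ)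
    (hgh : ∀ i, g (hσ.eigenvalues i) ≤ h (hσ.eigenvalues i)) :
    (D * mfc (fun x => (g x : ℂ)) σ).trace.re ≤ (D * mfc (fun x => (h x : ℂ)) σ).trace.re := by
  set s := mfc (fun x => ((√(h x - g x) : ℝ) : ℂ)) σ with hs
  have e : mfc (fun x => (h x : ℂ)) σ = mfc (fun x => (g x : ℂ)) σ + s * s := by
    rw [hs, mfc_mul hσ, mfc_add hσ]
    refine mfc_congr hσ fun i => ?_
    have := Real.mul_self_sqrt (sub_nonneg.mpr (hgh i))
    rw [← Complex.ofReal_mul, this]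
    push_cast; ring
  have hsH : sᴴ = s := mfc_isHermitian hσ _
  have h1 : 0 ≤ (D * (s * s)).trace := by
    have h2 := (hD.mul_mul_conjTranspose_same s).trace_nonneg
    rwa [hsH, trace_mul_comm, ← Matrix.mul_assoc, trace_mul_comm] at h2
  have h3 := (Complex.le_def.mp h1).1
  rw [e, Matrix.mul_add, trace_add, Complex.add_re]
  simp only [Complex.zero_re] at h3
  linarith

lemma eig_le_one {σ : Matrix n n ℂ} (hσ : σ.PosSemidef) (h1 : σ.trace = 1) (i : n) :
    hσ.1.eigenvalues i ≤ 1 := by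
  have e3 := trace_mfc_re hσ.1 (fun x => x)
  rw [mfc_id hσ.1, h1, Complex.one_re] at e3
  rw [e3]
  exact Finset.single_le_sum (f := hσ.1.eigenvalues) (fun j _ => hσ.eigenvalues_nonneg j)
    (Finset.mem_univ i)

lemma trace_sandwich {σ D : Matrix n n ℂ} (hσ : σ.IsHermitian) (t : ℝ) :
    (matRpow σ t * D * matRpow σ t).trace =
      (D * mfc (fun x => (((if x = 0 then (0 : ℝ) else x ^ t) * (if x = 0 then (0 : ℝ) else x ^ t) : ℝ) : ℂ)) σ).trace := by
  rw [trace_mul_comm, ← Matrix.mul_assoc, trace_mul_comm, matRpow_eq_mfc, mfc_mul hσ]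
  simp only [Complex.ofReal_mul]

lemma trace_re_eig {K : Matrix n n ℂ} (hK : K.IsHermitian) :
    K.trace.re = ∑ i, hK.eigenvalues i := by
  have e3 := trace_mfc_re hK (fun x => x)
  rwa [mfc_id hK] at e3

lemma QQ_upper {γ : ℝ} (hγ0 : 0 < γ) (hγ1 : γ < 1) {D : X → Matrix n n ℂ}
    (hD : ∀ x, (D x).PosSemidef) (hD1 : ∑ x, (D x).trace = 1)
    {σ : Matrix n n ℂ} (hσ : σ.PosSemidef) (hσ1 : σ.trace = 1) :
    QQ γ D σ ≤ Fintype.card X * Fintype.card n + 1 := by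
  have hb : ∀ x, tp γ (matRpow σ ((1 - γ) / (2 * γ)) * D x * matRpow σ ((1 - γ) / (2 * γ))) ≤
      Fintype.card n + (D x).trace.re := by
    intro x
    have hK := sandwich_psd hσ.1 (hD x) ((1 - γ) / (2 * γ))
    rw [tp_eq hK.1]
    have h1 : ∑ i, hK.1.eigenvalues i ^ γ ≤ ∑ i, (1 + hK.1.eigenvalues i) := by
      refine Finset.sum_le_sum fun i _ => ?_
      have h0 := hK.eigenvalues_nonneg i
      rcases le_total (hK.1.eigenvalues i) 1 with h | h
      · have := Real.rpow_le_one h0 h hγ0.le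
        linarith
      · have := Real.rpow_le_rpow_of_exponent_le h hγ1.le
        rw [Real.rpow_one] at this
        linarith
    refine h1.trans ?_
    rw [Finset.sum_add_distrib, ← trace_re_eig]
    have h2 : (matRpow σ ((1 - γ) / (2 * γ)) * D x * matRpow σ ((1 - γ) / (2 * γ))).trace.re ≤
        (D x).trace.re := by
      rw [trace_sandwich hσ.1]
      have e : (D x).trace = (D x * mfc (fun x => ((1 : ℝ) : ℂ)) σ).trace := by
        simp only [Complex.ofReal_one]
        rw [mfc_one hσ.1, Matrix.mul_one]
      rw [e]
      refine trace_mfc_mono (hD x) hσ.1 _ _ fun i => ?_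
      have h0 := hσ.eigenvalues_nonneg i
      have h1 := eig_le_one hσ hσ1 i
      split_ifs
      · norm_num
      · have he : 0 ≤ (1 - γ) / (2 * γ) := div_nonneg (by linarith) (by linarith)
        exact mul_le_one₀ (Real.rpow_le_one h0 h1 he) (Real.rpow_nonneg h0 _)
          (Real.rpow_le_one h0 h1 he)
    simp
    linarith
  have := Finset.sum_le_sum (s := Finset.univ) fun x _ => hb x
  rw [Finset.sum_add_distrib, ← Complex.re_sum, hD1] at this
  simpa [QQ] using this

lemma QQ_lower {γ : ℝ} (hγ1 : 1 < γ) {D : X → Matrix n n ℂ}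
    (hD : ∀ x, (D x).PosSemidef) (hD1 : ∑ x, (D x).trace = 1)
    {σ : Matrix n n ℂ} (hσ : σ.PosSemidef) (hσ1 : σ.trace = 1)
    (hker : LinearMap.ker σ.mulVecLin ≤ LinearMap.ker (trFst (blk D)).mulVecLin) :
    1 ≤ ((Fintype.card X * Fintype.card n : ℕ) : ℝ) ^ (γ - 1) * QQ γ D σ := by
  set e := (1 - γ) / (2 * γ) with he
  have hK := fun x => sandwich_psd hσ.1 (hD x) e
  set P := mfc (fun x => ((if x = 0 then (0 : ℝ) else 1 : ℝ) : ℂ)) σ with hP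
  have hsum : trFst (blk D) = ∑ x, D x := by
    ext i j
    simp [trFst, blk, Matrix.sum_apply]
  have hσP : σ * (1 - P) = 0 := by
    rw [Matrix.mul_sub, Matrix.mul_one, sub_eq_zero]
    conv_rhs => lhs; rw [← mfc_id hσ.1]
    rw [hP, mfc_mul hσ.1]
    conv_lhs => rw [← mfc_id hσ.1]
    refine mfc_congr hσ.1 fun i => ?_
    split_ifs with h <;> simp [h]
  have hDP : (∑ x, D x) * (1 - P) = 0 := by
    have : ∀ j, (∑ x, D x) *ᵥ ((1 - P).col j) = 0 := by
      intro j
      have h1 : (1 - P).col j ∈ LinearMap.ker σ.mulVecLin := by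
        rw [LinearMap.mem_ker, mulVecLin_apply]
        funext i
        have := congrFun (congrFun hσP i) j
        simpa [mul_apply, mulVec, dotProduct] using this
      have h2 := hker h1
      rwa [LinearMap.mem_ker, mulVecLin_apply, hsum] at h2
    ext i j
    have := congrFun (this j) i
    simpa [mul_apply, mulVec, dotProduct] using this
  have htr : 1 ≤ ∑ x, (matRpow σ e * D x * matRpow σ e).trace.re := by
    have h1 : ∀ x, (D x * P).trace.re ≤ (matRpow σ e * D x * matRpow σ e).trace.re := by
      intro x
      rw [trace_sandwich hσ.1]
      refine trace_mfc_mono (hD x) hσ.1 _ _ fun i => ?_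
      have h0 := hσ.eigenvalues_nonneg i
      have h1 := eig_le_one hσ hσ1 i
      split_ifs with h
      · norm_num
      · have he : e ≤ 0 := div_nonpos_of_nonpos_of_nonneg (by linarith) (by linarith)
        have := Real.one_le_rpow_of_pos_of_le_one_of_nonpos (lt_of_le_of_ne h0 (Ne.symm h)) h1 he
        nlinarith
    have h2 := Finset.sum_le_sum (s := Finset.univ) fun x _ => h1 x
    refine le_trans ?_ h2
    rw [← Complex.re_sum, ← trace_sum, ← Finset.sum_mul]
    rw [Matrix.mul_sub, sub_eq_zero, Matrix.mul_one] at hDP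
    rw [← hDP, trace_sum, hD1, Complex.one_re]
  have hQ : QQ γ D σ = ∑ q : X × n, (hK q.1).1.eigenvalues q.2 ^ γ := by
    unfold QQ
    rw [Fintype.sum_prod_type]
    exact Finset.sum_congr rfl fun x _ => tp_eq (hK x).1 _
  have htr2 : 1 ≤ ∑ q : X × n, (hK q.1).1.eigenvalues q.2 := by
    rw [Fintype.sum_prod_type]
    refine htr.trans (Finset.sum_le_sum fun x _ => (trace_re_eig (hK x).1).le)
  have hpm := Real.rpow_sum_le_const_mul_sum_rpow_of_nonneg (Finset.univ : Finset (X × n))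
    hγ1.le (f := fun q => (hK q.1).1.eigenvalues q.2) (fun q _ => (hK q.1).eigenvalues_nonneg q.2)
  rw [Finset.card_univ, Fintype.card_prod] at hpm
  rw [hQ]
  exact (Real.one_le_rpow htr2 (by linarith)).trans hpm

lemma up_beta {γ : ℝ} (hγ0 : 0 < γ) (hγ1 : γ < 1) {D : X → Matrix n n ℂ}
    (hD : ∀ x, (D x).PosSemidef) (hD1 : ∑ x, (D x).trace = 1)
    {σ : Matrix n n ℂ} (hσ : σ.PosSemidef) (hσ1 : σ.trace = 1) :
    (1 - γ)⁻¹ * Real.log (QQ γ D σ) ≤ condSandwichedRenyiUp γ (blk D) := by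
  unfold condSandwichedRenyiUp
  have hneg : ∀ L : ℝ, (1 - γ)⁻¹ * L = -((γ - 1)⁻¹ * L) := by
    intro L
    have : (1 - γ)⁻¹ = -(γ - 1)⁻¹ := by rw [← inv_neg]; congr 1; ring
    rw [this]; ring
  refine le_csSup ?_ ⟨σ, hσ, hσ1, fun h => absurd h (not_lt.mpr hγ1.le), ?_⟩
  · refine ⟨(1 - γ)⁻¹ * Real.log (Fintype.card X * Fintype.card n + 1), ?_⟩
    rintro _ ⟨τ, hτ, hτ1, -, rfl⟩
    rw [sandwiched_eq hγ0.ne' hD hτ.1, ← hneg]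
    have h0 : 0 ≤ QQ γ D τ := Finset.sum_nonneg fun x _ => tp_nonneg (sandwich_psd hτ.1 (hD x) _) _
    have h1 := QQ_upper hγ0 hγ1 hD hD1 hτ hτ1
    have h2 : 0 ≤ (1 - γ)⁻¹ := inv_nonneg.mpr (by linarith)
    refine mul_le_mul_of_nonneg_left ?_ h2
    rcases h0.eq_or_lt with h | h
    · rw [← h, Real.log_zero]
      exact Real.log_nonneg (by linarith [show (0:ℝ) ≤ Fintype.card X * Fintype.card n by positivity])
    · exact Real.log_le_log h h1
  · rw [sandwiched_eq hγ0.ne' hD hσ.1, ← hneg]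

lemma QQ_pos {γ : ℝ} (hγ1 : 1 < γ) {D : X → Matrix n n ℂ}
    (hD : ∀ x, (D x).PosSemidef) (hD1 : ∑ x, (D x).trace = 1)
    {σ : Matrix n n ℂ} (hσ : σ.PosSemidef) (hσ1 : σ.trace = 1)
    (hker : LinearMap.ker σ.mulVecLin ≤ LinearMap.ker (trFst (blk D)).mulVecLin) :
    0 < QQ γ D σ ∧ 0 < ((Fintype.card X * Fintype.card n : ℕ) : ℝ) ^ (γ - 1) := by
  have h := QQ_lower hγ1 hD hD1 hσ hσ1 hker
  have h0 : 0 ≤ QQ γ D σ := Finset.sum_nonneg fun x _ => tp_nonneg (sandwich_psd hσ.1 (hD x) _) _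
  have h1 : 0 ≤ ((Fintype.card X * Fintype.card n : ℕ) : ℝ) ^ (γ - 1) := by positivity
  constructor
  · rcases h0.eq_or_lt with h' | h'
    · rw [← h', mul_zero] at h; linarith
    · exact h'
  · rcases h1.eq_or_lt with h' | h'
    · rw [← h', zero_mul] at h; linarith
    · exact h'

lemma pd_ker {σ : Matrix n n ℂ} (hσ : σ.PosDef) (R : Matrix n n ℂ) :
    LinearMap.ker σ.mulVecLin ≤ LinearMap.ker R.mulVecLin := by
  intro v hv
  rw [LinearMap.mem_ker, mulVecLin_apply] at hv
  have : v = 0 := by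
    have hu := hσ.isUnit
    have hinj := Matrix.mulVec_injective_of_isUnit hu
    exact hinj (by rw [hv, mulVec_zero])
  rw [this]; exact Submodule.zero_mem _

lemma up_alpha {γ : ℝ} (hγ1 : 1 < γ) {D : X → Matrix n n ℂ}
    (hD : ∀ x, (D x).PosSemidef) (hD1 : ∑ x, (D x).trace = 1)
    {σ : Matrix n n ℂ} (hσ : σ.PosDef) (hσ1 : σ.trace = 1) :
    -((γ - 1)⁻¹ * Real.log (QQ γ D σ)) ≤ condSandwichedRenyiUp γ (blk D) := by
  unfold condSandwichedRenyiUp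
  have hγ0 : γ ≠ 0 := by linarith
  refine le_csSup ?_ ⟨σ, hσ.posSemidef, hσ1, fun _ => pd_ker hσ _, ?_⟩
  · refine ⟨(γ - 1)⁻¹ * Real.log (((Fintype.card X * Fintype.card n : ℕ) : ℝ) ^ (γ - 1)), ?_⟩
    rintro _ ⟨τ, hτ, hτ1, hk, rfl⟩
    rw [sandwiched_eq hγ0 hD hτ.1]
    have h := QQ_lower hγ1 hD hD1 hτ hτ1 (hk hγ1)
    obtain ⟨h1, h2⟩ := QQ_pos hγ1 hD hD1 hτ hτ1 (hk hγ1)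
    have h3 := Real.log_nonneg h
    rw [Real.log_mul h2.ne' h1.ne'] at h3
    have h4 : 0 ≤ (γ - 1)⁻¹ := inv_nonneg.mpr (by linarith)
    nlinarith
  · rw [sandwiched_eq hγ0 hD hσ.1]

lemma matRpow_posDef {σ : Matrix n n ℂ} (hσ : σ.PosDef) (t : ℝ) : matRpow σ t = cp σ (t : ℂ) := by
  rw [cp_real hσ, matRpow_eq_mfc]
  refine mfc_congr hσ.1 fun i => ?_
  rw [if_neg (hσ.eigenvalues_pos i).ne']

lemma tp_connect {q : Type*} [Fintype q] [DecidableEq q] (V : Matrix q n ℂ) {σ : Matrix n n ℂ}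
    (hσ : σ.PosDef) {γ : ℝ} (hγ : 0 < γ) (e s : ℝ) (hs : s = e + e) :
    tp γ (V * (cp σ (s : ℂ))ᵀ * Vᴴ) = tp γ (matRpow σ e * (Vᴴ * V)ᵀ * matRpow σ e) := by
  set r := matRpow σ e with hr
  have hrH : rᴴ = r := matRpow_herm hσ.1 e
  have e1 : cp σ (s : ℂ) = r * r := by
    rw [hr, matRpow_posDef hσ, cp_mul hσ.1, hs]; push_cast; rfl
  have hrT : rᵀᴴ = rᵀ := (matRpow_herm hσ.1 e).transpose
  have e2 : V * (cp σ (s : ℂ))ᵀ * Vᴴ = (V * rᵀ) * (V * rᵀ)ᴴ := by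
    rw [e1, transpose_mul, conjTranspose_mul, hrT]
    simp only [Matrix.mul_assoc]
  have e3 : r * (Vᴴ * V)ᵀ * r = ((V * rᵀ)ᴴ * (V * rᵀ))ᵀ := by
    rw [conjTranspose_mul, hrT]
    simp only [transpose_mul, Matrix.mul_assoc, transpose_transpose]
  rw [e2, e3]
  unfold tp
  rw [mfc_transpose (posSemidef_conjTranspose_mul_self _).1, trace_transpose,
    mfc_trace_swap _ (fun x => x ^ γ) (Real.zero_rpow hγ.ne')]

end Quantities


open scoped Kronecker ComplexOrder
open Matrix

set_option linter.unusedSectionVars false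
set_option linter.unusedSimpArgs false

section Mid

variable {A B C X Y : Type*} [Fintype A] [DecidableEq A] [Fintype B] [DecidableEq B]
  [Fintype C] [DecidableEq C] [Fintype X] [DecidableEq X] [Fintype Y] [DecidableEq Y]

lemma mid_form [Nonempty A] [Nonempty C] [Nonempty B] [Nonempty X] [Nonempty Y]
    (m : X → Matrix A A ℂ) (hm : ∀ x, (m x).IsHermitian)
    (hm1 : ∑ x, m x * m x = 1) (n : Y → Matrix A A ℂ) (hn : ∀ x, (n x).IsHermitian)
    (hn1 : ∑ x, n x * n x = 1) (c : ℝ) (hc : 0 ≤ c)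
    (hG : ∀ y x (ξ η : A → ℂ), ‖∑ a, ∑ a', ξ a * (n y * m x) a a' * η a'‖ ≤
      c * (√(∑ a, ‖ξ a‖ ^ 2) * √(∑ a, ‖η a‖ ^ 2)))
    (p : ℝ) (hp0 : 0 < p) (hp1 : p < 1) (ψ : A → B → C → ℂ)
    (D : X → Matrix B B ℂ) (hD : ∀ x, D x = ((flatB (actA (m x) ψ))ᴴ * flatB (actA (m x) ψ))ᵀ)
    (E : Y → Matrix C C ℂ) (hE : ∀ y, E y = ((flatC (actA (n y) ψ))ᴴ * flatC (actA (n y) ψ))ᵀ)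
    (hD1 : ∑ x, (D x).trace = 1) (hE1 : ∑ y, (E y).trace = 1) :
    0 < c ∧ -(2 * Real.log c) ≤
      condSandwichedRenyiUp (1 / (1 - p)) (blk D) + condSandwichedRenyiUp (1 / (1 + p)) (blk E) := by
  have hDp : ∀ x, (D x).PosSemidef := fun x => by
    rw [hD]; exact (posSemidef_conjTranspose_mul_self _).transpose
  have hEp : ∀ x, (E x).PosSemidef := fun x => by
    rw [hE]; exact (posSemidef_conjTranspose_mul_self _).transpose
  have h1p : 0 < 1 - p := by linarith
  have h1p' : 0 < 1 + p := by linarith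
  have hα : 1 < 1 / (1 - p) := by rw [lt_div_iff₀ h1p]; linarith
  have hβ0 : 0 < 1 / (1 + p) := by positivity
  have hβ : 1 / (1 + p) < 1 := by rw [div_lt_iff₀ h1p']; linarith
  have hα0 : 0 < 1 / (1 - p) := by positivity
  set Hα := condSandwichedRenyiUp (1 / (1 - p)) (blk D) with hHα
  set Hβ := condSandwichedRenyiUp (1 / (1 + p)) (blk E) with hHβ
  have key := core_form m hm hm1 n hn hn1 c hc hG p hp0 hp1 ψ (Real.exp (-(p * Hα)))
    (Real.exp (p * Hβ)) (Real.exp_pos _).le ?_ ?_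
  · have hcp : 0 < c := by
      rcases hc.eq_or_lt with h | h
      · rw [← h, Real.zero_rpow hp0.ne'] at key
        have := Real.exp_pos (-(p * Hα))
        simp at key
        linarith
      · exact h
    refine ⟨hcp, ?_⟩
    have h2 := Real.log_le_log (Real.exp_pos _) key
    rw [Real.log_mul (by positivity) (Real.exp_pos _).ne', Real.log_exp, Real.log_exp, Real.log_pow,
      Real.log_rpow hcp] at h2
    push_cast at h2
    have : p * (-(2 * Real.log c)) ≤ p * (Hα + Hβ) := by linarith
    exact le_of_mul_le_mul_left this hp0
  · intro σ hσ hσ1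
    have h := up_alpha hα hDp hD1 hσ hσ1
    have hpos := (QQ_pos hα hDp hD1 hσ.posSemidef hσ1 (pd_ker hσ _)).1
    have e : ∑ x, tp (1 / (1 - p)) (flatB (actA (m x) ψ) * (cp σ (-p))ᵀ * (flatB (actA (m x) ψ))ᴴ) =
        QQ (1 / (1 - p)) D σ := by
      refine Finset.sum_congr rfl fun x _ => ?_
      have := tp_connect (flatB (actA (m x) ψ)) hσ hα0 ((1 - 1 / (1 - p)) / (2 * (1 / (1 - p)))) (-p)
        (by field_simp; ring)
      rw [Complex.ofReal_neg] at this
      rw [this, hD]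
    rw [e, Real.rpow_def_of_pos hpos, Real.exp_le_exp]
    have e2 : (1 / (1 - p) - 1)⁻¹ = (1 - p) / p := by
      rw [inv_eq_iff_eq_inv, inv_div]; field_simp; ring
    rw [e2, ← hHα] at h
    have h3 := mul_le_mul_of_nonneg_left h hp0.le
    have e3 : p * -((1 - p) / p * Real.log (QQ (1 / (1 - p)) D σ)) =
      -(Real.log (QQ (1 / (1 - p)) D σ) * (1 - p)) := by field_simp
    rw [e3] at h3
    linarith
  · intro τ hτ hτ1
    have h := up_beta hβ0 hβ hEp hE1 hτ.posSemidef hτ1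
    have hnn : 0 ≤ QQ (1 / (1 + p)) E τ :=
      Finset.sum_nonneg fun x _ => tp_nonneg (sandwich_psd hτ.1 (hEp x) _) _
    have e : ∑ x, tp (1 / (1 + p)) (flatC (actA (n x) ψ) * (cp τ p)ᵀ * (flatC (actA (n x) ψ))ᴴ) =
        QQ (1 / (1 + p)) E τ := by
      refine Finset.sum_congr rfl fun x _ => ?_
      have := tp_connect (flatC (actA (n x) ψ)) hτ hβ0 ((1 - 1 / (1 + p)) / (2 * (1 / (1 + p)))) p
        (by field_simp; ring)
      rw [this, hE]
    rw [e]
    rcases hnn.eq_or_lt with h0 | hpos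
    · rw [← h0, Real.zero_rpow h1p'.ne']
      exact (Real.exp_pos _).le
    rw [Real.rpow_def_of_pos hpos, Real.exp_le_exp]
    have e2 : (1 - 1 / (1 + p))⁻¹ = (1 + p) / p := by
      rw [inv_eq_iff_eq_inv, inv_div]; field_simp; ring
    rw [e2, ← hHβ] at h
    have h3 := mul_le_mul_of_nonneg_left h hp0.le
    have e3 : p * ((1 + p) / p * Real.log (QQ (1 / (1 + p)) E τ)) =
      (Real.log (QQ (1 / (1 + p)) E τ) * (1 + p)) := by field_simp
    rw [e3] at h3
    linarith

end Mid

section Purify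

variable {A B C X Y : Type*} [Fintype A] [DecidableEq A] [Fintype B] [DecidableEq B]
  [Fintype C] [DecidableEq C] [Fintype X] [DecidableEq X] [Fintype Y] [DecidableEq Y]

lemma msqrt_herm {K : Matrix A A ℂ} (hK : K.PosSemidef) : (matRpow K (1 / 2)).IsHermitian :=
  matRpow_herm hK.1 _

lemma msqrt_sq {K : Matrix A A ℂ} (hK : K.PosSemidef) :
    matRpow K (1 / 2) * matRpow K (1 / 2) = K := by
  rw [matRpow_eq_mfc, mfc_mul hK.1]
  conv_rhs => rw [← mfc_id hK.1]
  refine mfc_congr hK.1 fun i => ?_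
  rw [← Complex.ofReal_mul]
  congr 1
  split_ifs with h
  · rw [h, mul_zero]
  · rw [← Real.sqrt_eq_rpow, Real.mul_self_sqrt (hK.eigenvalues_nonneg i)]

lemma bilin_bound (G : Matrix A A ℂ) (c : ℝ) (h : ‖Matrix.toEuclideanCLM (𝕜 := ℂ) G‖ ≤ c)
    (ξ η : A → ℂ) : ‖∑ a, ∑ a', ξ a * G a a' * η a'‖ ≤
      c * (√(∑ a, ‖ξ a‖ ^ 2) * √(∑ a, ‖η a‖ ^ 2)) := by
  set u : EuclideanSpace ℂ A := WithLp.toLp 2 (star ξ) with hu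
  set v : EuclideanSpace ℂ A := WithLp.toLp 2 η with hv
  have e : ∑ a, ∑ a', ξ a * G a a' * η a' = inner ℂ u (Matrix.toEuclideanCLM (𝕜 := ℂ) G v) := by
    rw [PiLp.inner_apply]
    refine Finset.sum_congr rfl fun a _ => ?_
    simp [hu, hv, mulVec, dotProduct, Finset.mul_sum, Finset.sum_mul, mul_comm, mul_left_comm]
  have n1 : ‖u‖ = √(∑ a, ‖ξ a‖ ^ 2) := by rw [EuclideanSpace.norm_eq]; simp [hu]
  have n2 : ‖v‖ = √(∑ a, ‖η a‖ ^ 2) := by rw [EuclideanSpace.norm_eq]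
  rw [e, ← n1, ← n2]
  refine (norm_inner_le_norm _ _).trans ?_
  have := (Matrix.toEuclideanCLM (𝕜 := ℂ) G).le_of_opNorm_le h v
  have hu0 := norm_nonneg u
  nlinarith

lemma bilin_kron {K : Type*} [Fintype K] [DecidableEq K] (G : Matrix A A ℂ) (c : ℝ) (hc : 0 ≤ c)
    (h : ∀ ξ η : A → ℂ, ‖∑ a, ∑ a', ξ a * G a a' * η a'‖ ≤
      c * (√(∑ a, ‖ξ a‖ ^ 2) * √(∑ a, ‖η a‖ ^ 2))) (ξ η : A × K → ℂ) :
    ‖∑ a, ∑ a', ξ a * (G ⊗ₖ (1 : Matrix K K ℂ)) a a' * η a'‖ ≤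
      c * (√(∑ a, ‖ξ a‖ ^ 2) * √(∑ a, ‖η a‖ ^ 2)) := by
  have e : ∑ a, ∑ a', ξ a * (G ⊗ₖ (1 : Matrix K K ℂ)) a a' * η a' =
      ∑ d, ∑ a, ∑ a', ξ (a, d) * G a a' * η (a', d) := by
    simp only [Fintype.sum_prod_type, kroneckerMap_apply, one_apply]
    rw [Finset.sum_comm]
    refine Finset.sum_congr rfl fun d _ => Finset.sum_congr rfl fun a _ =>
      Finset.sum_congr rfl fun a' _ => ?_
    rw [Finset.sum_eq_single d] <;> simp +contextual [eq_comm]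
  rw [e]
  refine (norm_sum_le _ _).trans ((Finset.sum_le_sum fun d _ => h (fun a => ξ (a, d))
    (fun a => η (a, d))).trans ?_)
  rw [← Finset.mul_sum]
  refine mul_le_mul_of_nonneg_left ?_ hc
  have := Real.sum_sqrt_mul_sqrt_le (Finset.univ : Finset K)
    (f := fun d => ∑ a, ‖ξ (a, d)‖ ^ 2) (g := fun d => ∑ a, ‖η (a, d)‖ ^ 2)
    (fun d => Finset.sum_nonneg fun _ _ => by positivity)
    (fun d => Finset.sum_nonneg fun _ _ => by positivity)
  refine this.trans (le_of_eq ?_)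
  simp only [Fintype.sum_prod_type]
  rw [Finset.sum_comm (f := fun d a => ‖ξ (a, d)‖ ^ 2),
    Finset.sum_comm (f := fun d a => ‖η (a, d)‖ ^ 2)]

lemma trFstThird_cyc (G : Matrix A A ℂ) (R : Matrix (A × B × C) (A × B × C) ℂ) :
    trFstThird ((G ⊗ₖ (1 : Matrix (B × C) (B × C) ℂ)) * R) =
      trFstThird (R * (G ⊗ₖ (1 : Matrix (B × C) (B × C) ℂ))) := by
  ext b b'
  have e1 : ∀ i k, ((G ⊗ₖ (1 : Matrix (B × C) (B × C) ℂ)) * R) (i, b, k) (i, b', k) =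
      ∑ j, G i j * R (j, b, k) (i, b', k) := by
    intro i k
    simp only [mul_apply, kroneckerMap_apply]
    rw [Fintype.sum_prod_type]
    refine Finset.sum_congr rfl fun j _ => ?_
    rw [Finset.sum_eq_single (b, k)] <;> simp +contextual [one_apply, eq_comm]
  have e2 : ∀ i k, (R * (G ⊗ₖ (1 : Matrix (B × C) (B × C) ℂ))) (i, b, k) (i, b', k) =
      ∑ j, G j i * R (i, b, k) (j, b', k) := by
    intro i k
    simp only [mul_apply, kroneckerMap_apply]
    rw [Fintype.sum_prod_type]
    refine Finset.sum_congr rfl fun j _ => ?_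
    rw [Finset.sum_eq_single (b', k)] <;> simp +contextual [one_apply, eq_comm, mul_comm]
  simp only [trFstThird, of_apply, e1, e2]
  rw [Finset.sum_comm, Finset.sum_comm (γ := A)]
  refine Finset.sum_congr rfl fun k _ => ?_
  rw [Finset.sum_comm]

/-- swapping the last two tensor factors -/
def swp (ρ : Matrix (A × B × C) (A × B × C) ℂ) : Matrix (A × C × B) (A × C × B) ℂ :=
  ρ.submatrix (fun q => (q.1, q.2.2, q.2.1)) (fun q => (q.1, q.2.2, q.2.1))

lemma trFstSnd_swp (G : Matrix A A ℂ) (ρ : Matrix (A × B × C) (A × B × C) ℂ) :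
    trFstThird ((G ⊗ₖ (1 : Matrix (C × B) (C × B) ℂ)) * swp ρ) =
      trFstSnd ((G ⊗ₖ (1 : Matrix (B × C) (B × C) ℂ)) * ρ) := by
  ext b b'
  simp only [trFstThird, trFstSnd, of_apply]
  refine Finset.sum_congr rfl fun i _ => Finset.sum_congr rfl fun k _ => ?_
  simp only [mul_apply, kroneckerMap_apply, Fintype.sum_prod_type, swp, submatrix_apply, one_apply,
    Prod.mk.injEq]
  refine Finset.sum_congr rfl fun j _ => ?_
  rw [Finset.sum_comm]
  refine Finset.sum_congr rfl fun j _ => Finset.sum_congr rfl fun j _ => ?_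
  simp only [and_comm]

lemma swp_swp (ρ : Matrix (A × B × C) (A × B × C) ℂ) : swp (swp ρ) = ρ := rfl

lemma swp_psd {ρ : Matrix (A × B × C) (A × B × C) ℂ} (h : ρ.PosSemidef) : (swp ρ).PosSemidef :=
  h.submatrix _

lemma swp_trace (ρ : Matrix (A × B × C) (A × B × C) ℂ) : (swp ρ).trace = ρ.trace := by
  simp only [trace, diag, swp, submatrix_apply, Fintype.sum_prod_type]
  exact Finset.sum_congr rfl fun _ _ => Finset.sum_comm

/-- purification vector -/
noncomputable def pur (ρ : Matrix (A × B × C) (A × B × C) ℂ) :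
    A × (A × B × C) → B → C → ℂ :=
  fun q b c => matRpow ρ (1 / 2) (q.1, b, c) q.2

lemma actA_pur (ρ : Matrix (A × B × C) (A × B × C) ℂ) (G : Matrix A A ℂ) (q : A × (A × B × C))
    (b : B) (c : C) : actA (G ⊗ₖ (1 : Matrix (A × B × C) (A × B × C) ℂ)) (pur ρ) q b c =
      ((G ⊗ₖ (1 : Matrix (B × C) (B × C) ℂ)) * matRpow ρ (1 / 2)) (q.1, b, c) q.2 := by
  obtain ⟨a, d⟩ := q
  simp only [actA, pur, mul_apply, kroneckerMap_apply]
  rw [Fintype.sum_prod_type, Fintype.sum_prod_type]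
  refine Finset.sum_congr rfl fun j _ => ?_
  rw [Finset.sum_eq_single d, Finset.sum_eq_single (b, c)] <;>
    simp +contextual [one_apply, eq_comm]

lemma WW {ρ : Matrix (A × B × C) (A × B × C) ℂ} (hρ : ρ.PosSemidef) {G : Matrix A A ℂ}
    (hG : G.IsHermitian) :
    ((G ⊗ₖ (1 : Matrix (B × C) (B × C) ℂ)) * matRpow ρ (1 / 2)) *
      ((G ⊗ₖ (1 : Matrix (B × C) (B × C) ℂ)) * matRpow ρ (1 / 2))ᴴ =
      (G ⊗ₖ (1 : Matrix (B × C) (B × C) ℂ)) * ρ * (G ⊗ₖ (1 : Matrix (B × C) (B × C) ℂ)) := by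
  rw [conjTranspose_mul, (msqrt_herm hρ).eq, conjTranspose_kronecker, hG.eq, conjTranspose_one]
  conv_rhs => rw [← msqrt_sq hρ]
  simp only [Matrix.mul_assoc]

lemma pur_D {ρ : Matrix (A × B × C) (A × B × C) ℂ} (hρ : ρ.PosSemidef) {K : Matrix A A ℂ}
    (hK : K.PosSemidef) :
    trFstThird ((K ⊗ₖ (1 : Matrix (B × C) (B × C) ℂ)) * ρ) =
      ((flatB (actA (matRpow K (1 / 2) ⊗ₖ (1 : Matrix (A × B × C) (A × B × C) ℂ)) (pur ρ)))ᴴ *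
        flatB (actA (matRpow K (1 / 2) ⊗ₖ (1 : Matrix (A × B × C) (A × B × C) ℂ)) (pur ρ)))ᵀ := by
  have h1 : K ⊗ₖ (1 : Matrix (B × C) (B × C) ℂ) =
      (matRpow K (1 / 2) ⊗ₖ (1 : Matrix (B × C) (B × C) ℂ)) *
      (matRpow K (1 / 2) ⊗ₖ (1 : Matrix (B × C) (B × C) ℂ)) := by
    rw [← mul_kronecker_mul, msqrt_sq hK, Matrix.one_mul]
  rw [h1, Matrix.mul_assoc, trFstThird_cyc, ← WW hρ (msqrt_herm hK)]
  ext b b'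
  rw [transpose_apply, mul_apply, Fintype.sum_prod_type, Fintype.sum_prod_type]
  simp only [trFstThird, of_apply]
  refine Finset.sum_congr rfl fun a _ => ?_
  rw [Finset.sum_comm]
  refine Finset.sum_congr rfl fun k _ => ?_
  rw [mul_apply]
  refine Finset.sum_congr rfl fun d _ => ?_
  rw [conjTranspose_apply, conjTranspose_apply, mul_comm, ← actA_pur _ _ (a, d),
    ← actA_pur _ _ (a, d)]
  rfl

lemma pur_E {ρ : Matrix (A × B × C) (A × B × C) ℂ} (hρ : ρ.PosSemidef) {K : Matrix A A ℂ}
    (hK : K.PosSemidef) :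
    trFstSnd ((K ⊗ₖ (1 : Matrix (B × C) (B × C) ℂ)) * ρ) =
      ((flatC (actA (matRpow K (1 / 2) ⊗ₖ (1 : Matrix (A × B × C) (A × B × C) ℂ)) (pur ρ)))ᴴ *
        flatC (actA (matRpow K (1 / 2) ⊗ₖ (1 : Matrix (A × B × C) (A × B × C) ℂ)) (pur ρ)))ᵀ := by
  have h1 : K ⊗ₖ (1 : Matrix (C × B) (C × B) ℂ) =
      (matRpow K (1 / 2) ⊗ₖ (1 : Matrix (C × B) (C × B) ℂ)) *
      (matRpow K (1 / 2) ⊗ₖ (1 : Matrix (C × B) (C × B) ℂ)) := by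
    rw [← mul_kronecker_mul, msqrt_sq hK, Matrix.one_mul]
  have h2 : trFstSnd ((K ⊗ₖ (1 : Matrix (B × C) (B × C) ℂ)) * ρ) =
      trFstSnd ((matRpow K (1 / 2) ⊗ₖ (1 : Matrix (B × C) (B × C) ℂ)) * ρ *
        (matRpow K (1 / 2) ⊗ₖ (1 : Matrix (B × C) (B × C) ℂ))) := by
    rw [← trFstSnd_swp, h1, Matrix.mul_assoc, trFstThird_cyc, Matrix.mul_assoc]
    have h3 := trFstSnd_swp (matRpow K (1 / 2))
      (ρ * (matRpow K (1 / 2) ⊗ₖ (1 : Matrix (B × C) (B × C) ℂ)))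
    rw [Matrix.mul_assoc, ← h3]
    congr 2
    have h4 : swp (matRpow K (1 / 2) ⊗ₖ (1 : Matrix (B × C) (B × C) ℂ)) =
      matRpow K (1 / 2) ⊗ₖ (1 : Matrix (C × B) (C × B) ℂ) := by
      ext ⟨a, b, c⟩ ⟨a', b', c'⟩
      simp [swp, kroneckerMap_apply, one_apply, and_comm]
    rw [← h4]
    exact (submatrix_mul_equiv ρ _ _ ((Equiv.refl A).prodCongr (Equiv.prodComm C B)) _)
  rw [h2, ← WW hρ (msqrt_herm hK)]
  ext b b'
  rw [transpose_apply, mul_apply, Fintype.sum_prod_type, Fintype.sum_prod_type]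
  simp only [trFstSnd, of_apply]
  refine Finset.sum_congr rfl fun a _ => ?_
  rw [Finset.sum_comm]
  refine Finset.sum_congr rfl fun k _ => ?_
  rw [mul_apply]
  refine Finset.sum_congr rfl fun d _ => ?_
  rw [conjTranspose_apply, conjTranspose_apply, mul_comm, ← actA_pur _ _ (a, d),
    ← actA_pur _ _ (a, d)]
  rfl

lemma trFstThird_trace (R : Matrix (A × B × C) (A × B × C) ℂ) : (trFstThird R).trace = R.trace := by
  simp only [trace, diag, trFstThird, of_apply, Fintype.sum_prod_type]
  rw [Finset.sum_comm]

lemma trFstSnd_trace (R : Matrix (A × B × C) (A × B × C) ℂ) : (trFstSnd R).trace = R.trace := by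
  simp only [trace, diag, trFstSnd, of_apply, Fintype.sum_prod_type]
  rw [Finset.sum_comm]
  exact Finset.sum_congr rfl fun _ _ => Finset.sum_comm

lemma kron_sum_one (M : X → Matrix A A ℂ) (h : ∑ x, M x = 1) (R : Type*) [Fintype R] [DecidableEq R] :
    ∑ x, (M x ⊗ₖ (1 : Matrix R R ℂ)) = 1 := by
  rw [← one_kronecker_one (α := ℂ) (m := A) (n := R), ← h]
  ext ⟨a, b⟩ ⟨a', b'⟩
  simp [Matrix.sum_apply, kroneckerMap_apply, Finset.sum_mul]

lemma state_form [Nonempty X] [Nonempty Y]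
    (ρ : Matrix (A × B × C) (A × B × C) ℂ) (hρ : ρ.PosSemidef) (hρ1 : ρ.trace = 1)
    (M : X → Matrix A A ℂ) (N : Y → Matrix A A ℂ)
    (hM : ∀ x, (M x).PosSemidef) (hMsum : ∑ x, M x = 1)
    (hN : ∀ y, (N y).PosSemidef) (hNsum : ∑ y, N y = 1)
    (c : ℝ) (hc0 : 0 ≤ c)
    (hc : ∀ x y, ‖Matrix.toEuclideanCLM (𝕜 := ℂ)
      (matRpow (N y) (1 / 2) * matRpow (M x) (1 / 2))‖ ≤ c)
    (p : ℝ) (hp0 : 0 < p) (hp1 : p < 1) :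
    0 < c ∧ -(2 * Real.log c) ≤ condSandwichedRenyiUp (1 / (1 - p))
        (blk fun x => trFstThird ((M x ⊗ₖ (1 : Matrix (B × C) (B × C) ℂ)) * ρ)) +
      condSandwichedRenyiUp (1 / (1 + p))
        (blk fun y => trFstSnd ((N y ⊗ₖ (1 : Matrix (B × C) (B × C) ℂ)) * ρ)) := by
  have hne : Nonempty (A × B × C) := by
    by_contra h
    rw [not_nonempty_iff] at h
    simp [trace] at hρ1
  obtain ⟨a0, b0, c0⟩ := hne
  have : Nonempty A := ⟨a0⟩
  have : Nonempty B := ⟨b0⟩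
  have : Nonempty C := ⟨c0⟩
  have herm : ∀ {K : Matrix A A ℂ}, K.PosSemidef →
      (matRpow K (1 / 2) ⊗ₖ (1 : Matrix (A × B × C) (A × B × C) ℂ)).IsHermitian := by
    intro K hK
    unfold IsHermitian
    rw [conjTranspose_kronecker, (msqrt_herm hK).eq, conjTranspose_one]
  have sq : ∀ {K : Matrix A A ℂ}, K.PosSemidef →
      (matRpow K (1 / 2) ⊗ₖ (1 : Matrix (A × B × C) (A × B × C) ℂ)) *
      (matRpow K (1 / 2) ⊗ₖ (1 : Matrix (A × B × C) (A × B × C) ℂ)) = K ⊗ₖ 1 := by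
    intro K hK
    rw [← mul_kronecker_mul, msqrt_sq hK, Matrix.one_mul]
  refine mid_form (fun x => matRpow (M x) (1 / 2) ⊗ₖ (1 : Matrix (A × B × C) (A × B × C) ℂ))
    (fun x => herm (hM x)) ?_
    (fun y => matRpow (N y) (1 / 2) ⊗ₖ (1 : Matrix (A × B × C) (A × B × C) ℂ))
    (fun y => herm (hN y)) ?_ c hc0 ?_ p hp0 hp1 (pur ρ) _ (fun x => pur_D hρ (hM x)) _
    (fun y => pur_E hρ (hN y)) ?_ ?_
  · simp only [sq (hM _)]
    exact kron_sum_one M hMsum _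
  · simp only [sq (hN _)]
    exact kron_sum_one N hNsum _
  · intro y x ξ η
    simp only [← mul_kronecker_mul, Matrix.one_mul]
    exact bilin_kron _ c hc0 (bilin_bound _ c (hc x y)) ξ η
  · simp only [trFstThird_trace]
    rw [← trace_sum, ← Finset.sum_mul, kron_sum_one M hMsum, Matrix.one_mul, hρ1]
  · simp only [trFstSnd_trace]
    rw [← trace_sum, ← Finset.sum_mul, kron_sum_one N hNsum, Matrix.one_mul, hρ1]

lemma msqrt_contr (M : X → Matrix A A ℂ) (hM : ∀ x, (M x).PosSemidef) (hMsum : ∑ x, M x = 1) (x : X) :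
    ‖Matrix.toEuclideanCLM (𝕜 := ℂ) (matRpow (M x) (1 / 2))‖ ≤ 1 := by
  refine ContinuousLinearMap.opNorm_le_bound _ zero_le_one fun v => ?_
  rw [one_mul]
  have key : ∀ x, ‖Matrix.toEuclideanCLM (𝕜 := ℂ) (matRpow (M x) (1 / 2)) v‖ ^ 2 =
      (star v.ofLp ⬝ᵥ (M x *ᵥ v.ofLp)).re := by
    intro x
    rw [EuclideanSpace.norm_sq_eq]
    have h1 : star v.ofLp ⬝ᵥ (M x *ᵥ v.ofLp) =
        star (matRpow (M x) (1 / 2) *ᵥ v.ofLp) ⬝ᵥ (matRpow (M x) (1 / 2) *ᵥ v.ofLp) := by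
      conv_lhs => rw [← msqrt_sq (hM x)]
      rw [star_mulVec, (msqrt_herm (hM x)).eq, ← dotProduct_mulVec, mulVec_mulVec]
    rw [h1, dotProduct, Complex.re_sum]
    refine Finset.sum_congr rfl fun i _ => ?_
    simp [← Complex.normSq_eq_norm_sq, Complex.normSq_apply]
  have hs : ∑ x, ‖Matrix.toEuclideanCLM (𝕜 := ℂ) (matRpow (M x) (1 / 2)) v‖ ^ 2 = ‖v‖ ^ 2 := by
    simp only [key]
    rw [← Complex.re_sum, ← dotProduct_sum, ← Matrix.sum_mulVec, hMsum, Matrix.one_mulVec,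
      EuclideanSpace.norm_sq_eq, dotProduct, Complex.re_sum]
    refine Finset.sum_congr rfl fun i _ => ?_
    simp [← Complex.normSq_eq_norm_sq, Complex.normSq_apply]
  have h2 := Finset.single_le_sum (s := Finset.univ)
    (f := fun x => ‖Matrix.toEuclideanCLM (𝕜 := ℂ) (matRpow (M x) (1 / 2)) v‖ ^ 2)
    (fun _ _ => by positivity) (Finset.mem_univ x)
  rw [hs] at h2
  exact (sq_le_sq₀ (norm_nonneg _) (norm_nonneg _)).mp h2

end Purify

theorem uncertainty_sandwiched_up {A B C X Y : Type*}
    [Fintype A] [DecidableEq A] [Fintype B] [DecidableEq B] [Fintype C] [DecidableEq C]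
    [Fintype X] [DecidableEq X] [Nonempty X] [Fintype Y] [DecidableEq Y] [Nonempty Y]
    (ρ : Matrix (A × B × C) (A × B × C) ℂ) (hρ : ρ.PosSemidef) (hρ1 : ρ.trace = 1)
    (M : X → Matrix A A ℂ) (N : Y → Matrix A A ℂ)
    (hM : ∀ x, (M x).PosSemidef) (hMsum : ∑ x, M x = 1)
    (hN : ∀ y, (N y).PosSemidef) (hNsum : ∑ y, N y = 1)
    (c : ℝ)
    (hc : c = ⨆ x : X, ⨆ y : Y, ‖Matrix.toEuclideanCLM (𝕜 := ℂ)
      (matRpow (M x) (1 / 2) * matRpow (N y) (1 / 2))‖)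
    (α β : ℝ) (hα : (1 : ℝ) / 2 < α) (hβ : (1 : ℝ) / 2 < β)
    (hab : 1 / α + 1 / β = 2) (hα1 : α ≠ 1) :
    let ρXB : Matrix (X × B) (X × B) ℂ := Matrix.of fun p p' =>
      if p.1 = p'.1 then
        trFstThird ((M p.1 ⊗ₖ (1 : Matrix (B × C) (B × C) ℂ)) * ρ) p.2 p'.2 else 0;
    let ρYC : Matrix (Y × C) (Y × C) ℂ := Matrix.of fun p p' =>
      if p.1 = p'.1 then
        trFstSnd ((N p.1 ⊗ₖ (1 : Matrix (B × C) (B × C) ℂ)) * ρ) p.2 p'.2 else 0;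
    condSandwichedRenyiUp α ρXB + condSandwichedRenyiUp β ρYC ≥ Real.log (1 / c) := by
  intro ρXB ρYC
  have hX : ρXB = blk fun x => trFstThird ((M x ⊗ₖ (1 : Matrix (B × C) (B × C) ℂ)) * ρ) := rfl
  have hY : ρYC = blk fun y => trFstSnd ((N y ⊗ₖ (1 : Matrix (B × C) (B × C) ℂ)) * ρ) := rfl
  have hle : ∀ x y, ‖Matrix.toEuclideanCLM (𝕜 := ℂ)
      (matRpow (M x) (1 / 2) * matRpow (N y) (1 / 2))‖ ≤ c := by
    intro x y
    rw [hc]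
    refine le_trans ?_ (le_ciSup (Set.finite_range _).bddAbove x)
    exact le_ciSup (f := fun y => ‖Matrix.toEuclideanCLM (𝕜 := ℂ)
      (matRpow (M x) (1 / 2) * matRpow (N y) (1 / 2))‖) (Set.finite_range _).bddAbove y
  have hle' : ∀ x y, ‖Matrix.toEuclideanCLM (𝕜 := ℂ)
      (matRpow (N y) (1 / 2) * matRpow (M x) (1 / 2))‖ ≤ c := by
    intro x y
    have e : matRpow (N y) (1 / 2) * matRpow (M x) (1 / 2) =
        star (matRpow (M x) (1 / 2) * matRpow (N y) (1 / 2)) := by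
      rw [star_eq_conjTranspose, conjTranspose_mul, (msqrt_herm (hN y)).eq, (msqrt_herm (hM x)).eq]
    rw [e, map_star, ContinuousLinearMap.star_eq_adjoint, LinearIsometryEquiv.norm_map]
    exact hle x y
  have hc0 : 0 ≤ c := (norm_nonneg _).trans
    (hle (Classical.arbitrary X) (Classical.arbitrary Y))
  have hc1 : c ≤ 1 := by
    rw [hc]
    refine ciSup_le fun x => ciSup_le fun y => ?_
    rw [map_mul]
    refine (norm_mul_le _ _).trans ?_
    exact mul_le_one₀ (msqrt_contr M hM hMsum x) (norm_nonneg _) (msqrt_contr N hN hNsum y)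
  have fin : ∀ H : ℝ, 0 < c → -(2 * Real.log c) ≤ H → H ≥ Real.log (1 / c) := by
    intro H h0 h
    have := Real.log_nonpos hc0 hc1
    rw [one_div, Real.log_inv]
    linarith
  have hα0 : 0 < α := by linarith
  have hβ0 : 0 < β := by linarith
  rw [hX, hY]
  rcases lt_or_gt_of_ne hα1 with h | h
  · -- `α < 1`: swap the roles
    have hinv : 1 < 1 / α := by rw [lt_div_iff₀ hα0]; linarith
    have hinv2 : 1 / α < 2 := by rw [div_lt_iff₀ hα0]; linarith
    have eα : α = 1 / (1 + (1 / α - 1)) := by field_simp; ring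
    have eβ : β = 1 / (1 - (1 / α - 1)) := by
      have : 1 - (1 / α - 1) = 1 / β := by linarith
      rw [this, one_div_one_div]
    have key := state_form (swp ρ) (swp_psd hρ) (by rw [swp_trace, hρ1]) N M hN hNsum hM hMsum c hc0
      (fun y x => hle x y) (1 / α - 1) (by linarith) (by linarith)
    have e1 : ∀ G : Matrix A A ℂ, trFstSnd ((G ⊗ₖ (1 : Matrix (C × B) (C × B) ℂ)) * swp ρ) =
        trFstThird ((G ⊗ₖ (1 : Matrix (B × C) (B × C) ℂ)) * ρ) := by
      intro G
      rw [← trFstSnd_swp, swp_swp]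
    simp only [trFstSnd_swp, e1, ← eα, ← eβ] at key
    refine fin _ key.1 ?_
    rw [add_comm]
    exact key.2
  · have hinv : 1 / α < 1 := by rw [div_lt_iff₀ hα0]; linarith
    have hinv2 : 0 < 1 / α := by positivity
    have eα : α = 1 / (1 - (1 - 1 / α)) := by rw [sub_sub_cancel, one_div_one_div]
    have eβ : β = 1 / (1 + (1 - 1 / α)) := by
      have : 1 + (1 - 1 / α) = 1 / β := by linarith
      rw [this, one_div_one_div]
    have key := state_form ρ hρ hρ1 M N hM hMsum hN hNsum c hc0 hle' (1 - 1 / α)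
      (by linarith) (by linarith)
    rw [← eα, ← eβ] at key
    exact fin _ key.1 key.2
end

section
/- Maassen–Uffink relation for Rényi entropies: Let ρ be a density matrix on ℂ^A, let {M_x}_{x∈X} and {N_y}_{y∈Y} be POVMs on ℂ^A, and let c := max_{x,y} ‖ M_x^{1/2} N_y^{1/2} ‖ where ‖·‖ is the operator norm. Let P(x) := tr(M_x ρ) and Q(y) := tr(N_y ρ) be the outcome probability distributions. Then for all α, β ∈ (1/2,∞) with 1/α + 1/β = 2 and α ≠ 1: H_α(P) + H_β(Q) ≥ log(1/c), where H_γ(P) := (1−γ)⁻¹ · log(∑_x P(x)^γ) is the classical Rényi entropy of order γ. -/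
open scoped Kronecker ComplexOrder
open Matrix

namespace MURenyi

lemma exp_log_sq (a r : ℝ) (s : ℝ) (hr : 0 ≤ r) (ha : 0 < a) (h : 2 * s + 1 = a) :
    Real.exp (s * Real.log r) ^ 2 * r = r ^ a := by
  rcases hr.eq_or_lt with h0 | h0
  · subst h0; simp [Real.zero_rpow ha.ne']
  · rw [Real.rpow_def_of_pos h0, ← h]
    nth_rewrite 2 [← Real.exp_log h0]
    rw [← Real.exp_nat_mul, ← Real.exp_add]
    congr 1; push_cast; ring

lemma exp_log_sqrt (a r : ℝ) (s : ℝ) (hr : 0 ≤ r) (ha : 0 < a) (h : s + 1 / 2 = a) :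
    Real.exp (s * Real.log r) * Real.sqrt r = r ^ a := by
  rcases hr.eq_or_lt with h0 | h0
  · subst h0; simp [Real.zero_rpow ha.ne']
  · rw [Real.sqrt_eq_rpow, Real.rpow_def_of_pos h0, Real.rpow_def_of_pos h0, ← h, ← Real.exp_add]
    congr 1; ring

lemma exp_log_one (a r : ℝ) (hr : 0 ≤ r) (ha : 0 < a) :
    Real.exp ((a - 1) * Real.log r) * r = r ^ a := by
  rcases hr.eq_or_lt with h0 | h0
  · subst h0; simp [Real.zero_rpow ha.ne']
  · rw [Real.rpow_def_of_pos h0]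
    nth_rewrite 2 [← Real.exp_log h0]
    rw [← Real.exp_add]
    congr 1; ring

lemma core {X Y : Type*} [Fintype X] [Fintype Y] (P : X → ℝ) (Q : Y → ℝ)
    (t : X → Y → ℂ) (c : ℝ) (hP : ∀ x, 0 ≤ P x) (hQ : ∀ y, 0 ≤ Q y)
    (hP1 : ∑ x, P x = 1) (hQ1 : ∑ y, Q y = 1)
    (htP : ∀ x, ∑ y, t x y = P x)
    (hinf : ∀ x y, ‖t x y‖ ^ 2 ≤ c * (P x * Q y))
    (hl2 : ∀ (p : X → ℂ) (q : Y → ℂ), ‖∑ x, ∑ y, p x * q y * t x y‖ ^ 2 ≤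
      (∑ x, ‖p x‖ ^ 2 * P x) * (∑ y, ‖q y‖ ^ 2 * Q y))
    (α β : ℝ) (hα : 1 < α) (hβ : 1 / 2 < β) (hab : 1 / α + 1 / β = 2) :
    Real.log (1 / c) ≤ (1 - α)⁻¹ * Real.log (∑ x, P x ^ α) +
      (1 - β)⁻¹ * Real.log (∑ y, Q y ^ β) := by
  have hα0 : 0 < α := by linarith
  have hβ0 : 0 < β := by linarith
  have hθ : (α - 1) / α = (1 - β) / β := by
    field_simp at hab ⊢; linarith
  set θ : ℝ := (α - 1) / α with hθdef
  have hθα : θ * α = α - 1 := by rw [hθdef]; field_simp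
  have hθβ : θ * β = 1 - β := by rw [hθ]; field_simp
  have hθ0 : 0 < θ := div_pos (by linarith) hα0
  have hθ1 : θ < 1 := by rw [hθdef, div_lt_one hα0]; linarith
  have hβ1 : β < 1 := by nlinarith
  have exP : ∃ x, 0 < P x := by
    by_contra! h
    have : ∑ x, P x ≤ 0 := Finset.sum_nonpos fun x _ => h x
    linarith
  have exQ : ∃ y, 0 < Q y := by
    by_contra! h
    have : ∑ x, Q x ≤ 0 := Finset.sum_nonpos fun x _ => h x
    linarith
  have hSP : 0 < ∑ x, P x ^ α := by
    obtain ⟨x, hx⟩ := exP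
    exact Finset.sum_pos' (fun i _ => Real.rpow_nonneg (hP i) _)
      ⟨x, Finset.mem_univ _, Real.rpow_pos_of_pos hx _⟩
  have hSQ : 0 < ∑ y, Q y ^ β := by
    obtain ⟨x, hx⟩ := exQ
    exact Finset.sum_pos' (fun i _ => Real.rpow_nonneg (hQ i) _)
      ⟨x, Finset.mem_univ _, Real.rpow_pos_of_pos hx _⟩
  have hc : 0 < c := by
    by_contra! h
    obtain ⟨x, hx⟩ := exP
    have h0 : ∀ y, t x y = 0 := fun y => by
      have h1 := hinf x y
      have h2 : c * (P x * Q y) ≤ 0 :=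
        mul_nonpos_of_nonpos_of_nonneg h (mul_nonneg (hP x) (hQ y))
      have h3 : ‖t x y‖ ^ 2 = 0 := le_antisymm (h1.trans h2) (by positivity)
      simpa using h3
    have := htP x
    simp only [h0, Finset.sum_const_zero] at this
    have h4 : P x = 0 := by exact_mod_cast this.symm
    linarith
  set SP := ∑ x, P x ^ α with hSPd
  set SQ := ∑ y, Q y ^ β with hSQd
  let g : ℂ → ℂ := fun z => ((α - 1) / 2 : ℝ) + z * ((α / 2 : ℝ) : ℂ)
  let h : ℂ → ℂ := fun z => ((β - 1) / 2 : ℝ) + z * ((β / 2 : ℝ) : ℂ)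
  have gre : ∀ z, (g z).re = (α - 1) / 2 + z.re * (α / 2) := fun z => by
    simp only [g, Complex.add_re, Complex.ofReal_re, Complex.re_mul_ofReal]
  have hre : ∀ z, (h z).re = (β - 1) / 2 + z.re * (β / 2) := fun z => by
    simp only [h, Complex.add_re, Complex.ofReal_re, Complex.re_mul_ofReal]
  let p : ℂ → X → ℂ := fun z x => Complex.exp (g z * (Real.log (P x) : ℝ))
  let q : ℂ → Y → ℂ := fun z y => Complex.exp (h z * (Real.log (Q y) : ℝ))
  have pn : ∀ z x, ‖p z x‖ = Real.exp ((g z).re * Real.log (P x)) := fun z x => by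
    simp only [p, Complex.norm_exp, Complex.re_mul_ofReal]
  have qn : ∀ z x, ‖q z x‖ = Real.exp ((h z).re * Real.log (Q x)) := fun z x => by
    simp only [q, Complex.norm_exp, Complex.re_mul_ofReal]
  let f : ℂ → ℂ := fun z => ∑ x, ∑ y, p z x * q z y * t x y
  have fdiff : Differentiable ℂ f := by
    simp only [f, p, q, g, h]
    fun_prop
  have bexp : ∀ u v r L : ℝ, 0 ≤ r → r ≤ 1 →
      Real.exp ((u + r * v) * L) ≤ Real.exp (|u * L| + |v * L|) := by
    intro u v r L h0 h1
    apply Real.exp_le_exp.2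
    have e1 := le_abs_self (u * L)
    have e2 : r * (v * L) ≤ |v * L| :=
      (mul_le_mul_of_nonneg_left (le_abs_self _) h0).trans (mul_le_of_le_one_left (abs_nonneg _) h1)
    nlinarith
  have key := Complex.HadamardThreeLines.norm_le_interp_of_mem_verticalClosedStrip₀₁' f
    (z := (θ : ℂ)) (a := (SP * SQ) ^ (1 / 2 : ℝ)) (b := c ^ (1 / 2 : ℝ) * (SP * SQ))
    (by simp [Complex.HadamardThreeLines.verticalClosedStrip, hθ0.le, hθ1.le])
    fdiff.diffContOnCl
    (by
      refine ⟨∑ x, ∑ y, Real.exp (|(α - 1) / 2 * Real.log (P x)| + |α / 2 * Real.log (P x)|) *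
        Real.exp (|(β - 1) / 2 * Real.log (Q y)| + |β / 2 * Real.log (Q y)|) * ‖t x y‖, ?_⟩
      rintro _ ⟨z, hz, rfl⟩
      simp only [Complex.HadamardThreeLines.verticalClosedStrip, Set.mem_preimage, Set.mem_Icc] at hz
      simp only [Function.comp, f]
      refine (norm_sum_le _ _).trans (Finset.sum_le_sum fun x _ => ?_)
      refine (norm_sum_le _ _).trans (Finset.sum_le_sum fun y _ => ?_)
      rw [norm_mul, norm_mul, pn, qn, gre, hre]
      have e1 := bexp ((α - 1) / 2) (α / 2) z.re (Real.log (P x)) hz.1 hz.2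
      have e2 := bexp ((β - 1) / 2) (β / 2) z.re (Real.log (Q y)) hz.1 hz.2
      gcongr)
    (by
      intro z hz
      simp only [Set.mem_preimage, Set.mem_singleton_iff] at hz
      have e := hl2 (p z) (q z)
      have eP : ∀ x, ‖p z x‖ ^ 2 * P x = P x ^ α := fun x => by
        rw [pn]; exact exp_log_sq _ _ _ (hP x) hα0 (by rw [gre, hz]; ring)
      have eQ : ∀ x, ‖q z x‖ ^ 2 * Q x = Q x ^ β := fun x => by
        rw [qn]; exact exp_log_sq _ _ _ (hQ x) hβ0 (by rw [hre, hz]; ring)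
      simp only [eP, eQ] at e
      rw [← Real.sqrt_eq_rpow]
      exact Real.le_sqrt_of_sq_le e)
    (by
      intro z hz
      simp only [Set.mem_preimage, Set.mem_singleton_iff] at hz
      have eP : ∀ x, ‖p z x‖ * Real.sqrt (P x) = P x ^ α := fun x => by
        rw [pn]; exact exp_log_sqrt _ _ _ (hP x) hα0 (by rw [gre, hz]; ring)
      have eQ : ∀ x, ‖q z x‖ * Real.sqrt (Q x) = Q x ^ β := fun x => by
        rw [qn]; exact exp_log_sqrt _ _ _ (hQ x) hβ0 (by rw [hre, hz]; ring)
      rw [← Real.sqrt_eq_rpow, hSPd, hSQd, Finset.sum_mul_sum, Finset.mul_sum]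
      simp only [f]
      refine (norm_sum_le _ _).trans (Finset.sum_le_sum fun x _ => ?_)
      rw [Finset.mul_sum]
      refine (norm_sum_le _ _).trans (Finset.sum_le_sum fun y _ => ?_)
      rw [norm_mul, norm_mul, ← eP, ← eQ]
      have e : ‖t x y‖ ≤ Real.sqrt c * (Real.sqrt (P x) * Real.sqrt (Q y)) := by
        rw [← Real.sqrt_mul (hP x), ← Real.sqrt_mul hc.le]
        exact Real.le_sqrt_of_sq_le (hinf x y)
      calc _ ≤ ‖p z x‖ * ‖q z y‖ * (Real.sqrt c * (Real.sqrt (P x) * Real.sqrt (Q y))) := by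
            gcongr
        _ = _ := by ring)
  have fθ : f θ = (SP : ℂ) := by
    have g1 : g θ = ((α - 1 : ℝ) : ℂ) := by
      simp only [g]; norm_cast; linarith
    have h1 : h θ = 0 := by
      simp only [h]; norm_cast; linarith
    simp only [f, p, q, g1, h1, zero_mul, Complex.exp_zero, mul_one, ← Finset.mul_sum, htP, hSPd]
    push_cast
    refine Finset.sum_congr rfl fun x _ => ?_
    have := exp_log_one α (P x) (hP x) hα0
    exact_mod_cast this
  rw [fθ, Complex.norm_real, Real.norm_of_nonneg hSP.le, Complex.ofReal_re] at key
  have hpos : 0 < SP * SQ := mul_pos hSP hSQ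
  have L := Real.log_le_log hSP key
  rw [Real.log_mul (by positivity) (by positivity), Real.log_rpow (by positivity),
    Real.log_rpow hpos, Real.log_rpow (by positivity), Real.log_mul (by positivity) hpos.ne',
    Real.log_rpow hc, Real.log_mul hSP.ne' hSQ.ne'] at L
  rw [one_div, Real.log_inv]
  set a := Real.log SP
  set b := Real.log SQ
  set l := Real.log c
  have i1 : (1 - α)⁻¹ = - (1 / (θ * α)) := by
    rw [hθα, one_div, ← inv_neg, neg_sub]
  have i2 : (1 - β)⁻¹ = 1 / (θ * β) := by rw [hθβ, one_div]
  have j1 : 1 / α = 1 - θ := by rw [hθdef]; field_simp; ring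
  have j2 : 1 / β = 1 + θ := by linarith
  have : - l ≤ (-(1 - θ) * a + (1 + θ) * b) / θ := by
    rw [le_div_iff₀ hθ0]; nlinarith
  have i1' : (1 - α)⁻¹ = - ((1 - θ) / θ) := by rw [i1, ← j1]; field_simp
  have i2' : (1 - β)⁻¹ = (1 + θ) / θ := by rw [i2, ← j2]; field_simp
  rw [i1', i2']
  calc _ ≤ _ := this
    _ = _ := by field_simp

end MURenyi

namespace MURenyi

lemma half_herm {n : Type*} [Fintype n] [DecidableEq n] (A : Matrix n n ℂ) (t : ℝ) :
    (matRpow A t)ᴴ = matRpow A t := by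
  unfold matRpow
  split_ifs with hA
  · simp only [Matrix.conjTranspose_mul, Matrix.star_eq_conjTranspose,
      Matrix.conjTranspose_conjTranspose, Matrix.diagonal_conjTranspose, Matrix.mul_assoc]
    congr 3
    ext i
    simp
  · simp

lemma half_sq {n : Type*} [Fintype n] [DecidableEq n] (A : Matrix n n ℂ) (hA : A.PosSemidef) :
    matRpow A (1 / 2) * matRpow A (1 / 2) = A := by
  have h := hA.isHermitian
  unfold matRpow
  rw [dif_pos h]
  set U := (h.eigenvectorUnitary : Matrix n n ℂ) with hU
  have hUU : star U * U = 1 := Unitary.coe_star_mul_self h.eigenvectorUnitary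
  set D := Matrix.diagonal (fun i =>
        ((if h.eigenvalues i = 0 then (0 : ℝ) else (h.eigenvalues i) ^ (1 / 2 : ℝ) : ℝ) : ℂ)) with hD
  have hDD : D * D = Matrix.diagonal (RCLike.ofReal ∘ h.eigenvalues) := by
    rw [hD, Matrix.diagonal_mul_diagonal]
    congr 1
    ext i
    have h0 := hA.eigenvalues_nonneg i
    rw [← Complex.ofReal_mul]
    simp only [Function.comp]
    split_ifs with h1
    · simp [h1]
    · rw [← Real.sqrt_eq_rpow, Real.mul_self_sqrt h0]; rfl
  have hs := h.spectral_theorem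
  rw [Unitary.conjStarAlgAut_apply] at hs
  calc U * D * star U * (U * D * star U) = U * D * (star U * U) * D * star U := by
        simp only [Matrix.mul_assoc]
    _ = U * (D * D) * star U := by rw [hUU]; simp only [Matrix.mul_assoc, Matrix.mul_one, Matrix.one_mul]
    _ = A := by rw [hDD]; exact hs.symm

lemma trace_self {n m : Type*} [Fintype n] [Fintype m] (U : Matrix n m ℂ) :
    (Uᴴ * U).trace.re = ∑ j, ∑ i, ‖U i j‖ ^ 2 := by
  simp only [Matrix.trace, Matrix.diag, Matrix.mul_apply, Matrix.conjTranspose_apply, Complex.re_sum]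
  refine Finset.sum_congr rfl fun j _ => Finset.sum_congr rfl fun i _ => ?_
  rw [← Complex.normSq_eq_norm_sq, Complex.star_def, mul_comm, Complex.mul_conj, Complex.ofReal_re]

lemma trace_cs {n m : Type*} [Fintype n] [Fintype m] (U V : Matrix n m ℂ) :
    ‖(Uᴴ * V).trace‖ ^ 2 ≤ (Uᴴ * U).trace.re * (Vᴴ * V).trace.re := by
  rw [trace_self, trace_self]
  simp only [Matrix.trace, Matrix.diag, Matrix.mul_apply, Matrix.conjTranspose_apply]
  simp only [← Finset.sum_product']
  have h1 : ‖∑ x ∈ (Finset.univ : Finset m) ×ˢ (Finset.univ : Finset n), star (U x.2 x.1) * V x.2 x.1‖ ≤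
      ∑ x ∈ (Finset.univ : Finset m) ×ˢ (Finset.univ : Finset n), ‖U x.2 x.1‖ * ‖V x.2 x.1‖ := by
    refine (norm_sum_le _ _).trans (Finset.sum_le_sum fun x _ => ?_)
    rw [norm_mul, norm_star]
  refine le_trans (pow_le_pow_left₀ (norm_nonneg _) h1 2) ?_
  exact Finset.sum_mul_sq_le_sq_mul_sq _ _ _

lemma trace_op {n : Type*} [Fintype n] [DecidableEq n] (K V : Matrix n n ℂ) :
    ((K * V)ᴴ * (K * V)).trace.re ≤ ‖Matrix.toEuclideanCLM (𝕜 := ℂ) K‖ ^ 2 * (Vᴴ * V).trace.re := by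
  rw [trace_self, trace_self, Finset.mul_sum]
  refine Finset.sum_le_sum fun j _ => ?_
  have h := (Matrix.toEuclideanCLM (𝕜 := ℂ) K).le_opNorm (WithLp.toLp 2 (fun i => V i j))
  have h2 := pow_le_pow_left₀ (norm_nonneg _) h 2
  rw [mul_pow, EuclideanSpace.norm_sq_eq, EuclideanSpace.norm_sq_eq] at h2
  exact h2

lemma trace_povm {A Y : Type*} [Fintype A] [DecidableEq A] [Fintype Y]
    (N : Y → Matrix A A ℂ) (hN : ∀ y, (N y).PosSemidef) (hNsum : ∑ y, N y = 1)
    (R : Matrix A A ℂ) (q : Y → ℂ) :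
    (((∑ y, q y • N y) * R)ᴴ * ((∑ y, q y • N y) * R)).trace.re ≤
      ∑ y, ‖q y‖ ^ 2 * (Rᴴ * N y * R).trace.re := by
  set S := ∑ y, q y • N y with hS
  have hSH : Sᴴ = ∑ y, star (q y) • N y := by
    rw [hS, Matrix.conjTranspose_sum]
    refine Finset.sum_congr rfl fun y _ => ?_
    rw [Matrix.conjTranspose_smul, (hN y).isHermitian]
  have h0 : ∀ y, 0 ≤ (((q y • 1 - S) * R)ᴴ * N y * ((q y • 1 - S) * R)).trace.re := fun y => by
    have := ((hN y).conjTranspose_mul_mul_same ((q y • 1 - S) * R)).trace_nonneg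
    exact (Complex.le_def.1 this).1
  have h1 : ∑ y, ((q y • 1 - S) * R)ᴴ * N y * ((q y • 1 - S) * R) =
      (∑ y, (star (q y) * q y) • (Rᴴ * N y * R)) - (S * R)ᴴ * (S * R) := by
    have e : ∀ y, ((q y • 1 - S) * R)ᴴ * N y * ((q y • 1 - S) * R) =
        (star (q y) * q y) • (Rᴴ * N y * R) - Rᴴ * (star (q y) • N y) * (S * R)
          - (Rᴴ * Sᴴ) * (q y • N y) * R + (Rᴴ * Sᴴ) * N y * (S * R) := fun y => by
      simp only [Matrix.conjTranspose_mul, Matrix.conjTranspose_sub, Matrix.conjTranspose_smul,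
        Matrix.conjTranspose_one, Matrix.sub_mul, Matrix.mul_sub, Matrix.smul_mul, Matrix.mul_smul,
        Matrix.one_mul, Matrix.mul_one, Matrix.mul_assoc, smul_smul, smul_sub]
      rw [mul_comm (q y)]
      abel
    rw [Finset.sum_congr rfl fun y _ => e y, Finset.sum_add_distrib, Finset.sum_sub_distrib,
      Finset.sum_sub_distrib]
    simp only [← Finset.sum_mul, ← Finset.mul_sum]
    rw [hNsum, ← hSH, ← hS, Matrix.conjTranspose_mul]
    simp only [Matrix.mul_assoc, Matrix.one_mul]
    abel
  have h2 := congrArg (fun T => T.trace.re) h1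
  simp only [Matrix.trace_sum, Matrix.trace_sub, Complex.re_sum, Complex.sub_re,
    Matrix.trace_smul, smul_eq_mul] at h2
  have h3 := Finset.sum_nonneg (s := Finset.univ) fun y _ => h0 y
  rw [h2] at h3
  have h4 : ∀ y, (star (q y) * q y * (Rᴴ * N y * R).trace).re =
      ‖q y‖ ^ 2 * (Rᴴ * N y * R).trace.re := fun y => by
    rw [Complex.star_def, mul_comm (starRingEnd ℂ (q y)), Complex.mul_conj, Complex.re_ofReal_mul,
      Complex.normSq_eq_norm_sq]
  simp only [h4] at h3
  linarith

end MURenyi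

open MURenyi in
theorem maassen_uffink_renyi {A X Y : Type*} [Fintype A] [DecidableEq A]
    [Fintype X] [Nonempty X] [Fintype Y] [Nonempty Y]
    (ρ : Matrix A A ℂ) (hρ : ρ.PosSemidef) (hρ1 : ρ.trace = 1)
    (M : X → Matrix A A ℂ) (N : Y → Matrix A A ℂ)
    (hM : ∀ x, (M x).PosSemidef) (hMsum : ∑ x, M x = 1)
    (hN : ∀ y, (N y).PosSemidef) (hNsum : ∑ y, N y = 1)
    (c : ℝ)
    (hc : c = ⨆ x : X, ⨆ y : Y, ‖Matrix.toEuclideanCLM (𝕜 := ℂ)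
      (matRpow (M x) (1 / 2) * matRpow (N y) (1 / 2))‖)
    (α β : ℝ) (hα : (1 : ℝ) / 2 < α) (hβ : (1 : ℝ) / 2 < β)
    (hab : 1 / α + 1 / β = 2) (hα1 : α ≠ 1) :
    (1 - α)⁻¹ * Real.log (∑ x, ((M x * ρ).trace.re) ^ α) +
      (1 - β)⁻¹ * Real.log (∑ y, ((N y * ρ).trace.re) ^ β) ≥ Real.log (1 / c) := by
  classical
  set R := matRpow ρ (1 / 2) with hR
  have hRR : R * R = ρ := half_sq ρ hρ
  have hRH : Rᴴ = R := half_herm ρ _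
  have tr1 : ∀ T : Matrix A A ℂ, (T * ρ).trace = (Rᴴ * T * R).trace := fun T => by
    rw [hRH, ← hRR, ← Matrix.mul_assoc, Matrix.trace_mul_comm, Matrix.mul_assoc]
  have nn : ∀ T : Matrix A A ℂ, T.PosSemidef → 0 ≤ (T * ρ).trace := fun T hT => by
    rw [tr1]; exact (hT.conjTranspose_mul_mul_same R).trace_nonneg
  have hPc : ∀ T : Matrix A A ℂ, T.PosSemidef → (((T * ρ).trace.re : ℝ) : ℂ) = (T * ρ).trace :=
    fun T hT => by
      have h := (Complex.le_def.1 (nn T hT)).2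
      apply Complex.ext
      · simp
      · simpa using h
  have sum1 : ∀ {Z : Type _} [Fintype Z] (L : Z → Matrix A A ℂ), ∑ z, L z = 1 →
      ∑ z, (L z * ρ).trace.re = 1 := fun L hL => by
    rw [← Complex.re_sum, ← Matrix.trace_sum, ← Finset.sum_mul, hL, Matrix.one_mul, hρ1,
      Complex.one_re]
  have sum2 : ∑ z, (N z * ρ).trace.re = 1 := by
    rw [← Complex.re_sum, ← Matrix.trace_sum, ← Finset.sum_mul, hNsum, Matrix.one_mul, hρ1,
      Complex.one_re]
  set P : X → ℝ := fun x => (M x * ρ).trace.re with hP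
  set Q : Y → ℝ := fun y => (N y * ρ).trace.re with hQ
  let t : X → Y → ℂ := fun x y => (M x * N y * ρ).trace
  have hP0 : ∀ x, 0 ≤ P x := fun x => (Complex.le_def.1 (nn _ (hM x))).1
  have hQ0 : ∀ y, 0 ≤ Q y := fun y => (Complex.le_def.1 (nn _ (hN y))).1
  have hl2 : ∀ (p : X → ℂ) (q : Y → ℂ), ‖∑ x, ∑ y, p x * q y * t x y‖ ^ 2 ≤
      (∑ x, ‖p x‖ ^ 2 * P x) * (∑ y, ‖q y‖ ^ 2 * Q y) := by
    intro p q
    have e1 := trace_povm M hM hMsum R (fun x => star (p x))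
    have e2 := trace_povm N hN hNsum R q
    have e3 := trace_cs ((∑ x, star (p x) • M x) * R) ((∑ y, q y • N y) * R)
    have e4 : (((∑ x, star (p x) • M x) * R)ᴴ * ((∑ y, q y • N y) * R)).trace =
        ∑ x, ∑ y, p x * q y * t x y := by
      have : ((∑ x, star (p x) • M x) * R)ᴴ * ((∑ y, q y • N y) * R) =
          Rᴴ * ((∑ x, p x • M x) * (∑ y, q y • N y)) * R := by
        rw [Matrix.conjTranspose_mul, Matrix.conjTranspose_sum]
        simp only [Matrix.conjTranspose_smul, star_star, (hM _).isHermitian.eq, Matrix.mul_assoc]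
      rw [this, ← tr1, Finset.sum_mul_sum, Finset.sum_mul, Matrix.trace_sum]
      refine Finset.sum_congr rfl fun x _ => ?_
      rw [Finset.sum_mul, Matrix.trace_sum]
      refine Finset.sum_congr rfl fun y _ => ?_
      simp only [Matrix.smul_mul, Matrix.mul_smul, smul_smul, Matrix.trace_smul, smul_eq_mul, t]
      ring
    rw [e4] at e3
    simp only [norm_star, ← tr1] at e1 e2
    refine e3.trans (mul_le_mul e1 e2 ?_ ?_)
    · rw [trace_self]; positivity
    · exact Finset.sum_nonneg fun x _ => mul_nonneg (by positivity) (hP0 x)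
  have hk : ∀ x y, ‖Matrix.toEuclideanCLM (𝕜 := ℂ)
      (matRpow (M x) (1 / 2) * matRpow (N y) (1 / 2))‖ ≤ c := fun x y => by
    rw [hc]
    exact (le_ciSup (f := fun y => ‖Matrix.toEuclideanCLM (𝕜 := ℂ)
      (matRpow (M x) (1 / 2) * matRpow (N y) (1 / 2))‖) (Set.finite_range _).bddAbove y).trans
      (le_ciSup (f := fun x => ⨆ y, ‖Matrix.toEuclideanCLM (𝕜 := ℂ)
      (matRpow (M x) (1 / 2) * matRpow (N y) (1 / 2))‖) (Set.finite_range _).bddAbove x)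
  have hinf : ∀ x y, ‖t x y‖ ^ 2 ≤ c * (P x * Q y) := by
    intro x y
    have hc0 : 0 ≤ c := (norm_nonneg _).trans (hk x y)
    have hPQ : 0 ≤ P x * Q y := mul_nonneg (hP0 x) (hQ0 y)
    have b1 : ‖t x y‖ ^ 2 ≤ P x * Q y := by
      have := hl2 (Pi.single x 1) (Pi.single y 1)
      simpa [Pi.single_apply, apply_ite] using this
    have b2 : ‖t x y‖ ^ 2 ≤ c ^ 2 * (P x * Q y) := by
      set m := matRpow (M x) (1 / 2)
      set k := matRpow (N y) (1 / 2)
      have hm : m * m = M x := half_sq _ (hM x)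
      have hk2 : k * k = N y := half_sq _ (hN y)
      have hmH : mᴴ = m := half_herm _ _
      have hkH : kᴴ = k := half_herm _ _
      have e1 := trace_cs (m * R) (m * k * (k * R))
      have e2 := trace_op (m * k) (k * R)
      have f1 : ((m * R)ᴴ * (m * k * (k * R))).trace = t x y := by
        simp only [t]
        rw [tr1, ← hm, ← hk2, Matrix.conjTranspose_mul, hmH]
        simp only [Matrix.mul_assoc]
      have f2 : ((m * R)ᴴ * (m * R)).trace.re = P x := by
        simp only [hP]
        rw [tr1, ← hm, Matrix.conjTranspose_mul, hmH]
        simp only [Matrix.mul_assoc]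
      have f3 : ((k * R)ᴴ * (k * R)).trace.re = Q y := by
        simp only [hQ]
        rw [tr1, ← hk2, Matrix.conjTranspose_mul, hkH]
        simp only [Matrix.mul_assoc]
      rw [f1, f2] at e1
      rw [f3] at e2
      have e5 := pow_le_pow_left₀ (norm_nonneg _) (hk x y) 2
      calc _ ≤ _ := e1
        _ ≤ P x * (c ^ 2 * Q y) := by
          refine mul_le_mul_of_nonneg_left (e2.trans ?_) (hP0 x)
          exact mul_le_mul_of_nonneg_right e5 (hQ0 y)
        _ = _ := by ring
    rcases le_total c 1 with h | h
    · exact b2.trans (mul_le_mul_of_nonneg_right (by nlinarith) hPQ)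
    · exact b1.trans (le_mul_of_one_le_left hPQ h)
  have htP : ∀ x, ∑ y, t x y = P x := fun x => by
    simp only [t, hP]
    rw [hPc _ (hM x), ← Matrix.trace_sum, ← Finset.sum_mul, ← Finset.mul_sum, hNsum, Matrix.mul_one]
  have htQ : ∀ y, ∑ x, t x y = Q y := fun y => by
    simp only [t, hQ]
    rw [hPc _ (hN y), ← Matrix.trace_sum, ← Finset.sum_mul, ← Finset.sum_mul, hMsum, Matrix.one_mul]
  rcases lt_or_gt_of_ne hα1 with h | h
  · have hβ1 : 1 < β := by
      have hα0 : 0 < α := by linarith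
      have : 1 < 1 / α := by rw [lt_div_iff₀ hα0]; linarith
      have h2 : 1 / β < 1 := by linarith
      rw [div_lt_one (by linarith)] at h2
      exact h2
    have := core Q P (fun y x => t x y) c hQ0 hP0 sum2 (sum1 M hMsum) htQ
      (fun y x => by rw [mul_comm (Q y)]; exact hinf x y)
      (fun q p => by
        rw [Finset.sum_comm, mul_comm (∑ y, ‖q y‖ ^ 2 * Q y)]
        simp only [mul_comm (q _)]
        exact hl2 p q) β α hβ1 hα (by linarith)
    rw [add_comm]
    exact this
  · exact core P Q t c hP0 hQ0 (sum1 M hMsum) sum2 htP hinf hl2 α β h hβ hab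
end
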